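/- Let τ₀ < τ be real numbers, let α, β : [τ₀, τ] → ℝ be Lipschitz continuous, let σ : [τ₀, τ] × ℝ → ℝ be bounded and Lipschitz continuous with σ(t,x)² ≥ λ₀ for all (t,x) and some constant λ₀ > 0, and let φ : ℝ → ℝ be continuous with |φ(x)| ≤ C̄·exp(c̄|x|) for some constants C̄, c̄ > 0. Then there exists a function f : [τ₀, τ] × ℝ → ℝ which is continuous on [τ₀, τ] × ℝ, of class C^{1,2} on [τ₀, τ) × ℝ, satisfies ∂ₜf(t,x) + (α(t) + β(t)x)·∂ₓf(t,x) + (1/2)·σ(t,x)²·∂²ₓₓf(t,x) − x·f(t,x) = 0 for all (t,x) ∈ [τ₀, τ) × ℝ, satisfies f(τ, x) = φ(x) for all x ∈ ℝ, and satisfies |f(t,x)| ≤ K̄·exp(k|x|) for all (t,x) ∈ [τ₀, τ] × ℝ and some constants K̄, k > 0. -/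

import Mathlib

/-- `f` is of class `C^{1,2}` on `I × ℝ`: it is jointly continuous there, once
continuously differentiable in the time variable and twice continuously
differentiable in the space variable. -/
def C12On (f : ℝ → ℝ → ℝ) (I : Set ℝ) : Prop :=
  ContinuousOn (fun p : ℝ × ℝ => f p.1 p.2) (I ×ˢ (Set.univ : Set ℝ)) ∧
  (∀ x : ℝ, ∀ t ∈ I, DifferentiableAt ℝ (fun s => f s x) t) ∧
  (∀ t ∈ I, ContDiff ℝ 2 (fun x => f t x)) ∧
  ContinuousOn (fun p : ℝ × ℝ => deriv (fun s => f s p.2) p.1) (I ×ˢ (Set.univ : Set ℝ)) ∧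
  ContinuousOn (fun p : ℝ × ℝ => deriv (fun x => f p.1 x) p.2) (I ×ˢ (Set.univ : Set ℝ)) ∧
  ContinuousOn (fun p : ℝ × ℝ => deriv (deriv (fun x => f p.1 x)) p.2) (I ×ˢ (Set.univ : Set ℝ))

/-!
The substitution `f t x = exp (p t * x) * u (τ - t) (e t * x + d t)`, with suitable `e`, `d`, `p`,
removes the affine drift and the potential `x`, and conjugation by `cosh (k * x)` removes the
exponential growth of the datum. What remains is the Cauchy problem for
`∂ₜ u = (1/2) a ∂²ₓ u + b ∂ₓ u + c u` with a bounded datum and bounded coefficients that are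
Lipschitz in `x` but merely continuous in `t`.

It is solved by Levi's parametrix method. Freezing `a` at the source point `y`, but not in time,
gives a Gaussian kernel of variance `∫ r in s..t, a r y`. The solution is the sum of the parametrix
evolution of the datum and of a volume potential whose density satisfies a Volterra equation with
an integrable singularity, which is a contraction in a sup norm with an exponential weight in time.
The Volterra kernel is smoothing, so the density is `1/2`-Hölder in space; as the second space
derivative of a Gaussian has integral zero, this modulus makes the singularity of the second
derivative of the volume potential integrable.
-/

section
open MeasureTheory Set Filter Topology
open Real (exp cosh sinh tanh)
open scoped Real NNReal BoundedContinuousFunction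

/-! ### Gaussian derivatives -/

/-- The `j`-th spatial derivative of the centred Gaussian density of variance `v`, encoded through
the Hermite recursion so that estimates can be proved by two-step induction on `j`. -/
noncomputable def gaussDeriv : ℕ → ℝ → ℝ → ℝ
  | 0, v, x => (√(2 * π * v))⁻¹ * exp (-x ^ 2 / (2 * v))
  | 1, v, x => -(x / v) * gaussDeriv 0 v x
  | j + 2, v, x => -(x / v) * gaussDeriv (j + 1) v x - (j + 1) / v * gaussDeriv j v x

lemma gaussDeriv_zero (v x : ℝ) :
    gaussDeriv 0 v x = (√(2 * π * v))⁻¹ * exp (-x ^ 2 / (2 * v)) := by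
  rw [gaussDeriv]

lemma gaussDeriv_one (v x : ℝ) : gaussDeriv 1 v x = -(x / v) * gaussDeriv 0 v x := by
  simp only [gaussDeriv]

lemma gaussDeriv_add_two (j : ℕ) (v x : ℝ) :
    gaussDeriv (j + 2) v x =
      -(x / v) * gaussDeriv (j + 1) v x - (j + 1) / v * gaussDeriv j v x := by
  rw [gaussDeriv]

lemma hasDerivAt_gaussDeriv (j : ℕ) (v x : ℝ) :
    HasDerivAt (gaussDeriv j v) (gaussDeriv (j + 1) v x) x := by
  have hlin : HasDerivAt (fun x => -(x / v)) (-(1 / v)) x := ((hasDerivAt_id x).div_const v).neg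
  have hzero : HasDerivAt (gaussDeriv 0 v) (gaussDeriv 1 v x) x := by
    have h := (((hasDerivAt_pow 2 x).neg.div_const (2 * v)).exp).const_mul (√(2 * π * v))⁻¹
    refine (h.congr_of_eventuallyEq (.of_forall (gaussDeriv_zero v))).congr_deriv ?_
    simp only [gaussDeriv_one, gaussDeriv_zero, Pi.neg_apply]
    push_cast
    field_simp
  induction j using Nat.twoStepInduction with
  | zero => exact hzero
  | one =>
    refine ((hlin.mul hzero).congr_of_eventuallyEq
      (.of_forall (gaussDeriv_one v))).congr_deriv ?_
    rw [gaussDeriv_add_two]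
    push_cast
    ring
  | more j ih₀ ih₁ =>
    refine (((hlin.mul ih₁).sub (ih₀.const_mul ((j + 1 : ℝ) / v))).congr_of_eventuallyEq
      (.of_forall (gaussDeriv_add_two j v))).congr_deriv ?_
    rw [gaussDeriv_add_two (j + 1)]
    push_cast
    ring

lemma hasDerivAt_gaussDeriv_zero_variance {v : ℝ} (hv : 0 < v) (x : ℝ) :
    HasDerivAt (fun v => gaussDeriv 0 v x) (1 / 2 * gaussDeriv 2 v x) v := by
  have hv2 : √(2 * π * v) ≠ 0 := by positivity
  have hnorm := (((hasDerivAt_id v).const_mul (2 * π)).sqrt (by simp [hv.ne'])).inv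
    (by simpa using hv2)
  have hexp := ((((hasDerivAt_id v).const_mul 2).inv
    (by simpa using hv.ne')).const_mul (-x ^ 2)).exp
  refine ((hnorm.mul hexp).congr_of_eventuallyEq
    (.of_forall fun v => gaussDeriv_zero v x)).congr_deriv ?_
  rw [gaussDeriv_add_two, gaussDeriv_one, gaussDeriv_zero]
  simp only [id, mul_one, Nat.cast_zero, div_eq_mul_inv, Pi.inv_apply]
  have hsq : √(2 * π * v) ^ 2 = 2 * π * v := Real.sq_sqrt (by positivity)
  generalize √(2 * π * v) = r at *
  obtain rfl : v = r ^ 2 / (2 * π) := by field_simp; linarith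
  simp only [mul_inv_rev, inv_div, zero_add, one_mul]
  field_simp
  ring

/-- The heat equation for the Gaussian density, differentiated `j` times in space. -/
lemma hasDerivAt_gaussDeriv_variance (j : ℕ) {v : ℝ} (hv : 0 < v) (x : ℝ) :
    HasDerivAt (fun v => gaussDeriv j v x) (1 / 2 * gaussDeriv (j + 2) v x) v := by
  have hinv (c : ℝ) : HasDerivAt (fun v => c / v) (-c / v ^ 2) v := by
    simpa [div_eq_mul_inv] using (hasDerivAt_inv hv.ne').const_mul c
  have hzero := hasDerivAt_gaussDeriv_zero_variance hv x
  induction j using Nat.twoStepInduction with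
  | zero => exact hzero
  | one =>
    refine (((hinv x).neg.mul hzero).congr_of_eventuallyEq
      (.of_forall fun v => gaussDeriv_one v x)).congr_deriv ?_
    rw [gaussDeriv_add_two 1]
    simp only [Pi.neg_apply, gaussDeriv_one]
    push_cast
    field_simp
    ring
  | more j ih₀ ih₁ =>
    refine ((((hinv x).neg.mul ih₁).sub ((hinv (j + 1)).mul ih₀)).congr_of_eventuallyEq
      (.of_forall fun v => gaussDeriv_add_two j v x)).congr_deriv ?_
    rw [gaussDeriv_add_two (j + 2), gaussDeriv_add_two (j + 1), gaussDeriv_add_two j]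
    simp only [Pi.neg_apply]
    push_cast
    field_simp
    ring

lemma continuousAt_gaussDeriv (j : ℕ) {p : ℝ × ℝ} (hv : 0 < p.1) :
    ContinuousAt (fun p : ℝ × ℝ => gaussDeriv j p.1 p.2) p := by
  have hp : p.1 ≠ 0 := hv.ne'
  have hzero : ContinuousAt (fun p : ℝ × ℝ => gaussDeriv 0 p.1 p.2) p := by
    have hsqrt : √(2 * π * p.1) ≠ 0 := by positivity
    have htwo : 2 * p.1 ≠ 0 := by positivity
    simp only [gaussDeriv_zero]
    fun_prop (disch := assumption)
  induction j using Nat.twoStepInduction with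
  | zero => exact hzero
  | one =>
    simp only [gaussDeriv_one]
    fun_prop (disch := assumption)
  | more j ih₀ ih₁ =>
    simp only [gaussDeriv_add_two]
    fun_prop (disch := assumption)

/-- A Gaussian of standard deviation `√(2Λ) δ`, up to normalisation. It dominates
`δ ^ j * gaussDeriv j v` as long as the variance `v` is comparable to `δ ^ 2`. -/
noncomputable def gaussEnvelope (Λ δ x : ℝ) : ℝ := δ⁻¹ * exp (-x ^ 2 / (4 * Λ * δ ^ 2))

section Envelope
variable {Λ δ : ℝ}

lemma gaussEnvelope_nonneg (hδ : 0 < δ) (x : ℝ) : 0 ≤ gaussEnvelope Λ δ x := by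
  unfold gaussEnvelope; positivity

lemma gaussEnvelope_eq (Λ δ x : ℝ) :
    gaussEnvelope Λ δ x = δ⁻¹ * exp (-(1 / (4 * Λ * δ ^ 2)) * x ^ 2) := by
  unfold gaussEnvelope; congr 2; ring

lemma integrable_gaussEnvelope_sub (hΛ : 0 < Λ) (hδ : 0 < δ) (x : ℝ) :
    Integrable (fun y => gaussEnvelope Λ δ (x - y)) := by
  have h : Integrable (gaussEnvelope Λ δ) := by
    rw [funext (gaussEnvelope_eq Λ δ)]
    exact (integrable_exp_neg_mul_sq (by positivity)).const_mul _
  exact h.comp_sub_left x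

lemma integral_gaussEnvelope_sub (hΛ : 0 < Λ) (hδ : 0 < δ) (x : ℝ) :
    ∫ y, gaussEnvelope Λ δ (x - y) = √(4 * π * Λ) := by
  rw [integral_sub_left_eq_self (gaussEnvelope Λ δ) volume x]
  simp only [gaussEnvelope_eq]
  rw [integral_const_mul, integral_gaussian]
  have hvar : π / (1 / (4 * Λ * δ ^ 2)) = 4 * π * Λ * δ ^ 2 := by field_simp
  rw [hvar, Real.sqrt_mul (by positivity), Real.sqrt_sq hδ.le]
  field_simp

lemma norm_integral_le_of_norm_le_gaussEnvelope {F : ℝ → ℝ} {C x : ℝ} (hΛ : 0 < Λ) (hδ : 0 < δ)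
    (hF : ∀ y, ‖F y‖ ≤ C * gaussEnvelope Λ δ (x - y)) : |∫ y, F y| ≤ C * √(4 * π * Λ) := by
  rw [← integral_gaussEnvelope_sub hΛ hδ x, ← integral_const_mul]
  exact norm_integral_le_of_norm_le ((integrable_gaussEnvelope_sub hΛ hδ x).const_mul C)
    (.of_forall hF)

lemma abs_pow_le_mul_exp (hΛ : 0 < Λ) (hδ : 0 < δ) (n : ℕ) (x : ℝ) :
    |x| ^ n ≤ δ ^ n * (n.factorial * exp Λ * exp (x ^ 2 / (4 * Λ * δ ^ 2))) := by
  have hamgm (q : ℝ) : q ≤ Λ + q ^ 2 / (4 * Λ) := by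
    have : Λ + q ^ 2 / (4 * Λ) - q = (2 * Λ - q) ^ 2 / (4 * Λ) := by field_simp; ring
    rw [← sub_nonneg, this]
    positivity
  have hratio : (|x| / δ) ^ 2 / (4 * Λ) = x ^ 2 / (4 * Λ * δ ^ 2) := by
    rw [div_pow, sq_abs]; field_simp
  have hpow : (|x| / δ) ^ n ≤ n.factorial * (exp Λ * exp (x ^ 2 / (4 * Λ * δ ^ 2))) := by
    have h := Real.pow_div_factorial_le_exp (|x| / δ) (by positivity) n
    rw [div_le_iff₀' (by positivity)] at h
    refine h.trans ?_
    rw [← Real.exp_add, ← hratio]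
    gcongr
    exact hamgm _
  rw [div_pow, div_le_iff₀' (by positivity)] at hpow
  linarith

lemma abs_gaussDeriv_zero_le {lam v : ℝ} (hlam : 0 < lam) (hδ : 0 < δ)
    (hlb : lam * δ ^ 2 ≤ v) (hub : v ≤ Λ * δ ^ 2) (x : ℝ) :
    |gaussDeriv 0 v x| ≤
      (√(2 * π * lam))⁻¹ * δ⁻¹ * exp (-x ^ 2 / (2 * (Λ * δ ^ 2))) := by
  have hv : 0 < v := lt_of_lt_of_le (by positivity) hlb
  have hsqrt : √(2 * π * lam) * δ ≤ √(2 * π * v) := by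
    rw [← Real.sqrt_sq hδ.le, ← Real.sqrt_mul (by positivity), mul_assoc (2 * π)]
    gcongr
  rw [gaussDeriv_zero, abs_of_nonneg (by positivity), ← mul_inv, neg_div, neg_div]
  gcongr

/-- The statement that `δ ^ j * (|x| / δ) ^ n * gaussDeriv j v x` is dominated by an envelope
whose constant depends on `lam, Λ, j, n` only, stated without division by `δ ^ n`. -/
def GaussDerivDominated (lam Λ : ℝ) (n j : ℕ) : Prop :=
  ∃ C : ℝ, 0 ≤ C ∧ ∀ δ v x : ℝ, 0 < δ → lam * δ ^ 2 ≤ v → v ≤ Λ * δ ^ 2 →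
    |x| ^ n * |gaussDeriv j v x| ≤ C * (δ ^ n / δ ^ j * gaussEnvelope Λ δ x)

variable {lam : ℝ}

lemma gaussDerivDominated_zero (hlam : 0 < lam) (hΛ : 0 < Λ) (n : ℕ) :
    GaussDerivDominated lam Λ n 0 := by
  refine ⟨n.factorial * exp Λ * (√(2 * π * lam))⁻¹, by positivity, fun δ v x hδ hlb hub => ?_⟩
  have hexp : exp (x ^ 2 / (4 * Λ * δ ^ 2)) * exp (-x ^ 2 / (2 * (Λ * δ ^ 2))) =
      exp (-x ^ 2 / (4 * Λ * δ ^ 2)) := by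
    rw [← Real.exp_add]; congr 1; field_simp; ring
  calc |x| ^ n * |gaussDeriv 0 v x|
      ≤ δ ^ n * (n.factorial * exp Λ * exp (x ^ 2 / (4 * Λ * δ ^ 2))) *
          ((√(2 * π * lam))⁻¹ * δ⁻¹ * exp (-x ^ 2 / (2 * (Λ * δ ^ 2)))) :=
        mul_le_mul (abs_pow_le_mul_exp hΛ hδ n x) (abs_gaussDeriv_zero_le hlam hδ hlb hub x)
          (abs_nonneg _) (by positivity)
    _ = _ := by unfold gaussEnvelope; rw [← hexp]; ring

lemma gaussDerivDominated (hlam : 0 < lam) (hΛ : 0 < Λ) (n j : ℕ) :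
    GaussDerivDominated lam Λ n j := by
  induction j using Nat.twoStepInduction generalizing n with
  | zero => exact gaussDerivDominated_zero hlam hΛ n
  | one =>
    obtain ⟨C, hC, hbd⟩ := gaussDerivDominated_zero hlam hΛ (n + 1)
    refine ⟨C / lam, by positivity, fun δ v x hδ hlb hub => ?_⟩
    have hv : 0 < v := lt_of_lt_of_le (by positivity) hlb
    have henv := gaussEnvelope_nonneg (Λ := Λ) hδ x
    calc |x| ^ n * |gaussDeriv 1 v x| = |x| ^ (n + 1) * |gaussDeriv 0 v x| / v := by
          rw [gaussDeriv_one, abs_mul, abs_neg, abs_div, abs_of_pos hv, pow_succ]; ring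
      _ ≤ C * (δ ^ (n + 1) / δ ^ 0 * gaussEnvelope Λ δ x) / (lam * δ ^ 2) := by
          gcongr ?_ / ?_
          exact hbd δ v x hδ hlb hub
      _ = _ := by field_simp; ring
  | more j ih₀ ih₁ =>
    obtain ⟨C₁, hC₁, hbd₁⟩ := ih₁ (n + 1)
    obtain ⟨C₀, hC₀, hbd₀⟩ := ih₀ n
    refine ⟨C₁ / lam + (j + 1) * C₀ / lam, by positivity, fun δ v x hδ hlb hub => ?_⟩
    have hv : 0 < v := lt_of_lt_of_le (by positivity) hlb
    have henv := gaussEnvelope_nonneg (Λ := Λ) hδ x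
    have hrec : |gaussDeriv (j + 2) v x| ≤
        |x| / v * |gaussDeriv (j + 1) v x| + (j + 1) / v * |gaussDeriv j v x| := by
      rw [gaussDeriv_add_two]
      refine (abs_sub _ _).trans_eq ?_
      rw [abs_mul, abs_mul, abs_neg, abs_div, abs_of_pos hv,
        abs_of_nonneg (by positivity : (0 : ℝ) ≤ (j + 1 : ℝ) / v)]
    calc |x| ^ n * |gaussDeriv (j + 2) v x|
        ≤ |x| ^ n * (|x| / v * |gaussDeriv (j + 1) v x| + (j + 1) / v * |gaussDeriv j v x|) := by
          gcongr
      _ = |x| ^ (n + 1) * |gaussDeriv (j + 1) v x| / v +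
          (j + 1) * (|x| ^ n * |gaussDeriv j v x|) / v := by rw [pow_succ]; ring
      _ ≤ C₁ * (δ ^ (n + 1) / δ ^ (j + 1) * gaussEnvelope Λ δ x) / (lam * δ ^ 2) +
          (j + 1) * (C₀ * (δ ^ n / δ ^ j * gaussEnvelope Λ δ x)) / (lam * δ ^ 2) := by
          gcongr ?_ / ?_ + _ * ?_ / ?_
          · exact hbd₁ δ v x hδ hlb hub
          · exact hbd₀ δ v x hδ hlb hub
      _ = _ := by field_simp; ring

/-- The factor `|x|` makes up for the loss of two derivatives when `v'` is the variance frozen at a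
point whose distance from that of `v` is comparable to `|x|`. -/
lemma exists_abs_mul_abs_gaussDeriv_sub_le (hlam : 0 < lam) (hΛ : 0 < Λ) (j : ℕ) :
    ∃ C : ℝ, 0 ≤ C ∧ ∀ δ v v' x : ℝ, 0 < δ → v ∈ Icc (lam * δ ^ 2) (Λ * δ ^ 2) →
      v' ∈ Icc (lam * δ ^ 2) (Λ * δ ^ 2) →
      |x| * |gaussDeriv j v x - gaussDeriv j v' x| ≤
        C * (δ / δ ^ (j + 2) * gaussEnvelope Λ δ x) * |v - v'| := by
  obtain ⟨C, hC, hbd⟩ := gaussDerivDominated hlam hΛ 1 (j + 2)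
  refine ⟨C, hC, fun δ v v' x hδ hv hv' => ?_⟩
  have hderiv : ∀ w ∈ Icc (lam * δ ^ 2) (Λ * δ ^ 2), HasDerivWithinAt
      (fun w => |x| * gaussDeriv j w x) (|x| * (1 / 2 * gaussDeriv (j + 2) w x))
      (Icc (lam * δ ^ 2) (Λ * δ ^ 2)) w := fun w hw =>
    ((hasDerivAt_gaussDeriv_variance j (lt_of_lt_of_le (by positivity) hw.1) x).const_mul
      _).hasDerivWithinAt
  have hderiv_le : ∀ w ∈ Icc (lam * δ ^ 2) (Λ * δ ^ 2),
      ‖|x| * (1 / 2 * gaussDeriv (j + 2) w x)‖ ≤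
        C * (δ / δ ^ (j + 2) * gaussEnvelope Λ δ x) := by
    intro w hw
    have h := hbd δ w x hδ hw.1 hw.2
    rw [pow_one, pow_one] at h
    have hnonneg : 0 ≤ |x| * |gaussDeriv (j + 2) w x| := by positivity
    rw [norm_mul, norm_mul, Real.norm_eq_abs, abs_abs, Real.norm_eq_abs, Real.norm_eq_abs,
      abs_of_pos (by norm_num : (0 : ℝ) < 1 / 2)]
    linarith
  have h := (convex_Icc _ _).norm_image_sub_le_of_norm_hasDerivWithin_le hderiv hderiv_le hv' hv
  rwa [← mul_sub, norm_mul, norm_abs_eq_norm] at h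

end Envelope

lemma integrable_gaussDeriv (j : ℕ) {v : ℝ} (hv : 0 < v) : Integrable (gaussDeriv j v) := by
  obtain ⟨C, -, hbd⟩ := gaussDerivDominated hv hv 0 j
  have hcont : Continuous (gaussDeriv j v) :=
    continuous_iff_continuousAt.mpr fun x => (hasDerivAt_gaussDeriv j v x).continuousAt
  refine ((integrable_gaussEnvelope_sub hv one_pos 0).comp_neg.const_mul C).mono'
    hcont.aestronglyMeasurable (.of_forall fun x => ?_)
  simpa using hbd 1 v x one_pos (by simp) (by simp)

lemma integral_gaussDeriv_succ_sub (j : ℕ) {v : ℝ} (hv : 0 < v) (x : ℝ) :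
    ∫ y, gaussDeriv (j + 1) v (x - y) = 0 := by
  rw [integral_sub_left_eq_self (gaussDeriv (j + 1) v) volume x]
  exact integral_eq_zero_of_hasDerivAt_of_integrable (hasDerivAt_gaussDeriv j v)
    (integrable_gaussDeriv (j + 1) hv) (integrable_gaussDeriv j hv)

lemma integral_gaussDeriv_zero {v : ℝ} (hv : 0 < v) : ∫ z, gaussDeriv 0 v z = 1 := by
  have h : gaussDeriv 0 v = fun z => (√(2 * π * v))⁻¹ * exp (-(1 / (2 * v)) * z ^ 2) := by
    funext z
    rw [gaussDeriv_zero, neg_div, neg_mul, one_div_mul_eq_div]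
  rw [h, integral_const_mul, integral_gaussian, div_div_eq_mul_div, div_one,
    mul_comm π, mul_right_comm, inv_mul_cancel₀ (by positivity)]

lemma mul_gaussDeriv_zero_scale {δ w : ℝ} (hδ : 0 < δ) (hw : 0 < w) (z : ℝ) :
    δ * gaussDeriv 0 (δ ^ 2 * w) (δ * z) = gaussDeriv 0 w z := by
  have hnorm : √(2 * π * (δ ^ 2 * w)) = δ * √(2 * π * w) := by
    rw [mul_left_comm, Real.sqrt_mul (by positivity), Real.sqrt_sq hδ.le]
  rw [gaussDeriv_zero, gaussDeriv_zero, hnorm]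
  have hexp : -(δ * z) ^ 2 / (2 * (δ ^ 2 * w)) = -z ^ 2 / (2 * w) := by field_simp
  rw [hexp]
  field_simp

/-! ### The parametrix kernel -/

/-- A diffusion coefficient `a` (the square of a volatility) that is continuous, elliptic and
bounded, and Lipschitz in space uniformly in time. -/
structure DiffusionCoeff where
  a : ℝ → ℝ → ℝ
  lam : ℝ
  Lam : ℝ
  L : ℝ
  lam_pos : 0 < lam
  continuous_a : Continuous (fun p : ℝ × ℝ => a p.1 p.2)
  lam_le_a : ∀ t x, lam ≤ a t x
  a_le_Lam : ∀ t x, a t x ≤ Lam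
  a_lip : ∀ t x y, |a t x - a t y| ≤ L * |x - y|

namespace DiffusionCoeff
variable (S : DiffusionCoeff)

lemma Lam_pos : 0 < S.Lam := S.lam_pos.trans_le ((S.lam_le_a 0 0).trans (S.a_le_Lam 0 0))

lemma L_nonneg : 0 ≤ S.L := by simpa using (abs_nonneg _).trans (S.a_lip 0 1 0)

lemma abs_a_le (t x : ℝ) : |S.a t x| ≤ S.Lam :=
  abs_le.mpr ⟨by linarith [S.lam_le_a t x, S.lam_pos, S.Lam_pos], S.a_le_Lam t x⟩

lemma continuous_a_time (y : ℝ) : Continuous (fun t => S.a t y) :=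
  S.continuous_a.comp (.prodMk continuous_id continuous_const)

lemma continuous_a_space (t : ℝ) : Continuous (S.a t) :=
  S.continuous_a.comp (.prodMk continuous_const continuous_id)

lemma intervalIntegrable_a (y s t : ℝ) : IntervalIntegrable (S.a · y) volume s t :=
  (S.continuous_a_time y).intervalIntegrable s t

/-- The variance accumulated between `s` and `t` when the space variable is frozen at `y`. -/
noncomputable def variance (t s y : ℝ) : ℝ := ∫ r in s..t, S.a r y

lemma variance_mem_Icc {t s : ℝ} (h : s ≤ t) (y : ℝ) :
    S.variance t s y ∈ Icc (S.lam * (t - s)) (S.Lam * (t - s)) := by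
  have hlb := intervalIntegral.integral_mono_on (μ := volume) h
    (intervalIntegrable_const (c := S.lam)) (S.intervalIntegrable_a y s t)
    (fun r _ => S.lam_le_a r y)
  have hub := intervalIntegral.integral_mono_on (μ := volume) h (S.intervalIntegrable_a y s t)
    (intervalIntegrable_const (c := S.Lam)) (fun r _ => S.a_le_Lam r y)
  rw [intervalIntegral.integral_const, smul_eq_mul, mul_comm] at hlb hub
  exact ⟨hlb, hub⟩

lemma variance_pos {t s : ℝ} (h : s < t) (y : ℝ) : 0 < S.variance t s y :=
  (mul_pos S.lam_pos (sub_pos.mpr h)).trans_le (S.variance_mem_Icc h.le y).1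

lemma abs_variance_sub_le {t s : ℝ} (h : s ≤ t) (y y' : ℝ) :
    |S.variance t s y - S.variance t s y'| ≤ S.L * |y - y'| * (t - s) := by
  unfold variance
  rw [← intervalIntegral.integral_sub (S.intervalIntegrable_a y s t)
    (S.intervalIntegrable_a y' s t)]
  have hint := intervalIntegral.norm_integral_le_of_norm_le_const (a := s) (b := t)
    (f := fun r => S.a r y - S.a r y') (fun r _ => S.a_lip r y y')
  rwa [abs_of_nonneg (sub_nonneg.mpr h)] at hint

lemma hasDerivAt_variance (t s y : ℝ) : HasDerivAt (S.variance · s y) (S.a t y) t :=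
  intervalIntegral.integral_hasDerivAt_right (S.intervalIntegrable_a y s t)
    ((S.continuous_a_time y).stronglyMeasurableAtFilter _ _)
    (S.continuous_a_time y).continuousAt

lemma continuous_variance : Continuous (fun p : ℝ × ℝ × ℝ => S.variance p.1 p.2.1 p.2.2) := by
  have hsplit : (fun p : ℝ × ℝ × ℝ => S.variance p.1 p.2.1 p.2.2) = fun p =>
      (∫ r in (0 : ℝ)..p.1, S.a r p.2.2) - ∫ r in (0 : ℝ)..p.2.1, S.a r p.2.2 := by
    funext p
    rw [intervalIntegral.integral_interval_sub_left (S.intervalIntegrable_a _ _ _)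
      (S.intervalIntegrable_a _ _ _), variance]
  have hcont : Continuous (Function.uncurry fun (p : ℝ × ℝ × ℝ) (r : ℝ) => S.a r p.2.2) :=
    S.continuous_a.comp (by fun_prop : Continuous fun q : (ℝ × ℝ × ℝ) × ℝ => (q.2, q.1.2.2))
  rw [hsplit]
  exact (intervalIntegral.continuous_parametric_intervalIntegral_of_continuous hcont
    continuous_fst).sub (intervalIntegral.continuous_parametric_intervalIntegral_of_continuous
      hcont (continuous_fst.comp continuous_snd))

/-- The parametrix kernel and its space derivatives: the Gaussian whose variance is frozen at the
source point `y`. -/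
noncomputable def kernel (j : ℕ) (t s x y : ℝ) : ℝ := gaussDeriv j (S.variance t s y) (x - y)

/-- The `j`-th space derivative of the parametrix evolution of `ψ` from time `s` to time `t`. -/
noncomputable def evolve (j : ℕ) (t s : ℝ) (ψ : ℝ → ℝ) (x : ℝ) : ℝ :=
  ∫ y, S.kernel j t s x y * ψ y

lemma exists_pow_mul_abs_kernel_le (n j : ℕ) : ∃ C : ℝ, 0 ≤ C ∧ ∀ t s x y : ℝ, s < t →
    |x - y| ^ n * |S.kernel j t s x y| ≤
      C * (√(t - s) ^ n / √(t - s) ^ j * gaussEnvelope S.Lam (√(t - s)) (x - y)) := by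
  obtain ⟨C, hC, hbd⟩ := gaussDerivDominated S.lam_pos S.Lam_pos n j
  refine ⟨C, hC, fun t s x y hst => ?_⟩
  have hpos : 0 < t - s := sub_pos.mpr hst
  have hmem := S.variance_mem_Icc hst.le y
  refine hbd _ _ _ (Real.sqrt_pos.mpr hpos) ?_ ?_ <;> rw [Real.sq_sqrt hpos.le]
  exacts [hmem.1, hmem.2]

lemma continuousAt_kernel (j : ℕ) {t s : ℝ} (h : s < t) (x y : ℝ) :
    ContinuousAt (fun p : ℝ × ℝ × ℝ × ℝ => S.kernel j p.1 p.2.1 p.2.2.1 p.2.2.2) (t, s, x, y) := by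
  have hargs : Continuous (fun p : ℝ × ℝ × ℝ × ℝ =>
      (S.variance p.1 p.2.1 p.2.2.2, p.2.2.1 - p.2.2.2)) :=
    (S.continuous_variance.comp (by fun_prop :
      Continuous fun p : ℝ × ℝ × ℝ × ℝ => (p.1, p.2.1, p.2.2.2))).prodMk (by fun_prop)
  exact ContinuousAt.comp (g := fun p : ℝ × ℝ => gaussDeriv j p.1 p.2)
    (continuousAt_gaussDeriv j (S.variance_pos h y)) hargs.continuousAt

lemma continuous_kernel (j : ℕ) {t s : ℝ} (h : s < t) (x : ℝ) : Continuous (S.kernel j t s x) :=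
  continuous_iff_continuousAt.mpr fun y =>
    ContinuousAt.comp (f := fun y : ℝ => (t, s, x, y)) (S.continuousAt_kernel j h x y)
      (by fun_prop)

lemma gaussEnvelope_le_of_near {Λ δ δ₀ x x₀ : ℝ} (hΛ : 0 < Λ) (hδ₀ : 0 < δ₀) (hl : δ₀ / 2 ≤ δ)
    (hu : δ ≤ 2 * δ₀) (hx : |x - x₀| ≤ 1) (y : ℝ) :
    gaussEnvelope Λ δ (x - y) ≤ (δ₀ / 2)⁻¹ * (exp (1 / (16 * Λ * δ₀ ^ 2)) *
      exp (-(1 / (32 * Λ * δ₀ ^ 2)) * (x₀ - y) ^ 2)) := by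
  have hδ : 0 < δ := lt_of_lt_of_le (by positivity) hl
  have hsq : (x₀ - y) ^ 2 ≤ 2 * (x - y) ^ 2 + 2 := by
    have : (x - x₀) ^ 2 ≤ 1 := by rw [← sq_abs]; nlinarith [abs_nonneg (x - x₀)]
    nlinarith [sq_nonneg ((x - y) + (x - x₀))]
  have hexponent : -(x - y) ^ 2 / (4 * Λ * δ ^ 2) ≤
      1 / (16 * Λ * δ₀ ^ 2) + -(1 / (32 * Λ * δ₀ ^ 2)) * (x₀ - y) ^ 2 :=
    calc -(x - y) ^ 2 / (4 * Λ * δ ^ 2) ≤ -(x - y) ^ 2 / (4 * Λ * (2 * δ₀) ^ 2) := by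
          rw [neg_div, neg_div]; gcongr
      _ = (2 - (2 * (x - y) ^ 2 + 2)) / (32 * Λ * δ₀ ^ 2) := by field_simp; ring
      _ ≤ (2 - (x₀ - y) ^ 2) / (32 * Λ * δ₀ ^ 2) := by gcongr
      _ = _ := by field_simp; ring
  unfold gaussEnvelope
  rw [← Real.exp_add]
  gcongr

lemma exists_integrable_abs_kernel_le_nhds (j : ℕ) {t₀ s₀ : ℝ} (h : s₀ < t₀) (x₀ : ℝ) :
    ∃ B : ℝ → ℝ, Integrable B ∧ (∀ y, 0 ≤ B y) ∧ ∀ᶠ p : ℝ × ℝ × ℝ in 𝓝 (t₀, s₀, x₀),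
      p.2.1 < p.1 ∧ ∀ y, |S.kernel j p.1 p.2.1 p.2.2 y| ≤ B y := by
  obtain ⟨C, hC, hbd⟩ := S.exists_pow_mul_abs_kernel_le 0 j
  have hd : 0 < t₀ - s₀ := sub_pos.mpr h
  have hΛ := S.Lam_pos
  have hδ₀ : 0 < √(t₀ - s₀) := Real.sqrt_pos.mpr hd
  have hδ₀_sq : √(t₀ - s₀) ^ 2 = t₀ - s₀ := Real.sq_sqrt hd.le
  set δ₀ := √(t₀ - s₀)
  refine ⟨fun y => C * (1 / (δ₀ / 2) ^ j * ((δ₀ / 2)⁻¹ * (exp (1 / (16 * S.Lam * δ₀ ^ 2)) *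
      exp (-(1 / (32 * S.Lam * δ₀ ^ 2)) * (x₀ - y) ^ 2)))), ?_, fun y => by positivity, ?_⟩
  · have hgauss := (integrable_exp_neg_mul_sq (b := 1 / (32 * S.Lam * δ₀ ^ 2))
      (by positivity)).comp_sub_left x₀
    exact (((hgauss.const_mul _).const_mul _).const_mul _).const_mul _
  have hlower : ∀ᶠ p : ℝ × ℝ × ℝ in 𝓝 (t₀, s₀, x₀), (t₀ - s₀) / 4 < p.1 - p.2.1 :=
    continuousAt_const.eventually_lt (by fun_prop) (by simp only; linarith)
  have hupper : ∀ᶠ p : ℝ × ℝ × ℝ in 𝓝 (t₀, s₀, x₀), p.1 - p.2.1 < 4 * (t₀ - s₀) :=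
    ContinuousAt.eventually_lt (by fun_prop) continuousAt_const (by simp only; linarith)
  have hnear : ∀ᶠ p : ℝ × ℝ × ℝ in 𝓝 (t₀, s₀, x₀), |p.2.2 - x₀| < 1 :=
    ContinuousAt.eventually_lt (by fun_prop) continuousAt_const (by simp)
  filter_upwards [hlower, hupper, hnear] with p hp_lower hp_upper hp_near
  have hlt : p.2.1 < p.1 := by linarith
  have hl : δ₀ / 2 ≤ √(p.1 - p.2.1) := Real.le_sqrt_of_sq_le (by linarith)
  have hu : √(p.1 - p.2.1) ≤ 2 * δ₀ := by
    rw [Real.sqrt_le_left (by positivity)]; linarith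
  have henv := gaussEnvelope_nonneg (Λ := S.Lam) (Real.sqrt_pos.mpr (sub_pos.mpr hlt))
  refine ⟨hlt, fun y => ?_⟩
  have hp := hbd p.1 p.2.1 p.2.2 y hlt
  rw [pow_zero, one_mul, pow_zero] at hp
  refine hp.trans ?_
  gcongr
  · exact henv _
  · exact gaussEnvelope_le_of_near hΛ hδ₀ hl hu hp_near.le y

lemma integrable_kernel_mul (j : ℕ) {t s : ℝ} (h : s < t) (x : ℝ) {ψ : ℝ → ℝ}
    (hψ : Continuous ψ) {m : ℝ} (hm : ∀ y, |ψ y| ≤ m) :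
    Integrable (fun y => S.kernel j t s x y * ψ y) := by
  obtain ⟨B, hB, hB_nonneg, hbd⟩ := S.exists_integrable_abs_kernel_le_nhds j h x
  refine (hB.mul_const m).mono' ((S.continuous_kernel j h x).mul hψ).aestronglyMeasurable
    (.of_forall fun y => ?_)
  rw [norm_mul]
  exact mul_le_mul (hbd.self_of_nhds.2 y) (hm y) (norm_nonneg _) (hB_nonneg y)

lemma exists_abs_evolve_le (j : ℕ) : ∃ C : ℝ, 0 ≤ C ∧ ∀ (t s x m₀ m₁ : ℝ) (ψ : ℝ → ℝ), s < t →
    (∀ y, |ψ y| ≤ m₀ + m₁ * |x - y|) → 0 ≤ m₀ → 0 ≤ m₁ →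
    |S.evolve j t s ψ x| ≤ C * ((m₀ + m₁ * √(t - s)) / √(t - s) ^ j) := by
  obtain ⟨C₀, hC₀, hbd₀⟩ := S.exists_pow_mul_abs_kernel_le 0 j
  obtain ⟨C₁, hC₁, hbd₁⟩ := S.exists_pow_mul_abs_kernel_le 1 j
  refine ⟨(C₀ + C₁) * √(4 * π * S.Lam), by positivity, fun t s x m₀ m₁ ψ hst hψ hm₀ hm₁ => ?_⟩
  have hδ : 0 < √(t - s) := Real.sqrt_pos.mpr (sub_pos.mpr hst)
  have hk₀ := fun y => hbd₀ t s x y hst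
  have hk₁ := fun y => hbd₁ t s x y hst
  simp only [pow_zero, one_mul, pow_one] at hk₀ hk₁
  set δ := √(t - s)
  have hpoint (y : ℝ) : ‖S.kernel j t s x y * ψ y‖ ≤
      (C₀ + C₁) * ((m₀ + m₁ * δ) / δ ^ j) * gaussEnvelope S.Lam δ (x - y) := by
    have henv := gaussEnvelope_nonneg (Λ := S.Lam) hδ (x - y)
    rw [norm_mul, Real.norm_eq_abs, Real.norm_eq_abs]
    calc |S.kernel j t s x y| * |ψ y| ≤ |S.kernel j t s x y| * (m₀ + m₁ * |x - y|) := by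
          gcongr; exact hψ y
      _ = m₀ * |S.kernel j t s x y| + m₁ * (|x - y| * |S.kernel j t s x y|) := by ring
      _ ≤ m₀ * (C₀ * (1 / δ ^ j * gaussEnvelope S.Lam δ (x - y))) +
          m₁ * (C₁ * (δ / δ ^ j * gaussEnvelope S.Lam δ (x - y))) := by
          exact add_le_add (mul_le_mul_of_nonneg_left (hk₀ y) hm₀)
            (mul_le_mul_of_nonneg_left (hk₁ y) hm₁)
      _ = (C₀ * m₀ + C₁ * (m₁ * δ)) / δ ^ j * gaussEnvelope S.Lam δ (x - y) := by ring
      _ ≤ ((C₀ + C₁) * m₀ + (C₀ + C₁) * (m₁ * δ)) / δ ^ j * gaussEnvelope S.Lam δ (x - y) := by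
          gcongr <;> linarith
      _ = _ := by ring
  refine (norm_integral_le_of_norm_le_gaussEnvelope S.Lam_pos hδ hpoint).trans_eq ?_
  ring

lemma continuousAt_evolve (j : ℕ) {X : Type*} [TopologicalSpace X] [FirstCountableTopology X]
    {p₀ : X} {t s x : X → ℝ} {Ψ : X → ℝ → ℝ} {m : ℝ}
    (ht : ContinuousAt t p₀) (hs : ContinuousAt s p₀) (hx : ContinuousAt x p₀)
    (hst : s p₀ < t p₀) (hm : ∀ᶠ p in 𝓝 p₀, ∀ y, |Ψ p y| ≤ m)
    (hc : ∀ᶠ p in 𝓝 p₀, Continuous (Ψ p)) (hΨ : ∀ y, ContinuousAt (fun p => Ψ p y) p₀) :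
    ContinuousAt (fun p => S.evolve j (t p) (s p) (Ψ p) (x p)) p₀ := by
  obtain ⟨B, hB, hB_nonneg, hbd⟩ := S.exists_integrable_abs_kernel_le_nhds j hst (x p₀)
  have hbd' := (ht.prodMk (hs.prodMk hx)).eventually hbd
  refine continuousAt_of_dominated (bound := fun y => B y * m) ?_ ?_ (hB.mul_const m) ?_
  · filter_upwards [hbd', hc] with p hp hcp
    exact ((S.continuous_kernel j hp.1 _).mul hcp).aestronglyMeasurable
  · filter_upwards [hbd', hm] with p hp hmp
    refine .of_forall fun y => ?_
    rw [norm_mul]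
    exact mul_le_mul (hp.2 y) (hmp y) (norm_nonneg _) (hB_nonneg y)
  · refine .of_forall fun y => ContinuousAt.mul ?_ (hΨ y)
    exact ContinuousAt.comp (f := fun p => (t p, s p, x p, y))
      (S.continuousAt_kernel j hst (x p₀) y)
      (ht.prodMk (hs.prodMk (hx.prodMk continuousAt_const)))

section Derivatives
variable {t s : ℝ} {ψ : ℝ → ℝ} {m : ℝ}

lemma hasDerivAt_evolve_space (j : ℕ) (hst : s < t) (hc : Continuous ψ) (hm : ∀ y, |ψ y| ≤ m)
    (x : ℝ) : HasDerivAt (S.evolve j t s ψ) (S.evolve (j + 1) t s ψ x) x := by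
  obtain ⟨B, hB, hB_nonneg, hbd⟩ := S.exists_integrable_abs_kernel_le_nhds (j + 1) hst x
  have hbd' := (by fun_prop : ContinuousAt (fun x' : ℝ => (t, s, x')) x).eventually hbd
  refine (hasDerivAt_integral_of_dominated_loc_of_deriv_le (bound := fun y => B y * m)
    (F' := fun x y => S.kernel (j + 1) t s x y * ψ y) hbd' ?_ ?_ ?_ ?_ (hB.mul_const m) ?_).2
  · exact .of_forall fun x' => ((S.continuous_kernel j hst x').mul hc).aestronglyMeasurable
  · exact S.integrable_kernel_mul j hst x hc hm
  · exact ((S.continuous_kernel _ hst x).mul hc).aestronglyMeasurable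
  · refine .of_forall fun y x' hx' => ?_
    rw [norm_mul]
    exact mul_le_mul (hx'.2 y) (hm y) (norm_nonneg _) (hB_nonneg y)
  · exact .of_forall fun y x' _ =>
      ((hasDerivAt_gaussDeriv j _ (x' - y)).comp_sub_const x' y).mul_const (ψ y)

lemma hasDerivAt_evolve_time (hst : s < t) (hc : Continuous ψ) (hm : ∀ y, |ψ y| ≤ m) (x : ℝ) :
    HasDerivAt (fun t => S.evolve 0 t s ψ x)
      (1 / 2 * S.evolve 2 t s (fun y => S.a t y * ψ y) x) t := by
  obtain ⟨B, hB, hB_nonneg, hbd⟩ := S.exists_integrable_abs_kernel_le_nhds 2 hst x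
  have hbd' := (by fun_prop : ContinuousAt (fun t' : ℝ => (t', s, x)) t).eventually hbd
  unfold evolve
  rw [← integral_const_mul]
  refine (hasDerivAt_integral_of_dominated_loc_of_deriv_le
    (bound := fun y => B y * (S.Lam * m))
    (F' := fun t y => 1 / 2 * (S.kernel 2 t s x y * (S.a t y * ψ y)))
    hbd' ?_ ?_ ?_ ?_ (hB.mul_const _) ?_).2
  · filter_upwards [hbd'] with t' ht'
    exact ((S.continuous_kernel 0 ht'.1 x).mul hc).aestronglyMeasurable
  · exact S.integrable_kernel_mul 0 hst x hc hm
  · exact (continuous_const.mul ((S.continuous_kernel _ hst x).mul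
      ((S.continuous_a_space t).mul hc))).aestronglyMeasurable
  · refine .of_forall fun y t' ht' => ?_
    rw [norm_mul, norm_mul, norm_mul, ← one_mul (B y * _)]
    gcongr
    · norm_num
    · exact hB_nonneg y
    · exact ht'.2 y
    · exact S.Lam_pos.le
    · exact S.abs_a_le t' y
    · exact hm y
  · refine .of_forall fun y t' ht' => ?_
    refine (((hasDerivAt_gaussDeriv_variance 0 (S.variance_pos ht'.1 y) (x - y)).comp t'
      (S.hasDerivAt_variance t' s y)).mul_const (ψ y)).congr_deriv ?_
    simp only [kernel]
    ring

lemma evolve_add (j : ℕ) (hst : s < t) {χ : ℝ → ℝ} {m' : ℝ} (hc : Continuous ψ)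
    (hm : ∀ y, |ψ y| ≤ m) (hc' : Continuous χ) (hm' : ∀ y, |χ y| ≤ m') (x : ℝ) :
    S.evolve j t s (fun y => ψ y + χ y) x = S.evolve j t s ψ x + S.evolve j t s χ x := by
  unfold evolve
  rw [← integral_add (S.integrable_kernel_mul j hst x hc hm)
    (S.integrable_kernel_mul j hst x hc' hm')]
  simp only [mul_add]

lemma evolve_const_mul (j : ℕ) (t s r : ℝ) (ψ : ℝ → ℝ) (x : ℝ) :
    S.evolve j t s (fun y => r * ψ y) x = r * S.evolve j t s ψ x := by
  unfold evolve
  simp only [← integral_const_mul, mul_left_comm]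

end Derivatives

/-- The cancellation behind this gain of one power of `√(t - s)`: the Gaussian with variance frozen
at `x` instead of `y` is a derivative in `y`, so its second derivative integrates to zero. -/
lemma exists_abs_evolve_two_one_le : ∃ C : ℝ, 0 ≤ C ∧ ∀ t s x : ℝ, s < t →
    |S.evolve 2 t s (fun _ => 1) x| ≤ C / √(t - s) := by
  obtain ⟨C, hC, hbd⟩ := exists_abs_mul_abs_gaussDeriv_sub_le S.lam_pos S.Lam_pos 2
  have hL := S.L_nonneg
  refine ⟨C * S.L * √(4 * π * S.Lam), by positivity, fun t s x hst => ?_⟩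
  have hpos : 0 < t - s := sub_pos.mpr hst
  have hδ : 0 < √(t - s) := Real.sqrt_pos.mpr hpos
  have hsq : √(t - s) ^ 2 = t - s := Real.sq_sqrt hpos.le
  have hcancel : S.evolve 2 t s (fun _ => 1) x =
      ∫ y, (S.kernel 2 t s x y - gaussDeriv 2 (S.variance t s x) (x - y)) := by
    have hker := S.integrable_kernel_mul 2 hst x (continuous_const (y := (1 : ℝ))) (m := 1)
      (by simp)
    simp only [mul_one] at hker
    rw [integral_sub hker
      ((integrable_gaussDeriv 2 (S.variance_pos hst x)).comp_sub_left x),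
      integral_gaussDeriv_succ_sub 1 (S.variance_pos hst x)]
    simp [evolve]
  have hmem (y : ℝ) := hsq.symm ▸ S.variance_mem_Icc hst.le y
  set δ := √(t - s)
  have hpoint (y : ℝ) : ‖S.kernel 2 t s x y - gaussDeriv 2 (S.variance t s x) (x - y)‖ ≤
      C * S.L / δ * gaussEnvelope S.Lam δ (x - y) := by
    have henv := gaussEnvelope_nonneg (Λ := S.Lam) hδ (x - y)
    rcases eq_or_ne x y with rfl | hxy
    · simp only [kernel, sub_self, norm_zero] at henv ⊢
      positivity
    refine le_of_mul_le_mul_left ?_ (abs_pos.mpr (sub_ne_zero.mpr hxy))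
    calc |x - y| * |S.kernel 2 t s x y - gaussDeriv 2 (S.variance t s x) (x - y)|
        ≤ C * (δ / δ ^ 4 * gaussEnvelope S.Lam δ (x - y)) *
            |S.variance t s y - S.variance t s x| := hbd δ _ _ _ hδ (hmem y) (hmem x)
      _ ≤ C * (δ / δ ^ 4 * gaussEnvelope S.Lam δ (x - y)) * (S.L * |x - y| * (t - s)) := by
          gcongr
          rw [abs_sub_comm x y]
          exact S.abs_variance_sub_le hst.le y x
      _ = _ := by rw [← hsq]; field_simp
  rw [hcancel]
  refine (norm_integral_le_of_norm_le_gaussEnvelope S.Lam_pos hδ hpoint).trans_eq ?_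
  ring

end DiffusionCoeff

/-! ### Weakly singular time integrals -/

/-- The weight `τ ^ (-3/4)`: the order of singularity at `τ = 0` that the second derivative of the
parametrix evolution of a `1/2`-Hölder function has. -/
noncomputable def timeWeight (τ : ℝ) : ℝ := τ ^ (-(3 / 4) : ℝ)

lemma timeWeight_pos {τ : ℝ} (h : 0 < τ) : 0 < timeWeight τ := Real.rpow_pos_of_pos h _

lemma timeWeight_nonneg {τ : ℝ} (h : 0 ≤ τ) : 0 ≤ timeWeight τ := Real.rpow_nonneg h _

lemma timeWeight_mul {t θ : ℝ} (ht : 0 ≤ t) (hθ : 0 ≤ θ) :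
    timeWeight (t * θ) = timeWeight t * timeWeight θ :=
  Real.mul_rpow ht hθ

lemma timeWeight_anti {t s : ℝ} (hs : 0 < s) (hst : s ≤ t) : timeWeight t ≤ timeWeight s :=
  Real.rpow_le_rpow_of_nonpos hs hst (by norm_num)

lemma continuousAt_timeWeight {t : ℝ} (h : 0 < t) : ContinuousAt timeWeight t :=
  Real.continuousAt_rpow_const _ _ (Or.inl h.ne')

lemma sqrt_sqrt_div_sq_eq_timeWeight {τ : ℝ} (h : 0 < τ) : √√τ / √τ ^ 2 = timeWeight τ := by
  rw [Real.sq_sqrt h.le, timeWeight, Real.sqrt_eq_rpow, Real.sqrt_eq_rpow, ← Real.rpow_mul h.le,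
    div_eq_mul_inv, ← Real.rpow_neg_one τ, ← Real.rpow_add h]
  norm_num

lemma mul_timeWeight {τ : ℝ} (h : 0 < τ) : τ * timeWeight τ = √√τ := by
  rw [← sqrt_sqrt_div_sq_eq_timeWeight h, Real.sq_sqrt h.le, mul_div_cancel₀ _ h.ne']

lemma inv_sqrt_eq_mul_timeWeight {τ : ℝ} (h : 0 < τ) : (√τ)⁻¹ = √√τ * timeWeight τ := by
  have hδ : 0 < √τ := Real.sqrt_pos.mpr h
  rw [← sqrt_sqrt_div_sq_eq_timeWeight h, mul_div_assoc', Real.mul_self_sqrt hδ.le]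
  field_simp

lemma inv_sqrt_le_mul_timeWeight {τ T : ℝ} (h : 0 < τ) (hT : τ ≤ T) :
    (√τ)⁻¹ ≤ √√T * timeWeight τ := by
  rw [inv_sqrt_eq_mul_timeWeight h]
  have := timeWeight_nonneg h.le
  gcongr

lemma one_le_mul_timeWeight {τ T : ℝ} (h : 0 < τ) (hT : τ ≤ T) :
    1 ≤ √T * √√T * timeWeight τ := by
  have hδ : 0 < √τ := Real.sqrt_pos.mpr h
  have := timeWeight_nonneg h.le
  calc 1 = √τ * (√τ)⁻¹ := (mul_inv_cancel₀ hδ.ne').symm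
    _ ≤ √T * (√√T * timeWeight τ) := by gcongr; exact inv_sqrt_le_mul_timeWeight h hT
    _ = _ := by ring

lemma div_sq_le_timeWeight_mul_sqrt {τ D : ℝ} (h : 0 < τ) (hD : 0 ≤ D) (hDτ : D ≤ √τ) :
    D / √τ ^ 2 ≤ timeWeight τ * √D := by
  rw [← sqrt_sqrt_div_sq_eq_timeWeight h, div_mul_eq_mul_div]
  gcongr
  calc D = √D * √D := (Real.mul_self_sqrt hD).symm
    _ ≤ √√τ * √D := by gcongr

lemma inv_sqrt_le_timeWeight_mul_sqrt {τ D : ℝ} (h : 0 < τ) (hDτ : √τ ≤ D) :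
    (√τ)⁻¹ ≤ timeWeight τ * √D := by
  rw [inv_sqrt_eq_mul_timeWeight h, mul_comm]
  have := timeWeight_nonneg h.le
  gcongr

lemma intervalIntegrable_timeWeight (a b : ℝ) : IntervalIntegrable timeWeight volume a b :=
  intervalIntegral.intervalIntegrable_rpow' (by norm_num)

lemma integrableOn_timeWeight {t : ℝ} (ht : 0 ≤ t) : IntegrableOn timeWeight (Ioo 0 t) :=
  (intervalIntegrable_iff_integrableOn_Ioo_of_le ht).mp (intervalIntegrable_timeWeight 0 t)

lemma integrableOn_timeWeight_sub {t : ℝ} (ht : 0 ≤ t) :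
    IntegrableOn (fun s => timeWeight (t - s)) (Ioo 0 t) := by
  have h := (intervalIntegrable_timeWeight 0 t).comp_sub_left t
  rw [sub_zero, sub_self] at h
  exact (intervalIntegrable_iff_integrableOn_Ioo_of_le ht).mp h.symm

lemma timeWeight_sub_mul_le {t s : ℝ} (hs : s ∈ Ioo 0 t) :
    timeWeight (t - s) * timeWeight s ≤
      timeWeight (t / 2) * (timeWeight s + timeWeight (t - s)) := by
  have hs_pos := timeWeight_pos hs.1
  have hts_pos := timeWeight_pos (sub_pos.mpr hs.2)
  have hhalf : 0 < t / 2 := half_pos (hs.1.trans hs.2)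
  have hhalf_pos := timeWeight_pos hhalf
  rcases le_total s (t / 2) with h | h
  · have : timeWeight (t - s) ≤ timeWeight (t / 2) := timeWeight_anti hhalf (by linarith)
    nlinarith
  · have : timeWeight s ≤ timeWeight (t / 2) := timeWeight_anti hhalf h
    nlinarith

lemma integrableOn_timeWeight_sub_mul {t : ℝ} (ht : 0 ≤ t) :
    IntegrableOn (fun s => timeWeight (t - s) * timeWeight s) (Ioo 0 t) := by
  refine (((integrableOn_timeWeight ht).add (integrableOn_timeWeight_sub ht)).const_mul
    (timeWeight (t / 2))).mono' ?_ ?_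
  · exact (integrableOn_timeWeight_sub ht).aestronglyMeasurable.mul
      (integrableOn_timeWeight ht).aestronglyMeasurable
  · filter_upwards [ae_restrict_mem measurableSet_Ioo] with s hs
    rw [Real.norm_of_nonneg (mul_nonneg (timeWeight_nonneg (sub_pos.mpr hs.2).le)
      (timeWeight_nonneg hs.1.le))]
    exact timeWeight_sub_mul_le hs

lemma setIntegral_Ioo_eq_mul_setIntegral_unit (F : ℝ → ℝ) {t : ℝ} (ht : 0 < t) :
    ∫ s in Ioo 0 t, F s = t * ∫ θ in Ioo (0 : ℝ) 1, F (t * θ) := by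
  rw [← integral_Ioc_eq_integral_Ioo, ← integral_Ioc_eq_integral_Ioo,
    ← intervalIntegral.integral_of_le ht.le, ← intervalIntegral.integral_of_le zero_le_one]
  simpa only [zero_add, mul_zero, mul_one] using
    (intervalIntegral.mul_integral_comp_add_mul (a := 0) (b := 1) (f := F) t 0).symm

/-- The Beta-type constant `B(1/4, 1/4)` governing the convolution of two copies of
`timeWeight`. -/
noncomputable def timeWeightBeta : ℝ :=
  ∫ θ in Ioo (0 : ℝ) 1, timeWeight (1 - θ) * timeWeight θ

lemma timeWeightBeta_nonneg : 0 ≤ timeWeightBeta :=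
  setIntegral_nonneg measurableSet_Ioo fun _ hθ =>
    mul_nonneg (timeWeight_nonneg (sub_pos.mpr hθ.2).le) (timeWeight_nonneg hθ.1.le)

lemma setIntegral_timeWeight_sub_mul {t : ℝ} (ht : 0 < t) :
    ∫ s in Ioo 0 t, timeWeight (t - s) * timeWeight s = t * timeWeight t ^ 2 * timeWeightBeta := by
  rw [setIntegral_Ioo_eq_mul_setIntegral_unit _ ht, timeWeightBeta, mul_assoc,
    ← integral_const_mul (timeWeight t ^ 2)]
  congr 1
  refine setIntegral_congr_fun measurableSet_Ioo fun θ hθ => ?_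
  simp only [show t - t * θ = t * (1 - θ) by ring]
  rw [timeWeight_mul ht.le (sub_pos.mpr hθ.2).le, timeWeight_mul ht.le hθ.1.le]
  ring

lemma setIntegral_timeWeight {t : ℝ} (ht : 0 < t) :
    ∫ s in Ioo 0 t, timeWeight s = t * timeWeight t * ∫ θ in Ioo (0 : ℝ) 1, timeWeight θ := by
  rw [setIntegral_Ioo_eq_mul_setIntegral_unit _ ht, mul_assoc, ← integral_const_mul (timeWeight t)]
  congr 1
  exact setIntegral_congr_fun measurableSet_Ioo fun θ hθ => timeWeight_mul ht.le hθ.1.le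

lemma abs_setIntegral_le_mul_timeWeight {f : ℝ → ℝ} {C t T : ℝ} (ht : 0 < t) (htT : t ≤ T)
    (hC : 0 ≤ C) (hf : ∀ s ∈ Ioo 0 t, |f s| ≤ C * (timeWeight (t - s) * timeWeight s)) :
    |∫ s in Ioo 0 t, f s| ≤ C * (√√T * timeWeightBeta) * timeWeight t := by
  have hint := norm_integral_le_of_norm_le (f := f)
    ((integrableOn_timeWeight_sub_mul ht.le).const_mul C)
    ((ae_restrict_mem measurableSet_Ioo).mono hf)
  rw [integral_const_mul, setIntegral_timeWeight_sub_mul ht] at hint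
  have hweight := timeWeight_nonneg ht.le
  have hbeta := timeWeightBeta_nonneg
  calc _ ≤ C * (t * timeWeight t ^ 2 * timeWeightBeta) := hint
    _ = C * (√√t * timeWeightBeta) * timeWeight t := by rw [← mul_timeWeight ht]; ring
    _ ≤ _ := by gcongr

/-- An integrand `F t x s`, `0 < s < t < T`, of a Volterra-type time integral, that is continuous
and has at worst a singularity of order `timeWeight` at each end of `0 < s < t`. -/
structure WeaklySingular (T C : ℝ) (F : ℝ → ℝ → ℝ → ℝ) : Prop where
  nonneg : 0 ≤ C
  continuousAt : ∀ {t s : ℝ} (x : ℝ), 0 < s → s < t → t < T →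
    ContinuousAt (fun p : ℝ × ℝ × ℝ => F p.1 p.2.1 p.2.2) (t, x, s)
  abs_le : ∀ {t s : ℝ} (x : ℝ), 0 < s → s < t → t < T →
    |F t x s| ≤ C * (timeWeight (t - s) * timeWeight s)

namespace WeaklySingular
variable {T C t : ℝ} {F : ℝ → ℝ → ℝ → ℝ}

lemma integrableOn (h : WeaklySingular T C F) (ht : 0 < t) (htT : t < T) (x : ℝ) :
    IntegrableOn (F t x) (Ioo 0 t) := by
  refine ((integrableOn_timeWeight_sub_mul ht.le).const_mul C).mono' ?_ ?_
  · refine ContinuousOn.aestronglyMeasurable (fun s hs => ?_) measurableSet_Ioo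
    exact (ContinuousAt.comp (f := fun s => ((t, x, s) : ℝ × ℝ × ℝ))
      (h.continuousAt x hs.1 hs.2 htT) (by fun_prop)).continuousWithinAt
  · filter_upwards [ae_restrict_mem measurableSet_Ioo] with s hs
    exact h.abs_le x hs.1 hs.2 htT

lemma abs_setIntegral_le (h : WeaklySingular T C F) (ht : 0 < t) (htT : t < T) (x : ℝ) :
    |∫ s in Ioo 0 t, F t x s| ≤ C * (√√T * timeWeightBeta) * timeWeight t :=
  abs_setIntegral_le_mul_timeWeight ht htT.le h.nonneg fun _ hs => h.abs_le x hs.1 hs.2 htT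

lemma abs_comp_mul_le (h : WeaklySingular T C F) (ht : 0 < t) {r : ℝ} (hr : t / 2 < r)
    (hrT : r < T) {θ : ℝ} (hθ : θ ∈ Ioo (0 : ℝ) 1) (x : ℝ) :
    |F r x (r * θ)| ≤ C * timeWeight (t / 2) ^ 2 * (timeWeight (1 - θ) * timeWeight θ) := by
  have hr_pos : 0 < r := (half_pos ht).trans hr
  have hle := h.abs_le x (mul_pos hr_pos hθ.1) (mul_lt_of_lt_one_right hr_pos hθ.2) hrT
  have hθ' := timeWeight_nonneg hθ.1.le
  have hθ'' := timeWeight_nonneg (sub_pos.mpr hθ.2).le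
  have hanti : timeWeight r ≤ timeWeight (t / 2) := timeWeight_anti (half_pos ht) hr.le
  have hr_nonneg := timeWeight_nonneg hr_pos.le
  have hC := h.nonneg
  rw [← mul_one_sub, timeWeight_mul hr_pos.le (sub_pos.mpr hθ.2).le,
    timeWeight_mul hr_pos.le hθ.1.le] at hle
  calc _ ≤ _ := hle
    _ = C * timeWeight r ^ 2 * (timeWeight (1 - θ) * timeWeight θ) := by ring
    _ ≤ _ := by gcongr

/-- The substitution `s = t θ` moves the dependence on `t` out of the domain of integration, after
which dominated convergence applies. -/
lemma continuousAt_setIntegral (h : WeaklySingular T C F) (ht : 0 < t) (htT : t < T) (x : ℝ) :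
    ContinuousAt (fun p : ℝ × ℝ => ∫ s in Ioo 0 p.1, F p.1 p.2 s) (t, x) := by
  have hnear : ∀ᶠ p : ℝ × ℝ in 𝓝 (t, x), t / 2 < p.1 ∧ p.1 < T :=
    (continuousAt_const.eventually_lt continuousAt_fst (half_lt_self ht)).and
      (continuousAt_fst.eventually_lt continuousAt_const htT)
  have hunit : ContinuousAt (fun p : ℝ × ℝ => ∫ θ in Ioo (0 : ℝ) 1, F p.1 p.2 (p.1 * θ))
      (t, x) := by
    refine continuousAt_of_dominated
      (bound := fun θ => C * timeWeight (t / 2) ^ 2 * (timeWeight (1 - θ) * timeWeight θ)) ?_ ?_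
      ((integrableOn_timeWeight_sub_mul zero_le_one).const_mul _) ?_
    · filter_upwards [hnear] with p hp
      have hp_pos : 0 < p.1 := (half_pos ht).trans hp.1
      refine ContinuousOn.aestronglyMeasurable (fun θ hθ => ?_) measurableSet_Ioo
      exact (ContinuousAt.comp (f := fun θ => ((p.1, p.2, p.1 * θ) : ℝ × ℝ × ℝ))
        (h.continuousAt p.2 (mul_pos hp_pos hθ.1) (mul_lt_of_lt_one_right hp_pos hθ.2) hp.2)
        (by fun_prop)).continuousWithinAt
    · filter_upwards [hnear] with p hp
      filter_upwards [ae_restrict_mem measurableSet_Ioo] with θ hθ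
      exact h.abs_comp_mul_le ht hp.1 hp.2 hθ p.2
    · filter_upwards [ae_restrict_mem measurableSet_Ioo] with θ hθ
      exact ContinuousAt.comp (f := fun p : ℝ × ℝ => ((p.1, p.2, p.1 * θ) : ℝ × ℝ × ℝ))
        (x := (t, x))
        (h.continuousAt x (mul_pos ht hθ.1) (mul_lt_of_lt_one_right ht hθ.2) htT) (by fun_prop)
  refine (continuousAt_fst.mul hunit).congr ?_
  filter_upwards [hnear] with p hp
  exact (setIntegral_Ioo_eq_mul_setIntegral_unit _ ((half_pos ht).trans hp.1)).symm

end WeaklySingular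

namespace DiffusionCoeff
variable (S : DiffusionCoeff)

lemma evolve_zero_eq_integral_scaled {t s : ℝ} (hst : s < t) (x : ℝ) (ψ : ℝ → ℝ) :
    S.evolve 0 t s ψ x = ∫ z, (√(t - s) * gaussDeriv 0 (S.variance t s (x - √(t - s) * z))
      (√(t - s) * z)) * ψ (x - √(t - s) * z) := by
  have hδ : 0 < √(t - s) := Real.sqrt_pos.mpr (sub_pos.mpr hst)
  set δ := √(t - s)
  have hscale := Measure.integral_comp_mul_left
    (fun w => gaussDeriv 0 (S.variance t s (x - w)) w * ψ (x - w)) δ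
  have hshift := integral_sub_left_eq_self
    (fun w => gaussDeriv 0 (S.variance t s (x - w)) w * ψ (x - w)) volume x
  simp only [sub_sub_cancel] at hshift
  rw [← hshift, abs_of_pos (inv_pos.mpr hδ), smul_eq_mul] at hscale
  simp only [evolve, kernel, mul_assoc]
  rw [integral_const_mul, hscale, mul_inv_cancel_left₀ hδ.ne']

/-- The diffusion coefficient averaged in time over `[s, t]`, also meaningful for `t = s`. -/
noncomputable def average (t s y : ℝ) : ℝ := ∫ θ in (0 : ℝ)..1, S.a (s + (t - s) * θ) y

lemma average_self (s y : ℝ) : S.average s s y = S.a s y := by simp [average]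

lemma continuous_average (s : ℝ) : Continuous (fun p : ℝ × ℝ => S.average p.1 s p.2) :=
  intervalIntegral.continuous_parametric_intervalIntegral_of_continuous'
    (f := fun (p : ℝ × ℝ) θ => S.a (s + (p.1 - s) * θ) p.2)
    (S.continuous_a.comp (by fun_prop :
      Continuous (fun q : (ℝ × ℝ) × ℝ => (s + (q.1.1 - s) * q.2, q.1.2)))) 0 1

lemma variance_eq_mul_average (t s y : ℝ) : S.variance t s y = (t - s) * S.average t s y := by
  rw [variance, average,
    intervalIntegral.mul_integral_comp_add_mul (f := fun r => S.a r y) (t - s) s]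
  simp

lemma average_pos {t s : ℝ} (h : s < t) (y : ℝ) : 0 < S.average t s y :=
  pos_of_mul_pos_right (S.variance_eq_mul_average t s y ▸ S.variance_pos h y) (sub_pos.mpr h).le

lemma sqrt_mul_gaussDeriv_variance {t s : ℝ} (h : s < t) (y z : ℝ) :
    √(t - s) * gaussDeriv 0 (S.variance t s y) (√(t - s) * z) =
      gaussDeriv 0 (S.average t s y) z := by
  have hpos : 0 < t - s := sub_pos.mpr h
  rw [variance_eq_mul_average,
    ← mul_gaussDeriv_zero_scale (Real.sqrt_pos.mpr hpos) (S.average_pos h y) z,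
    Real.sq_sqrt hpos.le]

lemma average_mem_Icc {t s : ℝ} (h : s < t) (y : ℝ) : S.average t s y ∈ Icc S.lam S.Lam := by
  have hpos : 0 < t - s := sub_pos.mpr h
  have hmem := S.variance_mem_Icc h.le y
  rw [variance_eq_mul_average, mul_comm S.lam, mul_comm S.Lam] at hmem
  exact ⟨le_of_mul_le_mul_left hmem.1 hpos, le_of_mul_le_mul_left hmem.2 hpos⟩

lemma abs_gaussDeriv_zero_average_le {t s : ℝ} (h : s < t) (y z : ℝ) :
    |gaussDeriv 0 (S.average t s y) z| ≤
      (√(2 * π * S.lam))⁻¹ * exp (-(1 / (2 * S.Lam)) * z ^ 2) := by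
  have hmem := S.average_mem_Icc h y
  refine (abs_gaussDeriv_zero_le (δ := 1) S.lam_pos one_pos (by simpa using hmem.1)
    (by simpa using hmem.2) z).trans_eq ?_
  rw [inv_one, mul_one, one_pow, mul_one]
  congr 2
  ring

lemma continuousAt_gaussDeriv_average_mul {s : ℝ} {ψ : ℝ → ℝ} (hc : Continuous ψ) {p : ℝ × ℝ}
    {z : ℝ} (hp : 0 < S.average p.1 s (p.2 - √(p.1 - s) * z)) :
    ContinuousAt (fun q : (ℝ × ℝ) × ℝ =>
      gaussDeriv 0 (S.average q.1.1 s (q.1.2 - √(q.1.1 - s) * q.2)) q.2 *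
        ψ (q.1.2 - √(q.1.1 - s) * q.2)) (p, z) := by
  refine ContinuousAt.mul (ContinuousAt.comp (f := fun q : (ℝ × ℝ) × ℝ =>
    (S.average q.1.1 s (q.1.2 - √(q.1.1 - s) * q.2), q.2)) (continuousAt_gaussDeriv 0 hp) ?_)
    (hc.comp (by fun_prop)).continuousAt
  exact (((S.continuous_average s).comp (by fun_prop : Continuous fun q : (ℝ × ℝ) × ℝ =>
    (q.1.1, q.1.2 - √(q.1.1 - s) * q.2))).prodMk continuous_snd).continuousAt

lemma tendsto_evolve_zero (s x₀ : ℝ) {ψ : ℝ → ℝ} {m : ℝ} (hc : Continuous ψ)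
    (hm : ∀ y, |ψ y| ≤ m) :
    Tendsto (fun p : ℝ × ℝ => S.evolve 0 p.1 s ψ p.2) (𝓝[Ioi s ×ˢ univ] (s, x₀))
      (𝓝 (ψ x₀)) := by
  have hpos : ∀ᶠ p : ℝ × ℝ in 𝓝[Ioi s ×ˢ univ] (s, x₀), s < p.1 := by
    filter_upwards [self_mem_nhdsWithin] with p hp using hp.1
  have hLam := S.Lam_pos
  have hrescaled : (fun p : ℝ × ℝ => ∫ z, gaussDeriv 0 (S.average p.1 s (p.2 - √(p.1 - s) * z)) z *
      ψ (p.2 - √(p.1 - s) * z)) =ᶠ[𝓝[Ioi s ×ˢ univ] (s, x₀)]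
      fun p => S.evolve 0 p.1 s ψ p.2 := by
    filter_upwards [hpos] with p hp
    rw [S.evolve_zero_eq_integral_scaled hp]
    simp only [S.sqrt_mul_gaussDeriv_variance hp]
  have hlim : ψ x₀ = ∫ z, gaussDeriv 0 (S.a s x₀) z * ψ x₀ := by
    rw [integral_mul_const, integral_gaussDeriv_zero (S.lam_pos.trans_le (S.lam_le_a _ _)), one_mul]
  rw [hlim]
  refine Tendsto.congr' hrescaled (tendsto_integral_filter_of_dominated_convergence
    (fun z => (√(2 * π * S.lam))⁻¹ * exp (-(1 / (2 * S.Lam)) * z ^ 2) * m) ?_ ?_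
    (((integrable_exp_neg_mul_sq (by positivity)).const_mul _).mul_const m)
    (.of_forall fun z => ?_))
  · filter_upwards [hpos] with p hp
    exact (continuous_iff_continuousAt.mpr fun z => ContinuousAt.comp (f := fun z => (p, z))
      (S.continuousAt_gaussDeriv_average_mul hc (S.average_pos hp _))
      (by fun_prop)).aestronglyMeasurable
  · filter_upwards [hpos] with p hp
    refine .of_forall fun z => ?_
    rw [norm_mul]
    exact mul_le_mul (S.abs_gaussDeriv_zero_average_le hp _ z) (hm _) (norm_nonneg _)
      (by positivity)
  · have ha : 0 < S.average s s (x₀ - √(s - s) * z) := by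
      rw [average_self]
      exact S.lam_pos.trans_le (S.lam_le_a _ _)
    have h := (ContinuousAt.comp (f := fun p : ℝ × ℝ => (p, z)) (x := (s, x₀))
      (S.continuousAt_gaussDeriv_average_mul hc ha)
      (by fun_prop)).tendsto.mono_left (nhdsWithin_le_nhds (s := Ioi s ×ˢ univ))
    simpa [Function.comp_def, average_self] using h

end DiffusionCoeff

/-! ### Estimates for the parametrix -/

namespace DiffusionCoeff
variable (S : DiffusionCoeff)

lemma exists_abs_evolve_le_of_bounded (j : ℕ) : ∃ C : ℝ, 0 ≤ C ∧ ∀ (t s x m : ℝ) (ψ : ℝ → ℝ),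
    s < t → (∀ y, |ψ y| ≤ m) → |S.evolve j t s ψ x| ≤ C * (m / √(t - s) ^ j) := by
  obtain ⟨C, hC, hbd⟩ := S.exists_abs_evolve_le j
  refine ⟨C, hC, fun t s x m ψ hst hm => ?_⟩
  simpa using hbd t s x m 0 ψ hst (by simpa using hm) ((abs_nonneg _).trans (hm 0)) le_rfl

/-- The error made in `a ∂²ₓ` when the diffusion coefficient is frozen at the source point. -/
noncomputable def freezeError (t s : ℝ) (ψ : ℝ → ℝ) (x : ℝ) : ℝ :=
  S.evolve 2 t s (fun y => (S.a t x - S.a t y) * ψ y) x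

/-- The time derivative of `S.evolve 0 t s ψ x`, in the form that the frozen heat equation gives. -/
noncomputable def evolveTime (t s : ℝ) (ψ : ℝ → ℝ) (x : ℝ) : ℝ :=
  1 / 2 * S.evolve 2 t s (fun y => S.a t y * ψ y) x

lemma exists_abs_freezeError_le : ∃ C : ℝ, 0 ≤ C ∧ ∀ (t s x m : ℝ) (ψ : ℝ → ℝ), s < t →
    (∀ y, |ψ y| ≤ m) → |S.freezeError t s ψ x| ≤ C * (m / √(t - s)) := by
  obtain ⟨C, hC, hbd⟩ := S.exists_abs_evolve_le 2
  have hL := S.L_nonneg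
  refine ⟨C * S.L, by positivity, fun t s x m ψ hst hm => ?_⟩
  have hm0 : 0 ≤ m := (abs_nonneg _).trans (hm 0)
  have hδ : 0 < √(t - s) := Real.sqrt_pos.mpr (sub_pos.mpr hst)
  have hweight (y : ℝ) : |(S.a t x - S.a t y) * ψ y| ≤ 0 + S.L * m * |x - y| := by
    rw [abs_mul, zero_add, mul_right_comm]
    gcongr
    exacts [S.a_lip t x y, hm y]
  refine (hbd t s x 0 (S.L * m) _ hst hweight le_rfl (by positivity)).trans_eq ?_
  field_simp
  ring

lemma abs_evolve_sub_le (j : ℕ) {t s x x' m B : ℝ} {ψ : ℝ → ℝ} (hst : s < t) (hc : Continuous ψ)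
    (hm : ∀ y, |ψ y| ≤ m) (hB : ∀ z, |x' - z| ≤ |x - x'| → |S.evolve (j + 1) t s ψ z| ≤ B) :
    |S.evolve j t s ψ x - S.evolve j t s ψ x'| ≤ B * |x - x'| :=
  Convex.norm_image_sub_le_of_norm_hasDerivWithin_le (s := uIcc x' x)
    (fun z _ => (S.hasDerivAt_evolve_space j hst hc hm z).hasDerivWithinAt)
    (fun z hz => hB z (abs_sub_comm x' z ▸ abs_sub_left_of_mem_uIcc hz))
    (convex_uIcc _ _) left_mem_uIcc right_mem_uIcc

lemma abs_a_sub_le (t x y : ℝ) : |S.a t x - S.a t y| ≤ 2 * S.Lam :=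
  (abs_sub _ _).trans (by linarith [S.abs_a_le t x, S.abs_a_le t y])

lemma continuous_a_sub_mul (t x : ℝ) {ψ : ℝ → ℝ} (hc : Continuous ψ) :
    Continuous (fun y => (S.a t x - S.a t y) * ψ y) :=
  (continuous_const.sub (S.continuous_a_space t)).mul hc

lemma abs_a_sub_mul_le (t x : ℝ) {ψ : ℝ → ℝ} {m : ℝ} (hm : ∀ y, |ψ y| ≤ m) (y : ℝ) :
    |(S.a t x - S.a t y) * ψ y| ≤ 2 * S.Lam * m := by
  have hΛ := S.Lam_pos
  rw [abs_mul]
  gcongr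
  exacts [S.abs_a_sub_le t x y, hm y]

lemma exists_abs_evolve_three_le : ∃ C : ℝ, 0 ≤ C ∧ ∀ (t s x z m : ℝ) (ψ : ℝ → ℝ), s < t →
    (∀ y, |ψ y| ≤ m) → |x - z| ≤ √(t - s) →
    |S.evolve 3 t s (fun y => (S.a t x - S.a t y) * ψ y) z| ≤ C * (m / √(t - s) ^ 2) := by
  obtain ⟨C, hC, hbd⟩ := S.exists_abs_evolve_le 3
  have hL := S.L_nonneg
  refine ⟨2 * C * S.L, by positivity, fun t s x z m ψ hst hm hxz => ?_⟩
  have hm0 : 0 ≤ m := (abs_nonneg _).trans (hm 0)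
  have hδ : 0 < √(t - s) := Real.sqrt_pos.mpr (sub_pos.mpr hst)
  have hweight (y : ℝ) :
      |(S.a t x - S.a t y) * ψ y| ≤ S.L * m * √(t - s) + S.L * m * |z - y| := by
    calc |(S.a t x - S.a t y) * ψ y| ≤ S.L * |x - y| * m := by
          rw [abs_mul]; gcongr; exacts [S.a_lip t x y, hm y]
      _ ≤ S.L * (√(t - s) + |z - y|) * m := by
          gcongr; exact (abs_sub_le x z y).trans (by gcongr)
      _ = _ := by ring
  refine (hbd t s z _ _ _ hst hweight (by positivity) (by positivity)).trans_eq ?_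
  field_simp
  ring

lemma exists_abs_freezeError_sub_le : ∃ C : ℝ, 0 ≤ C ∧ ∀ (t s x x' m : ℝ) (ψ : ℝ → ℝ), s < t →
    Continuous ψ → (∀ y, |ψ y| ≤ m) → |x - x'| ≤ √(t - s) →
    |S.freezeError t s ψ x - S.freezeError t s ψ x'| ≤ C * (m * (|x - x'| / √(t - s) ^ 2)) := by
  obtain ⟨C₃, hC₃, hbd₃⟩ := S.exists_abs_evolve_three_le
  obtain ⟨C₂, hC₂, hbd₂⟩ := S.exists_abs_evolve_le_of_bounded 2
  have hL := S.L_nonneg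
  have hΛ := S.Lam_pos
  refine ⟨S.L * C₂ + C₃, by positivity, fun t s x x' m ψ hst hc hm hxx' => ?_⟩
  have hsplit : S.freezeError t s ψ x = (S.a t x - S.a t x') * S.evolve 2 t s ψ x +
      S.evolve 2 t s (fun y => (S.a t x' - S.a t y) * ψ y) x := by
    rw [← S.evolve_const_mul, ← S.evolve_add 2 hst (m := 2 * S.Lam * m)
      (ψ := fun y => (S.a t x - S.a t x') * ψ y) (continuous_const.mul hc) (fun y => ?_)
      (S.continuous_a_sub_mul t x' hc)
      (S.abs_a_sub_mul_le t x' hm), freezeError]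
    · simp only [← add_mul, sub_add_sub_cancel]
    · rw [abs_mul]
      gcongr
      exacts [S.abs_a_sub_le t x x', hm y]
  have hdiff := S.abs_evolve_sub_le 2 hst (S.continuous_a_sub_mul t x' hc)
    (S.abs_a_sub_mul_le t x' hm) (fun z hz => hbd₃ t s x' z m ψ hst hm (hz.trans hxx'))
  calc |S.freezeError t s ψ x - S.freezeError t s ψ x'|
      = |(S.a t x - S.a t x') * S.evolve 2 t s ψ x +
          (S.evolve 2 t s (fun y => (S.a t x' - S.a t y) * ψ y) x -
            S.evolve 2 t s (fun y => (S.a t x' - S.a t y) * ψ y) x')| := by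
        rw [hsplit, add_sub_assoc, freezeError]
    _ ≤ S.L * |x - x'| * (C₂ * (m / √(t - s) ^ 2)) + C₃ * (m / √(t - s) ^ 2) * |x - x'| := by
        refine (abs_add_le _ _).trans (add_le_add ?_ hdiff)
        rw [abs_mul]
        gcongr
        exacts [S.a_lip t x x', hbd₂ t s x m ψ hst hm]
    _ = _ := by ring

lemma exists_abs_mul_evolve_sub_le (j : ℕ) : ∃ C : ℝ, 0 ≤ C ∧
    ∀ (t s x x' m M K : ℝ) (g ψ : ℝ → ℝ), s < t → Continuous ψ → (∀ y, |ψ y| ≤ m) →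
    |g x'| ≤ M → |g x - g x'| ≤ K * |x - x'| →
    |g x * S.evolve j t s ψ x - g x' * S.evolve j t s ψ x'| ≤
      C * ((K * √(t - s) + M) * (m * (|x - x'| / √(t - s) ^ (j + 1)))) := by
  obtain ⟨C₁, hC₁, hbd₁⟩ := S.exists_abs_evolve_le_of_bounded (j + 1)
  obtain ⟨C₀, hC₀, hbd₀⟩ := S.exists_abs_evolve_le_of_bounded j
  refine ⟨C₀ + C₁, by positivity, fun t s x x' m M K g ψ hst hc hm hM hK => ?_⟩
  have hm0 : 0 ≤ m := (abs_nonneg _).trans (hm 0)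
  have hM0 : 0 ≤ M := (abs_nonneg _).trans hM
  have hKx : 0 ≤ K * |x - x'| := (abs_nonneg _).trans hK
  have hδ : 0 < √(t - s) := Real.sqrt_pos.mpr (sub_pos.mpr hst)
  have hdiff := S.abs_evolve_sub_le (x := x) (x' := x') j hst hc hm
    (fun z _ => hbd₁ t s z m ψ hst hm)
  calc |g x * S.evolve j t s ψ x - g x' * S.evolve j t s ψ x'|
      = |(g x - g x') * S.evolve j t s ψ x +
          g x' * (S.evolve j t s ψ x - S.evolve j t s ψ x')| := by ring_nf
    _ ≤ K * |x - x'| * (C₀ * (m / √(t - s) ^ j)) +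
          M * (C₁ * (m / √(t - s) ^ (j + 1)) * |x - x'|) := by
        refine (abs_add_le _ _).trans (add_le_add ?_ ?_) <;> rw [abs_mul] <;> gcongr
        exact hbd₀ t s x m ψ hst hm
    _ = C₀ * (K * |x - x'| * (√(t - s) * (m / √(t - s) ^ (j + 1)))) +
          C₁ * (M * (m * (|x - x'| / √(t - s) ^ (j + 1)))) := by field_simp; ring
    _ ≤ (C₀ + C₁) * (K * |x - x'| * (√(t - s) * (m / √(t - s) ^ (j + 1)))) +
          (C₀ + C₁) * (M * (m * (|x - x'| / √(t - s) ^ (j + 1)))) := by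
        gcongr <;> linarith
    _ = _ := by ring

lemma evolveTime_eq {t s : ℝ} {ψ : ℝ → ℝ} {m : ℝ} (hst : s < t) (hc : Continuous ψ)
    (hm : ∀ y, |ψ y| ≤ m) (x : ℝ) : S.evolveTime t s ψ x =
      1 / 2 * S.a t x * S.evolve 2 t s ψ x - 1 / 2 * S.freezeError t s ψ x := by
  have hsplit : S.a t x * S.evolve 2 t s ψ x = S.freezeError t s ψ x +
      S.evolve 2 t s (fun y => S.a t y * ψ y) x := by
    rw [← S.evolve_const_mul, freezeError, ← S.evolve_add 2 hst (χ := fun y => S.a t y * ψ y)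
      (m' := S.Lam * m) (S.continuous_a_sub_mul t x hc) (S.abs_a_sub_mul_le t x hm)
      ((S.continuous_a_space t).mul hc) fun y => ?_]
    · simp only [← add_mul, sub_add_cancel]
    · rw [abs_mul]
      exact mul_le_mul (S.abs_a_le t y) (hm y) (abs_nonneg _) S.Lam_pos.le
  rw [evolveTime]
  linarith

end DiffusionCoeff

/-- A bounded `1/2`-Hölder function, with a common constant for the bound and the modulus. -/
structure HolderHalf (m : ℝ) (ψ : ℝ → ℝ) : Prop where
  abs_le : ∀ y, |ψ y| ≤ m
  abs_sub_le : ∀ x y, |ψ y - ψ x| ≤ m * √|x - y|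

namespace HolderHalf
variable {m : ℝ} {ψ : ℝ → ℝ}

lemma nonneg (h : HolderHalf m ψ) : 0 ≤ m := (abs_nonneg _).trans (h.abs_le 0)

lemma continuous (h : HolderHalf m ψ) : Continuous ψ := by
  refine continuous_iff_continuousAt.mpr fun x => tendsto_iff_norm_sub_tendsto_zero.mpr ?_
  have hlim : Tendsto (fun y => m * √|x - y|) (𝓝 x) (𝓝 (m * √|x - x|)) :=
    (by fun_prop : Continuous fun y => m * √|x - y|).tendsto x
  rw [sub_self, abs_zero, Real.sqrt_zero, mul_zero] at hlim
  exact squeeze_zero (fun _ => norm_nonneg _) (fun y => h.abs_sub_le x y) hlim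

lemma abs_sub_le_add_mul (h : HolderHalf m ψ) {δ : ℝ} (hδ : 0 < δ) (x y : ℝ) :
    |ψ y - ψ x| ≤ m * δ + m / δ * |x - y| := by
  have hm := h.nonneg
  have hyoung : √|x - y| ≤ δ + |x - y| / δ := by
    rw [← sub_le_iff_le_add', le_div_iff₀ hδ]
    nlinarith [Real.mul_self_sqrt (abs_nonneg (x - y)), Real.sqrt_nonneg |x - y|,
      sq_nonneg (√|x - y| - δ)]
  calc |ψ y - ψ x| ≤ m * √|x - y| := h.abs_sub_le x y
    _ ≤ m * (δ + |x - y| / δ) := by gcongr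
    _ = _ := by ring

end HolderHalf

namespace DiffusionCoeff
variable (S : DiffusionCoeff) (T : ℝ)

/-- Writing `ψ = (ψ - ψ x) + ψ x`, the Hölder modulus gains on the first part, and the cancellation
in the second derivative of the kernel gains on the second. -/
lemma exists_abs_evolve_two_le_of_holder : ∃ C : ℝ, 0 ≤ C ∧ ∀ (t s x m : ℝ) (ψ : ℝ → ℝ), s < t →
    t - s ≤ T → HolderHalf m ψ → |S.evolve 2 t s ψ x| ≤ C * m * timeWeight (t - s) := by
  obtain ⟨C₂, hC₂, hbd₂⟩ := S.exists_abs_evolve_le 2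
  obtain ⟨C, hC, hbd⟩ := S.exists_abs_evolve_two_one_le
  refine ⟨2 * C₂ + C * √√T, by positivity, fun t s x m ψ hst hT hψ => ?_⟩
  have hm := hψ.nonneg
  have hpos : 0 < t - s := sub_pos.mpr hst
  have hδ : 0 < √√(t - s) := Real.sqrt_pos.mpr (Real.sqrt_pos.mpr hpos)
  have hsq : √√(t - s) ^ 2 = √(t - s) := Real.sq_sqrt (Real.sqrt_nonneg _)
  have hosc := hbd₂ t s x _ _ (fun y => ψ y - ψ x) hst (hψ.abs_sub_le_add_mul hδ x)
    (by positivity) (by positivity)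
  have hscale : (m * √√(t - s) + m / √√(t - s) * √(t - s)) / √(t - s) ^ 2 =
      2 * m * timeWeight (t - s) := by
    have hquot : m / √√(t - s) * √(t - s) = m * √√(t - s) := by field_simp; rw [hsq]
    rw [← sqrt_sqrt_div_sq_eq_timeWeight hpos, hquot]
    ring
  rw [hscale] at hosc
  have hsplit : S.evolve 2 t s ψ x =
      S.evolve 2 t s (fun y => ψ y - ψ x) x + ψ x * S.evolve 2 t s (fun _ => 1) x := by
    rw [← S.evolve_const_mul, ← S.evolve_add 2 hst (ψ := fun y => ψ y - ψ x) (χ := fun _ => ψ x * 1)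
      (m := 2 * m) (m' := m)
      (hψ.continuous.sub continuous_const)
      (fun y => (abs_sub _ _).trans (by linarith [hψ.abs_le y, hψ.abs_le x]))
      continuous_const (by simpa using hψ.abs_le x)]
    simp only [mul_one, sub_add_cancel]
  calc |S.evolve 2 t s ψ x|
      ≤ C₂ * (2 * m * timeWeight (t - s)) + m * (C * (√√T * timeWeight (t - s))) := by
        rw [hsplit]
        refine (abs_add_le _ _).trans (add_le_add hosc ?_)
        rw [abs_mul]
        gcongr
        · exact hψ.abs_le x
        · refine (hbd t s x hst).trans ?_
          rw [div_eq_mul_inv]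
          gcongr
          exact inv_sqrt_le_mul_timeWeight hpos hT
    _ = _ := by ring

lemma exists_abs_evolve_le_of_holder {j : ℕ} (hj : j ≤ 2) : ∃ C : ℝ, 0 ≤ C ∧
    ∀ (t s x m : ℝ) (ψ : ℝ → ℝ), s < t → t - s ≤ T → HolderHalf m ψ →
    |S.evolve j t s ψ x| ≤ C * m * timeWeight (t - s) := by
  obtain ⟨C, hC, hbd⟩ := S.exists_abs_evolve_le_of_bounded j
  interval_cases j
  · refine ⟨C * (√T * √√T), by positivity, fun t s x m ψ hst hT hψ => ?_⟩
    have hm := hψ.nonneg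
    calc |S.evolve 0 t s ψ x| ≤ C * m * 1 := by simpa using hbd t s x m ψ hst hψ.abs_le
      _ ≤ C * m * (√T * √√T * timeWeight (t - s)) := by
          gcongr; exact one_le_mul_timeWeight (sub_pos.mpr hst) hT
      _ = _ := by ring
  · refine ⟨C * √√T, by positivity, fun t s x m ψ hst hT hψ => ?_⟩
    have hm := hψ.nonneg
    calc |S.evolve 1 t s ψ x| ≤ C * m * (√(t - s))⁻¹ := by
          simpa [div_eq_mul_inv, mul_assoc] using hbd t s x m ψ hst hψ.abs_le
      _ ≤ C * m * (√√T * timeWeight (t - s)) := by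
          gcongr; exact inv_sqrt_le_mul_timeWeight (sub_pos.mpr hst) hT
      _ = _ := by ring
  · exact S.exists_abs_evolve_two_le_of_holder T

lemma exists_abs_evolveTime_le_of_holder : ∃ C : ℝ, 0 ≤ C ∧ ∀ (t s x m : ℝ) (ψ : ℝ → ℝ), s < t →
    t - s ≤ T → HolderHalf m ψ → |S.evolveTime t s ψ x| ≤ C * m * timeWeight (t - s) := by
  obtain ⟨C₂, hC₂, hbd₂⟩ := S.exists_abs_evolve_two_le_of_holder T
  obtain ⟨C, hC, hbd⟩ := S.exists_abs_freezeError_le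
  have hΛ := S.Lam_pos
  refine ⟨1 / 2 * S.Lam * C₂ + 1 / 2 * (C * √√T), by positivity, fun t s x m ψ hst hT hψ => ?_⟩
  have hm := hψ.nonneg
  rw [S.evolveTime_eq hst hψ.continuous hψ.abs_le]
  calc _ ≤ 1 / 2 * S.Lam * (C₂ * m * timeWeight (t - s)) +
          1 / 2 * (C * (m * (√√T * timeWeight (t - s)))) := by
        refine (abs_sub _ _).trans ?_
        rw [abs_mul, abs_mul, abs_mul, abs_of_pos (one_half_pos (α := ℝ))]
        gcongr
        · exact S.abs_a_le t x
        · exact hbd₂ t s x m ψ hst hT hψ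
        · refine (hbd t s x m ψ hst hψ.abs_le).trans ?_
          rw [div_eq_mul_inv]
          gcongr
          exact inv_sqrt_le_mul_timeWeight (sub_pos.mpr hst) hT
    _ = _ := by ring

section Continuity
variable {X : Type*} [TopologicalSpace X] [FirstCountableTopology X] {p₀ : X} {t s x : X → ℝ}
  {Ψ : X → ℝ → ℝ} {m : ℝ}

lemma continuousAt_freezeError (ht : ContinuousAt t p₀) (hs : ContinuousAt s p₀)
    (hx : ContinuousAt x p₀) (hst : s p₀ < t p₀) (hm : ∀ᶠ p in 𝓝 p₀, ∀ y, |Ψ p y| ≤ m)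
    (hc : ∀ᶠ p in 𝓝 p₀, Continuous (Ψ p)) (hΨ : ∀ y, ContinuousAt (fun p => Ψ p y) p₀) :
    ContinuousAt (fun p => S.freezeError (t p) (s p) (Ψ p) (x p)) p₀ := by
  have ha {x : X → ℝ} (hx : ContinuousAt x p₀) : ContinuousAt (fun p => S.a (t p) (x p)) p₀ :=
    S.continuous_a.continuousAt.comp_of_eq (ht.prodMk hx) rfl
  exact S.continuousAt_evolve 2 ht hs hx hst (hm.mono fun p hp => S.abs_a_sub_mul_le _ _ hp)
    (hc.mono fun p hp => S.continuous_a_sub_mul _ _ hp)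
    fun y => ((ha hx).sub (ha continuousAt_const)).mul (hΨ y)

lemma continuousAt_evolveTime (ht : ContinuousAt t p₀) (hs : ContinuousAt s p₀)
    (hx : ContinuousAt x p₀) (hst : s p₀ < t p₀) (hm : ∀ᶠ p in 𝓝 p₀, ∀ y, |Ψ p y| ≤ m)
    (hc : ∀ᶠ p in 𝓝 p₀, Continuous (Ψ p)) (hΨ : ∀ y, ContinuousAt (fun p => Ψ p y) p₀) :
    ContinuousAt (fun p => S.evolveTime (t p) (s p) (Ψ p) (x p)) p₀ := by
  refine continuousAt_const.mul (S.continuousAt_evolve 2 (m := S.Lam * m) ht hs hx hst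
    (hm.mono fun p hp y => ?_) (hc.mono fun p hp => (S.continuous_a_space _).mul hp) fun y => ?_)
  · rw [abs_mul]
    exact mul_le_mul (S.abs_a_le _ y) (hp y) (abs_nonneg _) S.Lam_pos.le
  · exact (S.continuous_a.continuousAt.comp_of_eq (ht.prodMk continuousAt_const) rfl).mul (hΨ y)

end Continuity
end DiffusionCoeff

/-- The operator `u ↦ (1/2) a ∂²ₓ u + b ∂ₓ u + c u`, whose coefficients are continuous, bounded and
Lipschitz in space, and whose leading coefficient is elliptic. -/
structure ParabolicOperator extends DiffusionCoeff where
  b : ℝ → ℝ → ℝ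
  c : ℝ → ℝ → ℝ
  continuous_b : Continuous (fun p : ℝ × ℝ => b p.1 p.2)
  continuous_c : Continuous (fun p : ℝ × ℝ => c p.1 p.2)
  abs_b_le : ∀ t x, |b t x| ≤ Lam
  abs_c_le : ∀ t x, |c t x| ≤ Lam
  b_lip : ∀ t x y, |b t x - b t y| ≤ L * |x - y|
  c_lip : ∀ t x y, |c t x - c t y| ≤ L * |x - y|

namespace ParabolicOperator
variable (S : ParabolicOperator) (T : ℝ)

/-- The defect of the parametrix evolution `S.evolve 0 t s ψ x` in the parabolic equation
`∂ₜ u = (1/2) a ∂²ₓ u + b ∂ₓ u + c u`. -/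
noncomputable def parametrixError (t s : ℝ) (ψ : ℝ → ℝ) (x : ℝ) : ℝ :=
  1 / 2 * S.freezeError t s ψ x + S.b t x * S.evolve 1 t s ψ x + S.c t x * S.evolve 0 t s ψ x

lemma exists_abs_parametrixError_le : ∃ C : ℝ, 0 ≤ C ∧ ∀ (t s x m : ℝ) (ψ : ℝ → ℝ), s < t →
    t - s ≤ T → (∀ y, |ψ y| ≤ m) → |S.parametrixError t s ψ x| ≤ C * (m / √(t - s)) := by
  obtain ⟨C₂, hC₂, hbd₂⟩ := S.exists_abs_freezeError_le
  obtain ⟨C₁, hC₁, hbd₁⟩ := S.exists_abs_evolve_le_of_bounded 1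
  obtain ⟨C₀, hC₀, hbd₀⟩ := S.exists_abs_evolve_le_of_bounded 0
  have hΛ := S.Lam_pos
  refine ⟨1 / 2 * C₂ + S.Lam * C₁ + S.Lam * C₀ * √T, by positivity,
    fun t s x m ψ hst hT hm => ?_⟩
  have hm0 : 0 ≤ m := (abs_nonneg _).trans (hm 0)
  have hδ : 0 < √(t - s) := Real.sqrt_pos.mpr (sub_pos.mpr hst)
  have hk₁ := hbd₁ t s x m ψ hst hm
  have hk₀ := hbd₀ t s x m ψ hst hm
  rw [pow_one] at hk₁
  rw [pow_zero, div_one] at hk₀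
  have hm_le : m ≤ √T * (m / √(t - s)) :=
    calc m = √(t - s) * (m / √(t - s)) := by field_simp
      _ ≤ √T * (m / √(t - s)) := by gcongr
  calc |S.parametrixError t s ψ x| ≤ 1 / 2 * |S.freezeError t s ψ x| +
          |S.b t x| * |S.evolve 1 t s ψ x| + |S.c t x| * |S.evolve 0 t s ψ x| := by
        refine (abs_add_three _ _ _).trans_eq ?_
        rw [abs_mul, abs_mul, abs_mul, abs_of_pos (one_half_pos (α := ℝ))]
    _ ≤ 1 / 2 * (C₂ * (m / √(t - s))) + S.Lam * (C₁ * (m / √(t - s))) +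
          S.Lam * (C₀ * (√T * (m / √(t - s)))) := by
        gcongr
        · exact hbd₂ t s x m ψ hst hm
        · exact S.abs_b_le t x
        · exact S.abs_c_le t x
        · exact hk₀.trans (by gcongr)
    _ = _ := by ring

lemma exists_abs_parametrixError_sub_le_of_near : ∃ C : ℝ, 0 ≤ C ∧
    ∀ (t s x x' m : ℝ) (ψ : ℝ → ℝ), s < t → t - s ≤ T → Continuous ψ → (∀ y, |ψ y| ≤ m) →
    |x - x'| ≤ √(t - s) → |S.parametrixError t s ψ x - S.parametrixError t s ψ x'| ≤
      C * (m * (|x - x'| / √(t - s) ^ 2)) := by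
  obtain ⟨C₂, hC₂, hbd₂⟩ := S.exists_abs_freezeError_sub_le
  obtain ⟨C₁, hC₁, hbd₁⟩ := S.exists_abs_mul_evolve_sub_le 1
  obtain ⟨C₀, hC₀, hbd₀⟩ := S.exists_abs_mul_evolve_sub_le 0
  have hΛ := S.Lam_pos
  have hL := S.L_nonneg
  refine ⟨1 / 2 * C₂ + C₁ * (S.L * √T + S.Lam) + C₀ * ((S.L * √T + S.Lam) * √T), by positivity,
    fun t s x x' m ψ hst hT hc hm hxx' => ?_⟩
  have hm0 : 0 ≤ m := (abs_nonneg _).trans (hm 0)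
  have hδ : 0 < √(t - s) := Real.sqrt_pos.mpr (sub_pos.mpr hst)
  have hk₂ := hbd₂ t s x x' m ψ hst hc hm hxx'
  have hk₁ := hbd₁ t s x x' m _ _ _ ψ hst hc hm (S.abs_b_le t x') (S.b_lip t x x')
  have hk₀ := hbd₀ t s x x' m _ _ _ ψ hst hc hm (S.abs_c_le t x') (S.c_lip t x x')
  have hδT : √(t - s) ≤ √T := Real.sqrt_le_sqrt hT
  have hpow : m * (|x - x'| / √(t - s) ^ (0 + 1)) =
      √(t - s) * (m * (|x - x'| / √(t - s) ^ 2)) := by field_simp; ring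
  rw [hpow] at hk₀
  rw [one_add_one_eq_two] at hk₁
  calc |S.parametrixError t s ψ x - S.parametrixError t s ψ x'|
      = |1 / 2 * (S.freezeError t s ψ x - S.freezeError t s ψ x') +
          (S.b t x * S.evolve 1 t s ψ x - S.b t x' * S.evolve 1 t s ψ x') +
          (S.c t x * S.evolve 0 t s ψ x - S.c t x' * S.evolve 0 t s ψ x')| := by
        unfold parametrixError; ring_nf
    _ ≤ 1 / 2 * |S.freezeError t s ψ x - S.freezeError t s ψ x'| +
          |S.b t x * S.evolve 1 t s ψ x - S.b t x' * S.evolve 1 t s ψ x'| +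
          |S.c t x * S.evolve 0 t s ψ x - S.c t x' * S.evolve 0 t s ψ x'| := by
        refine (abs_add_three _ _ _).trans_eq ?_
        rw [abs_mul, abs_of_pos (one_half_pos (α := ℝ))]
    _ ≤ 1 / 2 * (C₂ * (m * (|x - x'| / √(t - s) ^ 2))) +
          C₁ * ((S.L * √T + S.Lam) * (m * (|x - x'| / √(t - s) ^ 2))) +
          C₀ * ((S.L * √T + S.Lam) * (√T * (m * (|x - x'| / √(t - s) ^ 2)))) := by
        gcongr
        · exact hk₁.trans (by gcongr)
        · exact hk₀.trans (by gcongr)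
    _ = _ := by ring

lemma exists_abs_parametrixError_sub_le : ∃ C : ℝ, 0 ≤ C ∧
    ∀ (t s x x' m : ℝ) (ψ : ℝ → ℝ), s < t → t - s ≤ T → Continuous ψ → (∀ y, |ψ y| ≤ m) →
    |S.parametrixError t s ψ x - S.parametrixError t s ψ x'| ≤
      C * (m * (timeWeight (t - s) * √|x - x'|)) := by
  obtain ⟨C, hC, hnear⟩ := S.exists_abs_parametrixError_sub_le_of_near T
  obtain ⟨C', hC', hfar⟩ := S.exists_abs_parametrixError_le T
  refine ⟨C + 2 * C', by positivity, fun t s x x' m ψ hst hT hc hm => ?_⟩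
  have hm0 : 0 ≤ m := (abs_nonneg _).trans (hm 0)
  have hpos : 0 < t - s := sub_pos.mpr hst
  have hweight := timeWeight_nonneg hpos.le
  rcases le_total |x - x'| √(t - s) with hD | hD
  · calc _ ≤ C * (m * (|x - x'| / √(t - s) ^ 2)) := hnear t s x x' m ψ hst hT hc hm hD
      _ ≤ C * (m * (timeWeight (t - s) * √|x - x'|)) := by
          gcongr; exact div_sq_le_timeWeight_mul_sqrt hpos (abs_nonneg _) hD
      _ ≤ _ := by gcongr; linarith
  · calc _ ≤ C' * (m / √(t - s)) + C' * (m / √(t - s)) := (abs_sub _ _).trans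
          (add_le_add (hfar t s x m ψ hst hT hm) (hfar t s x' m ψ hst hT hm))
      _ = 2 * C' * (m * (√(t - s))⁻¹) := by ring
      _ ≤ 2 * C' * (m * (timeWeight (t - s) * √|x - x'|)) := by
          gcongr; exact inv_sqrt_le_timeWeight_mul_sqrt hpos hD
      _ ≤ _ := by gcongr; linarith

lemma continuousAt_parametrixError {X : Type*} [TopologicalSpace X] [FirstCountableTopology X]
    {p₀ : X} {t s x : X → ℝ} {Ψ : X → ℝ → ℝ} {m : ℝ} (ht : ContinuousAt t p₀)
    (hs : ContinuousAt s p₀) (hx : ContinuousAt x p₀) (hst : s p₀ < t p₀)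
    (hm : ∀ᶠ p in 𝓝 p₀, ∀ y, |Ψ p y| ≤ m) (hc : ∀ᶠ p in 𝓝 p₀, Continuous (Ψ p))
    (hΨ : ∀ y, ContinuousAt (fun p => Ψ p y) p₀) :
    ContinuousAt (fun p => S.parametrixError (t p) (s p) (Ψ p) (x p)) p₀ := by
  have hcoef {g : ℝ → ℝ → ℝ} (hg : Continuous (fun p : ℝ × ℝ => g p.1 p.2)) :
      ContinuousAt (fun p => g (t p) (x p)) p₀ :=
    hg.continuousAt.comp_of_eq (ht.prodMk hx) rfl
  exact ((continuousAt_const.mul (S.continuousAt_freezeError ht hs hx hst hm hc hΨ)).add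
    ((hcoef S.continuous_b).mul (S.continuousAt_evolve 1 ht hs hx hst hm hc hΨ))).add
    ((hcoef S.continuous_c).mul (S.continuousAt_evolve 0 ht hs hx hst hm hc hΨ))

end ParabolicOperator

/-! ### The Volterra equation for the density -/

/-- A density `ρ s y` on `(0, T) × ℝ` that is continuous and has at most the singularity
`timeWeight s` at time zero. -/
structure SingularDensity (T R : ℝ) (ρ : ℝ → ℝ → ℝ) : Prop where
  nonneg : 0 ≤ R
  continuousAt : ∀ {s : ℝ} (y : ℝ), 0 < s → s < T →
    ContinuousAt (fun p : ℝ × ℝ => ρ p.1 p.2) (s, y)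
  abs_le : ∀ {s : ℝ} (y : ℝ), 0 < s → s < T → |ρ s y| ≤ R * timeWeight s

namespace SingularDensity
variable {T R : ℝ} {ρ : ℝ → ℝ → ℝ} {s : ℝ}

lemma continuous_space (h : SingularDensity T R ρ) (hs : 0 < s) (hsT : s < T) :
    Continuous (ρ s) :=
  continuous_iff_continuousAt.mpr fun y =>
    ContinuousAt.comp (f := fun y => ((s, y) : ℝ × ℝ)) (h.continuousAt y hs hsT) (by fun_prop)

lemma eventually_nhds (t x : ℝ) (hs : 0 < s) (hsT : s < T) :
    ∀ᶠ p : ℝ × ℝ × ℝ in 𝓝 (t, x, s), s / 2 < p.2.2 ∧ p.2.2 < T :=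
  (by fun_prop : Continuous fun p : ℝ × ℝ × ℝ => p.2.2).continuousAt.eventually
    (Ioo_mem_nhds (half_lt_self hs) hsT)

lemma eventually_abs_le (h : SingularDensity T R ρ) (t x : ℝ) (hs : 0 < s) (hsT : s < T) :
    ∀ᶠ p : ℝ × ℝ × ℝ in 𝓝 (t, x, s), ∀ y, |ρ p.2.2 y| ≤ R * timeWeight (s / 2) := by
  filter_upwards [eventually_nhds t x hs hsT] with p hp y
  have hR := h.nonneg
  exact (h.abs_le y ((half_pos hs).trans hp.1) hp.2).trans
    (by gcongr; exact timeWeight_anti (half_pos hs) hp.1.le)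

lemma eventually_continuous (h : SingularDensity T R ρ) (t x : ℝ) (hs : 0 < s) (hsT : s < T) :
    ∀ᶠ p : ℝ × ℝ × ℝ in 𝓝 (t, x, s), Continuous (ρ p.2.2) := by
  filter_upwards [eventually_nhds t x hs hsT] with p hp
  exact h.continuous_space ((half_pos hs).trans hp.1) hp.2

lemma continuousAt_time (h : SingularDensity T R ρ) (t x y : ℝ) (hs : 0 < s) (hsT : s < T) :
    ContinuousAt (fun p : ℝ × ℝ × ℝ => ρ p.2.2 y) (t, x, s) :=
  ContinuousAt.comp (f := fun p : ℝ × ℝ × ℝ => ((p.2.2, y) : ℝ × ℝ)) (x := (t, x, s))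
    (h.continuousAt y hs hsT) (by fun_prop)

lemma continuousAt_comp_time (h : SingularDensity T R ρ) (x : ℝ) (hs : 0 < s) (hsT : s < T) :
    ContinuousAt (fun s => ρ s x) s :=
  ContinuousAt.comp (f := fun s => ((s, x) : ℝ × ℝ)) (h.continuousAt x hs hsT) (by fun_prop)

lemma integrableOn (h : SingularDensity T R ρ) {t : ℝ} (ht : 0 ≤ t) (htT : t < T) (x : ℝ) :
    IntegrableOn (fun s => ρ s x) (Ioo 0 t) := by
  refine ((integrableOn_timeWeight ht).const_mul R).mono' ?_ ?_
  · exact ContinuousOn.aestronglyMeasurable (fun s hs =>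
      (h.continuousAt_comp_time x hs.1 (hs.2.trans htT)).continuousWithinAt) measurableSet_Ioo
  · filter_upwards [ae_restrict_mem measurableSet_Ioo] with s hs
    exact h.abs_le x hs.1 (hs.2.trans htT)

lemma hasDerivAt_setIntegral (h : SingularDensity T R ρ) {t : ℝ} (ht : 0 < t) (htT : t < T)
    (x : ℝ) : HasDerivAt (fun t => ∫ s in Ioo 0 t, ρ s x) (ρ t x) t := by
  have hderiv : HasDerivAt (fun t => ∫ s in (0 : ℝ)..t, ρ s x) (ρ t x) t := by
    refine intervalIntegral.integral_hasDerivAt_right ?_ ?_ (h.continuousAt_comp_time x ht htT)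
    · exact (intervalIntegrable_iff_integrableOn_Ioo_of_le ht.le).mpr (h.integrableOn ht.le htT x)
    · exact ContinuousOn.stronglyMeasurableAtFilter isOpen_Ioo (fun s hs =>
        (h.continuousAt_comp_time x hs.1 hs.2).continuousWithinAt) t (⟨ht, htT⟩ : t ∈ Ioo 0 T)
  refine hderiv.congr_of_eventuallyEq ?_
  filter_upwards [Ioi_mem_nhds ht] with r hr
  rw [intervalIntegral.integral_of_le (mem_Ioi.mp hr).le, integral_Ioc_eq_integral_Ioo]

lemma add {R' : ℝ} {ρ' : ℝ → ℝ → ℝ} (h : SingularDensity T R ρ)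
    (h' : SingularDensity T R' ρ') : SingularDensity T (R + R') (fun s y => ρ s y + ρ' s y) where
  nonneg := add_nonneg h.nonneg h'.nonneg
  continuousAt y hs hsT := (h.continuousAt y hs hsT).add (h'.continuousAt y hs hsT)
  abs_le y hs hsT := (abs_add_le _ _).trans
    ((add_le_add (h.abs_le y hs hsT) (h'.abs_le y hs hsT)).trans_eq (add_mul _ _ _).symm)

end SingularDensity

/-- A singular density that is `1/2`-Hölder continuous in space, with the same singularity of its
Hölder constant. -/
structure HolderDensity (T R : ℝ) (ρ : ℝ → ℝ → ℝ) : Prop extends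
    SingularDensity T R ρ where
  abs_sub_le : ∀ {s : ℝ} (x y : ℝ), 0 < s → s < T →
    |ρ s y - ρ s x| ≤ R * timeWeight s * √|x - y|

lemma HolderDensity.holderHalf {T R s : ℝ} {ρ : ℝ → ℝ → ℝ} (h : HolderDensity T R ρ) (hs : 0 < s)
    (hsT : s < T) : HolderHalf (R * timeWeight s) (ρ s) :=
  ⟨fun y => h.abs_le y hs hsT, fun x y => h.abs_sub_le x y hs hsT⟩

lemma WeaklySingular.singularDensity_setIntegral {T C : ℝ} {F : ℝ → ℝ → ℝ → ℝ}
    (h : WeaklySingular T C F) : SingularDensity T (C * (√√T * timeWeightBeta))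
      (fun t x => ∫ s in Ioo 0 t, F t x s) where
  nonneg := by
    have := h.nonneg
    have := timeWeightBeta_nonneg
    positivity
  continuousAt x ht htT := h.continuousAt_setIntegral ht htT x
  abs_le x ht htT := h.abs_setIntegral_le ht htT x

lemma exists_exp_neg_mul_div_sqrt_le {ε : ℝ} (hε : 0 < ε) :
    ∃ μ : ℝ, 0 ≤ μ ∧ ∀ τ, 0 < τ → exp (-(μ * τ)) / √τ ≤ ε * timeWeight τ := by
  refine ⟨1 / ε ^ 4, by positivity, fun τ hτ => ?_⟩
  have hpow : √√τ ^ 4 = τ := by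
    rw [show √√τ ^ 4 = (√√τ ^ 2) ^ 2 by ring, Real.sq_sqrt (Real.sqrt_nonneg τ),
      Real.sq_sqrt hτ.le]
  set z := √√τ / ε with hz
  have hz_pos : 0 < z := by positivity
  have hexp : exp (-z ^ 4) ≤ 1 / z := by
    rw [Real.exp_neg, ← one_div]
    refine one_div_le_one_div_of_le hz_pos ?_
    have := Real.add_one_le_exp (z ^ 4)
    nlinarith [sq_nonneg (z ^ 2 - 1), sq_nonneg (z - 1)]
  have hweight := timeWeight_nonneg hτ.le
  calc exp (-(1 / ε ^ 4 * τ)) / √τ = exp (-z ^ 4) * (√√τ * timeWeight τ) := by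
        rw [← inv_sqrt_eq_mul_timeWeight hτ, hz, div_pow, hpow]
        ring_nf
    _ ≤ 1 / z * (√√τ * timeWeight τ) := by gcongr
    _ = ε * timeWeight τ := by rw [hz]; field_simp

namespace DiffusionCoeff

lemma evolve_sub (S : DiffusionCoeff) (j : ℕ) {t s : ℝ} (hst : s < t) {ψ χ : ℝ → ℝ} {m m' : ℝ}
    (hc : Continuous ψ) (hm : ∀ y, |ψ y| ≤ m) (hc' : Continuous χ) (hm' : ∀ y, |χ y| ≤ m')
    (x : ℝ) :
    S.evolve j t s (fun y => ψ y - χ y) x = S.evolve j t s ψ x - S.evolve j t s χ x := by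
  unfold evolve
  rw [← integral_sub (S.integrable_kernel_mul j hst x hc hm)
    (S.integrable_kernel_mul j hst x hc' hm')]
  simp only [mul_sub]

end DiffusionCoeff

namespace ParabolicOperator
variable (S : ParabolicOperator)

lemma parametrixError_sub {t s : ℝ} (hst : s < t) {ψ χ : ℝ → ℝ} {m m' : ℝ}
    (hc : Continuous ψ) (hm : ∀ y, |ψ y| ≤ m) (hc' : Continuous χ) (hm' : ∀ y, |χ y| ≤ m')
    (x : ℝ) : S.parametrixError t s (fun y => ψ y - χ y) x =
      S.parametrixError t s ψ x - S.parametrixError t s χ x := by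
  have hfreeze := S.evolve_sub 2 hst (S.continuous_a_sub_mul t x hc) (S.abs_a_sub_mul_le t x hm)
    (S.continuous_a_sub_mul t x hc') (S.abs_a_sub_mul_le t x hm') x
  simp only [← mul_sub] at hfreeze
  simp only [parametrixError, DiffusionCoeff.freezeError, hfreeze,
    S.evolve_sub _ hst hc hm hc' hm']
  ring

lemma exists_weaklySingular_parametrixError {T R : ℝ} {ρ : ℝ → ℝ → ℝ}
    (h : SingularDensity T R ρ) :
    ∃ C, WeaklySingular T C (fun t x s => S.parametrixError t s (ρ s) x) := by
  obtain ⟨C, hC, hbd⟩ := S.exists_abs_parametrixError_le T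
  have hR := h.nonneg
  refine ⟨C * √√T * R, by positivity, fun {t s} x hs hst htT => ?_, fun {t s} x hs hst htT => ?_⟩
  · have hsT := hst.trans htT
    exact S.continuousAt_parametrixError (t := fun p : ℝ × ℝ × ℝ => p.1) (s := fun p => p.2.2)
      (x := fun p => p.2.1) (by fun_prop) (by fun_prop) (by fun_prop) hst
      (h.eventually_abs_le t x hs hsT) (h.eventually_continuous t x hs hsT)
      (fun y => h.continuousAt_time t x y hs hsT)
  · have hweight := timeWeight_nonneg hs.le
    have hts : t - s ≤ T := by linarith
    calc _ ≤ C * (R * timeWeight s / √(t - s)) :=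
          hbd t s x _ _ hst hts fun y => h.abs_le y hs (hst.trans htT)
      _ = C * (R * timeWeight s) * (√(t - s))⁻¹ := by ring
      _ ≤ C * (R * timeWeight s) * (√√T * timeWeight (t - s)) := by
          gcongr; exact inv_sqrt_le_mul_timeWeight (sub_pos.mpr hst) hts
      _ = _ := by ring

lemma exists_singularDensity_parametrixError (T : ℝ) {φ : ℝ → ℝ} (hφ : Continuous φ) {m : ℝ}
    (hm : ∀ y, |φ y| ≤ m) : ∃ R, SingularDensity T R (fun t x => S.parametrixError t 0 φ x) := by
  have hm0 : 0 ≤ m := (abs_nonneg _).trans (hm 0)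
  obtain ⟨C, hC, hbd⟩ := S.exists_abs_parametrixError_le T
  refine ⟨C * m * √√T, by positivity, fun {t} x ht _ => ?_, fun {t} x ht htT => ?_⟩
  · exact S.continuousAt_parametrixError (X := ℝ × ℝ) (t := fun p => p.1) (s := fun _ => 0)
      (x := fun p => p.2) (Ψ := fun _ => φ) (by fun_prop) (by fun_prop) (by fun_prop) ht
      (.of_forall fun _ => hm) (.of_forall fun _ => hφ) (fun _ => continuousAt_const)
  · calc |S.parametrixError t 0 φ x| ≤ C * (m / √(t - 0)) :=
          hbd t 0 x m φ ht (by linarith) hm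
      _ = C * m * (√t)⁻¹ := by rw [sub_zero]; ring
      _ ≤ C * m * (√√T * timeWeight t) := by
          gcongr; exact inv_sqrt_le_mul_timeWeight ht htT.le
      _ = _ := by ring

/-- The Volterra operator whose fixed points are the densities `ρ` for which the ansatz
`S.evolve 0 t 0 φ + ∫ s in Ioo 0 t, S.evolve 0 t s (ρ s)` solves the parabolic equation. -/
noncomputable def volterraMap (φ : ℝ → ℝ) (ρ : ℝ → ℝ → ℝ) (t x : ℝ) : ℝ :=
  S.parametrixError t 0 φ x + ∫ s in Ioo 0 t, S.parametrixError t s (ρ s) x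

lemma exists_singularDensity_volterraMap {φ : ℝ → ℝ} (hφ : Continuous φ) {m : ℝ}
    (hm : ∀ y, |φ y| ≤ m) {T R : ℝ} {ρ : ℝ → ℝ → ℝ} (hρ : SingularDensity T R ρ) :
    ∃ R', SingularDensity T R' (S.volterraMap φ ρ) := by
  obtain ⟨_, hinit⟩ := S.exists_singularDensity_parametrixError T hφ hm
  obtain ⟨_, hsing⟩ := S.exists_weaklySingular_parametrixError hρ
  exact ⟨_, hinit.add hsing.singularDensity_setIntegral⟩

lemma volterraMap_sub (φ : ℝ → ℝ) {T R R' : ℝ} {ρ ρ' : ℝ → ℝ → ℝ}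
    (hρ : SingularDensity T R ρ) (hρ' : SingularDensity T R' ρ') {t : ℝ} (ht : 0 < t)
    (htT : t < T) (x : ℝ) : S.volterraMap φ ρ t x - S.volterraMap φ ρ' t x =
      ∫ s in Ioo 0 t, S.parametrixError t s (fun y => ρ s y - ρ' s y) x := by
  obtain ⟨_, hsing⟩ := S.exists_weaklySingular_parametrixError hρ
  obtain ⟨_, hsing'⟩ := S.exists_weaklySingular_parametrixError hρ'
  rw [volterraMap, volterraMap, add_sub_add_left_eq_sub,
    ← integral_sub (hsing.integrableOn ht htT x) (hsing'.integrableOn ht htT x)]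
  refine setIntegral_congr_fun measurableSet_Ioo fun s hs => ?_
  have hsT := hs.2.trans htT
  exact (S.parametrixError_sub hs.2 (hρ.continuous_space hs.1 hsT)
    (fun y => hρ.abs_le y hs.1 hsT) (hρ'.continuous_space hs.1 hsT)
    (fun y => hρ'.abs_le y hs.1 hsT) x).symm

/-- A large exponential weight in time absorbs the constant of the kernel, at the price of a
slightly stronger singularity, which `timeWeight` accommodates. -/
lemma exists_volterraMap_contracting (T : ℝ) : ∃ μ : ℝ, 0 ≤ μ ∧
    ∀ {φ : ℝ → ℝ} {R R' N : ℝ} {ρ ρ' : ℝ → ℝ → ℝ}, 0 ≤ N → SingularDensity T R ρ →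
      SingularDensity T R' ρ' →
      (∀ s y, 0 < s → s < T → |ρ s y - ρ' s y| ≤ timeWeight s * exp (μ * s) * N) →
      ∀ t x, 0 < t → t < T →
        |S.volterraMap φ ρ t x - S.volterraMap φ ρ' t x| ≤
          timeWeight t * exp (μ * t) * (1 / 2 * N) := by
  obtain ⟨C, hC, hbd⟩ := S.exists_abs_parametrixError_le T
  have hbeta := timeWeightBeta_nonneg
  set κ := C * (√√T * timeWeightBeta) with hκ
  obtain ⟨μ, hμ, hexp⟩ := exists_exp_neg_mul_div_sqrt_le (ε := 1 / (2 * (κ + 1))) (by positivity)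
  set ε := 1 / (2 * (κ + 1)) with hε
  have hκε : κ * ε ≤ 1 / 2 := by
    rw [hε, mul_one_div, div_le_div_iff₀ (by positivity) two_pos]
    linarith
  refine ⟨μ, hμ, fun {φ R R' N ρ ρ'} hN hρ hρ' hdist t x ht htT => ?_⟩
  rw [S.volterraMap_sub φ hρ hρ' ht htT]
  have hpoint : ∀ s ∈ Ioo 0 t, |S.parametrixError t s (fun y => ρ s y - ρ' s y) x| ≤
      C * ε * exp (μ * t) * N * (timeWeight (t - s) * timeWeight s) := by
    intro s hs
    have hweight := timeWeight_nonneg hs.1.le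
    have hexp_eq : exp (μ * s) = exp (μ * t) * exp (-(μ * (t - s))) := by
      rw [← Real.exp_add]; ring_nf
    calc _ ≤ C * (timeWeight s * exp (μ * s) * N / √(t - s)) :=
          hbd t s x _ _ hs.2 (by linarith [hs.1]) fun y => hdist s y hs.1 (hs.2.trans htT)
      _ = C * timeWeight s * exp (μ * t) * N * (exp (-(μ * (t - s))) / √(t - s)) := by
          rw [hexp_eq]; ring
      _ ≤ C * timeWeight s * exp (μ * t) * N * (ε * timeWeight (t - s)) := by
          gcongr; exact hexp _ (sub_pos.mpr hs.2)
      _ = _ := by ring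
  have hweight := timeWeight_nonneg ht.le
  calc _ ≤ C * ε * exp (μ * t) * N * (√√T * timeWeightBeta) * timeWeight t :=
        abs_setIntegral_le_mul_timeWeight ht htT.le (by positivity) hpoint
    _ = timeWeight t * exp (μ * t) * (κ * ε * N) := by rw [hκ]; ring
    _ ≤ _ := by gcongr

end ParabolicOperator

/-- The open strip `(0, T) × ℝ`. -/
abbrev TimeStrip (T : ℝ) := {p : ℝ × ℝ // 0 < p.1 ∧ p.1 < T}

open Classical in
/-- The density `timeWeight s * exp (μ * s) * g (s, y)`, extended by zero outside the strip: the sup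
norm of `g` is an exponentially weighted norm of the density. -/
noncomputable def weightedDensity (T μ : ℝ) (g : TimeStrip T →ᵇ ℝ) (s y : ℝ) : ℝ :=
  if h : 0 < s ∧ s < T then timeWeight s * exp (μ * s) * g ⟨(s, y), h⟩ else 0

lemma weightedDensity_eq {T : ℝ} (μ : ℝ) (g : TimeStrip T →ᵇ ℝ) {s : ℝ} (y : ℝ)
    (h : 0 < s ∧ s < T) :
    weightedDensity T μ g s y = timeWeight s * exp (μ * s) * g ⟨(s, y), h⟩ :=
  dif_pos h

lemma singularDensity_weightedDensity {T μ : ℝ} (hμ : 0 ≤ μ) (g : TimeStrip T →ᵇ ℝ) :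
    SingularDensity T (exp (μ * T) * ‖g‖) (weightedDensity T μ g) := by
  refine ⟨by positivity, fun {s} y hs hsT => ?_, fun {s} y hs hsT => ?_⟩
  · have hopen : IsOpen {p : ℝ × ℝ | 0 < p.1 ∧ p.1 < T} :=
      (isOpen_lt continuous_const continuous_fst).inter (isOpen_lt continuous_fst continuous_const)
    refine ContinuousOn.continuousAt (s := {p : ℝ × ℝ | 0 < p.1 ∧ p.1 < T}) ?_
      (hopen.mem_nhds ⟨hs, hsT⟩)
    rw [continuousOn_iff_continuous_domRestrict]
    have heq : ({p : ℝ × ℝ | 0 < p.1 ∧ p.1 < T}.domRestrict fun p : ℝ × ℝ =>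
        weightedDensity T μ g p.1 p.2) =
        fun p : TimeStrip T => timeWeight p.1.1 * exp (μ * p.1.1) * g p :=
      funext fun p => weightedDensity_eq μ g p.1.2 p.2
    rw [heq]
    refine (Continuous.mul ?_ (by fun_prop)).mul g.continuous
    exact continuous_iff_continuousAt.mpr fun p =>
      ContinuousAt.comp (f := fun p : TimeStrip T => p.1.1) (x := p)
        (continuousAt_timeWeight p.2.1) (by fun_prop)
  · have hweight := timeWeight_nonneg hs.le
    rw [weightedDensity_eq μ g y ⟨hs, hsT⟩, abs_mul, abs_of_nonneg (by positivity)]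
    calc _ ≤ timeWeight s * exp (μ * T) * ‖g‖ := by
          gcongr; exact g.norm_coe_le_norm ⟨(s, y), ⟨hs, hsT⟩⟩
      _ = _ := by ring

lemma SingularDensity.exists_eq_weightedDensity {T R : ℝ} {ρ : ℝ → ℝ → ℝ}
    (h : SingularDensity T R ρ) {μ : ℝ} (hμ : 0 ≤ μ) : ∃ g : TimeStrip T →ᵇ ℝ,
    ∀ s y, 0 < s → s < T → weightedDensity T μ g s y = ρ s y := by
  refine ⟨BoundedContinuousFunction.ofNormedAddCommGroup
    (fun p : TimeStrip T => (timeWeight p.1.1 * exp (μ * p.1.1))⁻¹ * ρ p.1.1 p.1.2) ?_ R ?_,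
    fun s y hs hsT => ?_⟩
  · refine continuous_iff_continuousAt.mpr fun p => ?_
    have hweight : ContinuousAt (fun p : TimeStrip T => timeWeight p.1.1) p :=
      ContinuousAt.comp (f := fun p : TimeStrip T => p.1.1) (continuousAt_timeWeight p.2.1)
        (by fun_prop)
    have hρ : ContinuousAt (fun p : TimeStrip T => ρ p.1.1 p.1.2) p :=
      ContinuousAt.comp (f := Subtype.val) (h.continuousAt p.1.2 p.2.1 p.2.2) (by fun_prop)
    exact ((hweight.mul (by fun_prop)).inv₀
      (mul_pos (timeWeight_pos p.2.1) (Real.exp_pos _)).ne').mul hρ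
  · rintro ⟨⟨s, y⟩, hs, hsT⟩
    have hpos := timeWeight_pos hs
    have hR := h.nonneg
    have hexp : 1 ≤ exp (μ * s) := Real.one_le_exp (mul_nonneg hμ hs.le)
    rw [norm_mul, Real.norm_of_nonneg (by positivity), inv_mul_le_iff₀ (by positivity)]
    calc ‖ρ s y‖ ≤ R * timeWeight s * 1 := (h.abs_le y hs hsT).trans_eq (mul_one _).symm
      _ ≤ R * timeWeight s * exp (μ * s) := by gcongr
      _ = _ := by ring
  · have hpos := timeWeight_pos hs
    rw [weightedDensity_eq μ _ y ⟨hs, hsT⟩]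
    simp only [BoundedContinuousFunction.coe_ofNormedAddCommGroup]
    field_simp

namespace ParabolicOperator
variable (S : ParabolicOperator) {T : ℝ} {φ : ℝ → ℝ} {m : ℝ}

lemma exists_eq_volterraMap (T : ℝ) (hφ : Continuous φ) (hm : ∀ y, |φ y| ≤ m) :
    ∃ R ρ, SingularDensity T R ρ ∧
      ∀ t x, 0 < t → t < T → ρ t x = S.volterraMap φ ρ t x := by
  obtain ⟨μ, hμ, hcontr⟩ := S.exists_volterraMap_contracting T
  have hself (g : TimeStrip T →ᵇ ℝ) : ∃ g' : TimeStrip T →ᵇ ℝ, ∀ s y, 0 < s → s < T →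
      weightedDensity T μ g' s y = S.volterraMap φ (weightedDensity T μ g) s y := by
    obtain ⟨R', hR'⟩ :=
      S.exists_singularDensity_volterraMap hφ hm (singularDensity_weightedDensity hμ g)
    exact hR'.exists_eq_weightedDensity hμ
  choose Φ hΦ using hself
  have hdist (g g' : TimeStrip T →ᵇ ℝ) (s y : ℝ) (hs : 0 < s) (hsT : s < T) :
      |weightedDensity T μ g s y - weightedDensity T μ g' s y| =
        timeWeight s * exp (μ * s) * dist (g ⟨(s, y), hs, hsT⟩) (g' ⟨(s, y), hs, hsT⟩) := by
    have hpos := timeWeight_pos hs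
    rw [weightedDensity_eq μ g y ⟨hs, hsT⟩, weightedDensity_eq μ g' y ⟨hs, hsT⟩, ← mul_sub,
      abs_mul, abs_of_pos (by positivity), Real.dist_eq]
  have hΦ_contr : ContractingWith (1 / 2) Φ := by
    refine ⟨by rw [← NNReal.coe_lt_coe]; norm_num, .of_dist_le_mul fun g g' => ?_⟩
    refine (BoundedContinuousFunction.dist_le (by positivity)).mpr ?_
    rintro ⟨⟨t, x⟩, ht, htT⟩
    have hpos := timeWeight_pos ht
    have hle := hcontr (φ := φ) dist_nonneg (singularDensity_weightedDensity hμ g)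
      (singularDensity_weightedDensity hμ g') (N := dist g g') (fun s y hs hsT => by
        have hpos := timeWeight_pos hs
        rw [hdist g g' s y hs hsT]
        gcongr
        exact g.dist_coe_le_dist _) t x ht htT
    rw [← hΦ g t x ht htT, ← hΦ g' t x ht htT, hdist _ _ t x ht htT] at hle
    simpa using le_of_mul_le_mul_left hle (by positivity)
  refine ⟨_, _, singularDensity_weightedDensity hμ (hΦ_contr.fixedPoint Φ), fun t x ht htT => ?_⟩
  rw [← hΦ _ t x ht htT, hΦ_contr.fixedPoint_isFixedPt]

lemma exists_abs_volterraMap_sub_le (hφ : Continuous φ) (hm : ∀ y, |φ y| ≤ m) {R : ℝ}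
    {ρ : ℝ → ℝ → ℝ} (hρ : SingularDensity T R ρ) :
    ∃ C : ℝ, 0 ≤ C ∧ ∀ t x x', 0 < t → t < T →
      |S.volterraMap φ ρ t x - S.volterraMap φ ρ t x'| ≤ C * timeWeight t * √|x - x'| := by
  have hm0 : 0 ≤ m := (abs_nonneg _).trans (hm 0)
  have hR := hρ.nonneg
  have hbeta := timeWeightBeta_nonneg
  obtain ⟨C, hC, hbd⟩ := S.exists_abs_parametrixError_sub_le T
  obtain ⟨_, hsing⟩ := S.exists_weaklySingular_parametrixError hρ
  refine ⟨C * m + C * R * (√√T * timeWeightBeta), by positivity, fun t x x' ht htT => ?_⟩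
  have hinit := hbd t 0 x x' m φ ht (by linarith) hφ hm
  have hpoint : ∀ s ∈ Ioo 0 t,
      |S.parametrixError t s (ρ s) x - S.parametrixError t s (ρ s) x'| ≤
        C * R * √|x - x'| * (timeWeight (t - s) * timeWeight s) := by
    intro s hs
    have hsT := hs.2.trans htT
    refine (hbd t s x x' (R * timeWeight s) (ρ s) hs.2 (by linarith [hs.1])
      (hρ.continuous_space hs.1 hsT) (fun y => hρ.abs_le y hs.1 hsT)).trans_eq ?_
    ring
  have hint := abs_setIntegral_le_mul_timeWeight ht htT.le (by positivity) hpoint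
  rw [integral_sub (hsing.integrableOn ht htT x) (hsing.integrableOn ht htT x')] at hint
  rw [sub_zero] at hinit
  rw [volterraMap, volterraMap, add_sub_add_comm]
  refine (abs_add_le _ _).trans ((add_le_add hinit hint).trans_eq ?_)
  ring

/-- The regularising property of the kernel makes the solution of the Volterra equation Hölder
continuous in space, which the second derivative of the volume potential requires. -/
lemma exists_holderDensity_eq_volterraMap (T : ℝ) (hφ : Continuous φ) (hm : ∀ y, |φ y| ≤ m) :
    ∃ R ρ, HolderDensity T R ρ ∧ ∀ t x, 0 < t → t < T → ρ t x = S.volterraMap φ ρ t x := by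
  obtain ⟨R, ρ, hρ, heq⟩ := S.exists_eq_volterraMap T hφ hm
  obtain ⟨C, hC, hholder⟩ := S.exists_abs_volterraMap_sub_le hφ hm hρ
  have hR := hρ.nonneg
  refine ⟨R + C, ρ, ⟨⟨by positivity, hρ.continuousAt, fun {s} y hs hsT => ?_⟩,
    fun {s} x y hs hsT => ?_⟩, heq⟩
  · have hweight := timeWeight_nonneg hs.le
    exact (hρ.abs_le y hs hsT).trans (by gcongr; linarith)
  · have hweight := timeWeight_nonneg hs.le
    rw [heq s y hs hsT, heq s x hs hsT, abs_sub_comm]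
    exact (hholder s x y hs hsT).trans (by gcongr; linarith)

end ParabolicOperator

/-! ### Volume potentials -/

lemma setIntegral_Ioo_triangle_swap {D : ℝ → ℝ → ℝ} {t : ℝ}
    (hD : IntegrableOn (fun p : ℝ × ℝ => D p.1 p.2) {p | 0 < p.2 ∧ p.2 < p.1 ∧ p.1 < t}) :
    ∫ s in Ioo 0 t, ∫ r in Ioo s t, D r s = ∫ r in Ioo 0 t, ∫ s in Ioo 0 r, D r s := by
  set E : Set (ℝ × ℝ) := {p | 0 < p.2 ∧ p.2 < p.1 ∧ p.1 < t}
  have hE : MeasurableSet E :=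
    (measurableSet_lt measurable_const measurable_snd).inter
      ((measurableSet_lt measurable_snd measurable_fst).inter
        (measurableSet_lt measurable_fst measurable_const))
  have hfst (r : ℝ) : ∫ s, E.indicator (fun p => D p.1 p.2) (r, s) =
      (Ioo 0 t).indicator (fun r => ∫ s in Ioo 0 r, D r s) r := by
    simp only [indicator_apply, ← integral_indicator measurableSet_Ioo]
    split_ifs with hr
    · refine integral_congr_ae (.of_forall fun s => if_congr ?_ rfl rfl)
      exact ⟨fun h => ⟨h.1, h.2.1⟩, fun h => ⟨h.1, h.2, hr.2⟩⟩
    · refine integral_eq_zero_of_ae (.of_forall fun s => if_neg fun h => hr ?_)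
      exact ⟨h.1.trans h.2.1, h.2.2⟩
  have hsnd (s : ℝ) : ∫ r, E.indicator (fun p => D p.1 p.2) (r, s) =
      (Ioo 0 t).indicator (fun s => ∫ r in Ioo s t, D r s) s := by
    simp only [indicator_apply, ← integral_indicator measurableSet_Ioo]
    split_ifs with hs
    · refine integral_congr_ae (.of_forall fun r => if_congr ?_ rfl rfl)
      exact ⟨fun h => ⟨h.2.1, h.2.2⟩, fun h => ⟨hs.1, h.1, h.2⟩⟩
    · refine integral_eq_zero_of_ae (.of_forall fun r => if_neg fun h => hs ?_)
      exact ⟨h.1, h.2.1.trans h.2.2⟩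
  have hswap := integral_integral_swap (f := fun r s => E.indicator (fun p => D p.1 p.2) (r, s))
    ((integrable_indicator_iff hE).mpr hD)
  simp only [hfst, hsnd, integral_indicator measurableSet_Ioo] at hswap
  exact hswap.symm

lemma WeaklySingular.integrableOn_triangle {T C t : ℝ} {F : ℝ → ℝ → ℝ → ℝ}
    (h : WeaklySingular T C F) (ht : 0 < t) (htT : t < T) (x : ℝ) :
    IntegrableOn (fun p : ℝ × ℝ => F p.1 x p.2) {p | 0 < p.2 ∧ p.2 < p.1 ∧ p.1 < t} := by
  have hopen : IsOpen {p : ℝ × ℝ | 0 < p.2 ∧ p.2 < p.1 ∧ p.1 < t} :=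
    (isOpen_lt continuous_const continuous_snd).inter
      ((isOpen_lt continuous_snd continuous_fst).inter (isOpen_lt continuous_fst continuous_const))
  let w : ℝ → ℝ := (Ioo 0 t).indicator timeWeight
  have hw_eq {r : ℝ} (hr : r ∈ Ioo 0 t) : w r = timeWeight r := indicator_of_mem hr _
  have hw : Integrable w :=
    (integrable_indicator_iff measurableSet_Ioo).mpr (integrableOn_timeWeight ht.le)
  refine Integrable.mono' (g := fun p : ℝ × ℝ => C * (w p.2 * w (p.1 - p.2))) ?_ ?_ ?_
  · exact ((hw.convolution_integrand (ContinuousLinearMap.mul ℝ ℝ) hw).const_mul C).integrableOn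
  · refine ContinuousOn.aestronglyMeasurable (fun p hp => ?_) hopen.measurableSet
    exact (ContinuousAt.comp (f := fun p : ℝ × ℝ => ((p.1, x, p.2) : ℝ × ℝ × ℝ))
      (h.continuousAt x hp.1 hp.2.1 (hp.2.2.trans htT)) (by fun_prop)).continuousWithinAt
  · filter_upwards [ae_restrict_mem hopen.measurableSet] with p hp
    have hs : p.2 ∈ Ioo 0 t := ⟨hp.1, hp.2.1.trans hp.2.2⟩
    have hrs : p.1 - p.2 ∈ Ioo 0 t := ⟨sub_pos.mpr hp.2.1, by linarith [hp.1, hp.2.2]⟩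
    rw [hw_eq hs, hw_eq hrs, mul_comm (timeWeight _)]
    exact h.abs_le x hp.1 hp.2.1 (hp.2.2.trans htT)

lemma WeaklySingular.integrableOn_time {T C s t : ℝ} {F : ℝ → ℝ → ℝ → ℝ}
    (h : WeaklySingular T C F) (hs : 0 < s) (hst : s < t) (htT : t < T) (x : ℝ) :
    IntegrableOn (fun r => F r x s) (Ioo s t) := by
  have hweight : IntegrableOn (fun r => C * (timeWeight (r - s) * timeWeight s)) (Ioo s t) := by
    have hshift := (intervalIntegrable_timeWeight 0 (t - s)).comp_sub_right s
    rw [zero_add, sub_add_cancel, intervalIntegrable_iff_integrableOn_Ioo_of_le hst.le] at hshift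
    exact (hshift.mul_const _).const_mul C
  refine hweight.mono' ?_ ?_
  · refine ContinuousOn.aestronglyMeasurable (fun r hr => ?_) measurableSet_Ioo
    exact (ContinuousAt.comp (f := fun r => ((r, x, s) : ℝ × ℝ × ℝ))
      (h.continuousAt x hs hr.1 (hr.2.trans htT)) (by fun_prop)).continuousWithinAt
  · filter_upwards [ae_restrict_mem measurableSet_Ioo] with r hr
    exact h.abs_le x hs hr.1 (hr.2.trans htT)

namespace DiffusionCoeff
variable (S : DiffusionCoeff) {T R : ℝ} {ρ : ℝ → ℝ → ℝ}

/-- The volume potential of the density `ρ`, or rather its `j`-th derivative in space. -/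
noncomputable def volumePotential (j : ℕ) (ρ : ℝ → ℝ → ℝ) (t x : ℝ) : ℝ :=
  ∫ s in Ioo 0 t, S.evolve j t s (ρ s) x

/-- The part of the time derivative of the volume potential coming from the kernel, as opposed to
the endpoint of the integral. -/
noncomputable def volumePotentialTime (ρ : ℝ → ℝ → ℝ) (t x : ℝ) : ℝ :=
  ∫ s in Ioo 0 t, S.evolveTime t s (ρ s) x

lemma exists_weaklySingular_evolve {j : ℕ} (hj : j ≤ 2) (h : HolderDensity T R ρ) :
    ∃ C, WeaklySingular T C (fun t x s => S.evolve j t s (ρ s) x) := by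
  obtain ⟨C, hC, hbd⟩ := S.exists_abs_evolve_le_of_holder T hj
  have hR := h.nonneg
  refine ⟨C * R, by positivity, fun {t s} x hs hst htT => ?_, fun {t s} x hs hst htT => ?_⟩
  · have hsT := hst.trans htT
    exact S.continuousAt_evolve j (t := fun p : ℝ × ℝ × ℝ => p.1) (s := fun p => p.2.2)
      (x := fun p => p.2.1) (by fun_prop) (by fun_prop) (by fun_prop) hst
      (h.eventually_abs_le t x hs hsT) (h.eventually_continuous t x hs hsT)
      (fun y => h.continuousAt_time t x y hs hsT)
  · refine (hbd t s x _ _ hst (by linarith) (h.holderHalf hs (hst.trans htT))).trans_eq ?_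
    ring

lemma exists_weaklySingular_evolveTime (h : HolderDensity T R ρ) :
    ∃ C, WeaklySingular T C (fun t x s => S.evolveTime t s (ρ s) x) := by
  obtain ⟨C, hC, hbd⟩ := S.exists_abs_evolveTime_le_of_holder T
  have hR := h.nonneg
  refine ⟨C * R, by positivity, fun {t s} x hs hst htT => ?_, fun {t s} x hs hst htT => ?_⟩
  · have hsT := hst.trans htT
    exact S.continuousAt_evolveTime (t := fun p : ℝ × ℝ × ℝ => p.1) (s := fun p => p.2.2)
      (x := fun p => p.2.1) (by fun_prop) (by fun_prop) (by fun_prop) hst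
      (h.eventually_abs_le t x hs hsT) (h.eventually_continuous t x hs hsT)
      (fun y => h.continuousAt_time t x y hs hsT)
  · refine (hbd t s x _ _ hst (by linarith) (h.holderHalf hs (hst.trans htT))).trans_eq ?_
    ring

lemma hasDerivAt_volumePotential_space {j : ℕ} (hj : j ≤ 1) (h : HolderDensity T R ρ) {t : ℝ}
    (ht : 0 < t) (htT : t < T) (x : ℝ) :
    HasDerivAt (fun x => S.volumePotential j ρ t x) (S.volumePotential (j + 1) ρ t x) x := by
  obtain ⟨_, hsing⟩ := S.exists_weaklySingular_evolve (by lia : j ≤ 2) h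
  obtain ⟨C, hsing'⟩ := S.exists_weaklySingular_evolve (by lia : j + 1 ≤ 2) h
  refine (hasDerivAt_integral_of_dominated_loc_of_deriv_le
    (F := fun x s => S.evolve j t s (ρ s) x) (F' := fun x s => S.evolve (j + 1) t s (ρ s) x)
    (bound := fun s => C * (timeWeight (t - s) * timeWeight s)) univ_mem
    (.of_forall fun x' => (hsing.integrableOn ht htT x').1) (hsing.integrableOn ht htT x)
    (hsing'.integrableOn ht htT x).1 ?_ ((integrableOn_timeWeight_sub_mul ht.le).const_mul C) ?_).2
  · filter_upwards [ae_restrict_mem measurableSet_Ioo] with s hs x' _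
    exact hsing'.abs_le x' hs.1 hs.2 htT
  · filter_upwards [ae_restrict_mem measurableSet_Ioo] with s hs x' _
    have hsT := hs.2.trans htT
    exact S.hasDerivAt_evolve_space j hs.2 (h.continuous_space hs.1 hsT)
      (fun y => h.abs_le y hs.1 hsT) x'

lemma evolve_zero_eq_add_setIntegral_evolveTime (h : HolderDensity T R ρ) {s t : ℝ} (hs : 0 < s)
    (hst : s < t) (htT : t < T) (x : ℝ) :
    S.evolve 0 t s (ρ s) x = ρ s x + ∫ r in Ioo s t, S.evolveTime r s (ρ s) x := by
  obtain ⟨_, hsing⟩ := S.exists_weaklySingular_evolveTime h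
  have hc := h.continuous_space hs (hst.trans htT)
  have hm := fun y => h.abs_le y hs (hst.trans htT)
  have hstart : Tendsto (fun r => S.evolve 0 r s (ρ s) x) (𝓝[>] s) (𝓝 (ρ s x)) := by
    refine (S.tendsto_evolve_zero s x hc hm).comp (tendsto_nhdsWithin_iff.mpr ⟨?_, ?_⟩)
      (f := fun r => ((r, x) : ℝ × ℝ))
    · exact ((by fun_prop : Continuous fun r : ℝ => ((r, x) : ℝ × ℝ)).tendsto s).mono_left
        nhdsWithin_le_nhds
    · filter_upwards [self_mem_nhdsWithin] with r hr
      exact ⟨hr, mem_univ _⟩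
  have hend := (S.hasDerivAt_evolve_time hst hc hm x).continuousAt.tendsto.mono_left
    (nhdsWithin_le_nhds (s := Iio t))
  have hftc := intervalIntegral.integral_eq_sub_of_hasDerivAt_of_tendsto hst
    (fun r hr => S.hasDerivAt_evolve_time hr.1 hc hm x)
    ((intervalIntegrable_iff_integrableOn_Ioo_of_le hst.le).mpr
      (hsing.integrableOn_time hs hst htT x)) hstart hend
  rw [intervalIntegral.integral_of_le hst.le, integral_Ioc_eq_integral_Ioo] at hftc
  exact (sub_eq_iff_eq_add'.mp hftc.symm)

lemma volumePotential_zero_eq_setIntegral (h : HolderDensity T R ρ) {t : ℝ} (ht : 0 < t)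
    (htT : t < T) (x : ℝ) :
    S.volumePotential 0 ρ t x = ∫ r in Ioo 0 t, (ρ r x + S.volumePotentialTime ρ r x) := by
  obtain ⟨_, hsing⟩ := S.exists_weaklySingular_evolveTime h
  obtain ⟨_, hsing₀⟩ := S.exists_weaklySingular_evolve zero_le_two h
  have hρ := h.integrableOn ht.le htT x
  have hdiff : ∀ s ∈ Ioo 0 t,
      S.evolve 0 t s (ρ s) x - ρ s x = ∫ r in Ioo s t, S.evolveTime r s (ρ s) x :=
    fun s hs => sub_eq_of_eq_add' (S.evolve_zero_eq_add_setIntegral_evolveTime h hs.1 hs.2 htT x)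
  unfold volumePotential volumePotentialTime
  rw [integral_add hρ (hsing.singularDensity_setIntegral.integrableOn ht.le htT x),
    ← setIntegral_Ioo_triangle_swap (hsing.integrableOn_triangle ht htT x),
    ← setIntegral_congr_fun measurableSet_Ioo hdiff,
    integral_sub (hsing₀.integrableOn ht htT x) hρ, add_sub_cancel]

lemma hasDerivAt_volumePotential_time (h : HolderDensity T R ρ) {t : ℝ} (ht : 0 < t)
    (htT : t < T) (x : ℝ) : HasDerivAt (fun t => S.volumePotential 0 ρ t x)
      (ρ t x + S.volumePotentialTime ρ t x) t := by
  obtain ⟨_, hsing⟩ := S.exists_weaklySingular_evolveTime h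
  have hderiv := (h.toSingularDensity.add hsing.singularDensity_setIntegral).hasDerivAt_setIntegral
    ht htT x
  refine hderiv.congr_of_eventuallyEq ?_
  filter_upwards [isOpen_Ioo.mem_nhds (⟨ht, htT⟩ : t ∈ Ioo 0 T)] with r hr
  exact S.volumePotential_zero_eq_setIntegral h hr.1 hr.2 x

end DiffusionCoeff

/-! ### Functions with continuous parabolic derivatives -/

/-- The functions `uₜ`, `uₓ`, `uₓₓ` are the derivatives `∂ₜ u`, `∂ₓ u`, `∂²ₓ u` at the times in `I`,
and they are jointly continuous there, as is `u`. -/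
structure ParabolicJetOn (u uₜ uₓ uₓₓ : ℝ → ℝ → ℝ) (I : Set ℝ) : Prop where
  continuousAt : ∀ t ∈ I, ∀ x, ContinuousAt (fun p : ℝ × ℝ => u p.1 p.2) (t, x)
  continuousAt_time : ∀ t ∈ I, ∀ x, ContinuousAt (fun p : ℝ × ℝ => uₜ p.1 p.2) (t, x)
  continuousAt_space : ∀ t ∈ I, ∀ x, ContinuousAt (fun p : ℝ × ℝ => uₓ p.1 p.2) (t, x)
  continuousAt_space_space : ∀ t ∈ I, ∀ x, ContinuousAt (fun p : ℝ × ℝ => uₓₓ p.1 p.2) (t, x)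
  hasDerivAt_time : ∀ t ∈ I, ∀ x, HasDerivAt (fun t => u t x) (uₜ t x) t
  hasDerivAt_space : ∀ t ∈ I, ∀ x, HasDerivAt (u t) (uₓ t x) x
  hasDerivAt_space_space : ∀ t ∈ I, ∀ x, HasDerivAt (uₓ t) (uₓₓ t x) x

namespace ParabolicJetOn
variable {u uₜ uₓ uₓₓ v vₜ vₓ vₓₓ : ℝ → ℝ → ℝ} {I J : Set ℝ}

lemma mono (h : ParabolicJetOn u uₜ uₓ uₓₓ I) (hJ : J ⊆ I) : ParabolicJetOn u uₜ uₓ uₓₓ J where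
  continuousAt t ht := h.continuousAt t (hJ ht)
  continuousAt_time t ht := h.continuousAt_time t (hJ ht)
  continuousAt_space t ht := h.continuousAt_space t (hJ ht)
  continuousAt_space_space t ht := h.continuousAt_space_space t (hJ ht)
  hasDerivAt_time t ht := h.hasDerivAt_time t (hJ ht)
  hasDerivAt_space t ht := h.hasDerivAt_space t (hJ ht)
  hasDerivAt_space_space t ht := h.hasDerivAt_space_space t (hJ ht)

lemma add (hu : ParabolicJetOn u uₜ uₓ uₓₓ I) (hv : ParabolicJetOn v vₜ vₓ vₓₓ I) :
    ParabolicJetOn (fun t x => u t x + v t x) (fun t x => uₜ t x + vₜ t x)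
      (fun t x => uₓ t x + vₓ t x) (fun t x => uₓₓ t x + vₓₓ t x) I where
  continuousAt t ht x := (hu.continuousAt t ht x).add (hv.continuousAt t ht x)
  continuousAt_time t ht x := (hu.continuousAt_time t ht x).add (hv.continuousAt_time t ht x)
  continuousAt_space t ht x := (hu.continuousAt_space t ht x).add (hv.continuousAt_space t ht x)
  continuousAt_space_space t ht x :=
    (hu.continuousAt_space_space t ht x).add (hv.continuousAt_space_space t ht x)
  hasDerivAt_time t ht x := (hu.hasDerivAt_time t ht x).add (hv.hasDerivAt_time t ht x)
  hasDerivAt_space t ht x := (hu.hasDerivAt_space t ht x).add (hv.hasDerivAt_space t ht x)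
  hasDerivAt_space_space t ht x :=
    (hu.hasDerivAt_space_space t ht x).add (hv.hasDerivAt_space_space t ht x)

lemma mul (hu : ParabolicJetOn u uₜ uₓ uₓₓ I) (hv : ParabolicJetOn v vₜ vₓ vₓₓ I) :
    ParabolicJetOn (fun t x => u t x * v t x) (fun t x => uₜ t x * v t x + u t x * vₜ t x)
      (fun t x => uₓ t x * v t x + u t x * vₓ t x)
      (fun t x => uₓₓ t x * v t x + 2 * uₓ t x * vₓ t x + u t x * vₓₓ t x) I where
  continuousAt t ht x := (hu.continuousAt t ht x).mul (hv.continuousAt t ht x)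
  continuousAt_time t ht x :=
    ((hu.continuousAt_time t ht x).mul (hv.continuousAt t ht x)).add
      ((hu.continuousAt t ht x).mul (hv.continuousAt_time t ht x))
  continuousAt_space t ht x :=
    ((hu.continuousAt_space t ht x).mul (hv.continuousAt t ht x)).add
      ((hu.continuousAt t ht x).mul (hv.continuousAt_space t ht x))
  continuousAt_space_space t ht x :=
    (((hu.continuousAt_space_space t ht x).mul (hv.continuousAt t ht x)).add
      ((continuousAt_const.mul (hu.continuousAt_space t ht x)).mul
        (hv.continuousAt_space t ht x))).add
      ((hu.continuousAt t ht x).mul (hv.continuousAt_space_space t ht x))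
  hasDerivAt_time t ht x := (hu.hasDerivAt_time t ht x).mul (hv.hasDerivAt_time t ht x)
  hasDerivAt_space t ht x := (hu.hasDerivAt_space t ht x).mul (hv.hasDerivAt_space t ht x)
  hasDerivAt_space_space t ht x := by
    refine (((hu.hasDerivAt_space_space t ht x).mul (hv.hasDerivAt_space t ht x)).add
      ((hu.hasDerivAt_space t ht x).mul (hv.hasDerivAt_space_space t ht x))).congr_deriv ?_
    ring

lemma congr (h : ParabolicJetOn u uₜ uₓ uₓₓ I) (hI : IsOpen I) (heq : ∀ t ∈ I, v t = u t) :
    ParabolicJetOn v uₜ uₓ uₓₓ I where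
  continuousAt t ht x := (h.continuousAt t ht x).congr <| by
    filter_upwards [(hI.preimage continuous_fst).mem_nhds (show (t, x).1 ∈ I from ht)] with p hp
    exact (congrFun (heq p.1 hp) p.2).symm
  continuousAt_time := h.continuousAt_time
  continuousAt_space := h.continuousAt_space
  continuousAt_space_space := h.continuousAt_space_space
  hasDerivAt_time t ht x := (h.hasDerivAt_time t ht x).congr_of_eventuallyEq <| by
    filter_upwards [hI.mem_nhds ht] with r hr using congrFun (heq r hr) x
  hasDerivAt_space t ht := heq t ht ▸ h.hasDerivAt_space t ht
  hasDerivAt_space_space := h.hasDerivAt_space_space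

lemma deriv_time (h : ParabolicJetOn u uₜ uₓ uₓₓ I) {t : ℝ} (ht : t ∈ I) (x : ℝ) :
    deriv (fun t => u t x) t = uₜ t x :=
  (h.hasDerivAt_time t ht x).deriv

lemma deriv_space (h : ParabolicJetOn u uₜ uₓ uₓₓ I) {t : ℝ} (ht : t ∈ I) : deriv (u t) = uₓ t :=
  funext fun x => (h.hasDerivAt_space t ht x).deriv

lemma deriv_space_space (h : ParabolicJetOn u uₜ uₓ uₓₓ I) {t : ℝ} (ht : t ∈ I) :
    deriv (deriv (u t)) = uₓₓ t := by
  rw [h.deriv_space ht]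
  exact funext fun x => (h.hasDerivAt_space_space t ht x).deriv

lemma contDiff_space (h : ParabolicJetOn u uₜ uₓ uₓₓ I) {t : ℝ} (ht : t ∈ I) :
    ContDiff ℝ 2 (u t) := by
  have hcont : Continuous (uₓₓ t) := continuous_iff_continuousAt.mpr fun x =>
    ContinuousAt.comp (f := fun x : ℝ => (t, x)) (h.continuousAt_space_space t ht x) (by fun_prop)
  have hderiv : ContDiff ℝ 1 (uₓ t) := by
    rw [contDiff_one_iff_deriv, ← h.deriv_space ht, h.deriv_space_space ht, h.deriv_space ht]
    exact ⟨fun x => (h.hasDerivAt_space_space t ht x).differentiableAt, hcont⟩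
  rw [← one_add_one_eq_two, contDiff_succ_iff_deriv, h.deriv_space ht]
  exact ⟨fun x => (h.hasDerivAt_space t ht x).differentiableAt, by simp, hderiv⟩

lemma c12On (h : ParabolicJetOn u uₜ uₓ uₓₓ I) : C12On u I := by
  refine ⟨fun p hp => (h.continuousAt p.1 hp.1 p.2).continuousWithinAt,
    fun x t ht => (h.hasDerivAt_time t ht x).differentiableAt, fun t ht => h.contDiff_space ht,
    fun p hp => ?_, fun p hp => ?_, fun p hp => ?_⟩
  · exact (h.continuousAt_time p.1 hp.1 p.2).continuousWithinAt.congr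
      (fun q hq => h.deriv_time hq.1 q.2) (h.deriv_time hp.1 p.2)
  · exact (h.continuousAt_space p.1 hp.1 p.2).continuousWithinAt.congr
      (fun q hq => congrFun (h.deriv_space hq.1) q.2) (congrFun (h.deriv_space hp.1) p.2)
  · exact (h.continuousAt_space_space p.1 hp.1 p.2).continuousWithinAt.congr
      (fun q hq => congrFun (h.deriv_space_space hq.1) q.2)
      (congrFun (h.deriv_space_space hp.1) p.2)

lemma hasDerivAt_comp (h : ParabolicJetOn u uₜ uₓ uₓₓ I) (hI : IsOpen I) {r y : ℝ → ℝ}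
    {r' y' s : ℝ} (hr : HasDerivAt r r' s) (hy : HasDerivAt y y' s) (hs : r s ∈ I) :
    HasDerivAt (fun s => u (r s) (y s)) (uₜ (r s) (y s) * r' + uₓ (r s) (y s) * y') s := by
  have hnear : ∀ᶠ p : ℝ × ℝ in 𝓝 (r s, y s), p.1 ∈ I :=
    (hI.preimage continuous_fst).mem_nhds hs
  have hspan {g : ℝ → ℝ → ℝ} (hg : ContinuousAt (fun p : ℝ × ℝ => g p.1 p.2) (r s, y s)) :
      ContinuousAt (fun p : ℝ × ℝ => ContinuousLinearMap.toSpanSingleton ℝ (g p.1 p.2))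
        (r s, y s) :=
    (ContinuousLinearMap.toSpanSingletonCLE (𝕜 := ℝ) (E := ℝ)).continuous.continuousAt.comp hg
  have hstrict := hasStrictFDerivAt_uncurry_coprod (𝕜 := ℝ) (u := (r s, y s)) (f := u)
    (f₁ := fun t x => ContinuousLinearMap.toSpanSingleton ℝ (uₜ t x))
    (f₂ := fun t x => ContinuousLinearMap.toSpanSingleton ℝ (uₓ t x))
    (hnear.mono fun p hp => (h.hasDerivAt_time p.1 hp p.2).hasFDerivAt)
    (hnear.mono fun p hp => (h.hasDerivAt_space p.1 hp p.2).hasFDerivAt)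
    (hspan (h.continuousAt_time _ hs _)) (hspan (h.continuousAt_space _ hs _))
  refine (hstrict.hasFDerivAt.comp_hasDerivAt s (hr.prodMk hy)).congr_deriv ?_
  simp [Function.HasUncurry.uncurry, mul_comm]

end ParabolicJetOn

/-! ### The Cauchy problem with a bounded datum -/

namespace DiffusionCoeff
variable (S : DiffusionCoeff) {T R m : ℝ} {ρ : ℝ → ℝ → ℝ} {φ : ℝ → ℝ}

/-- The parametrix evolution of the initial datum `φ`. The case distinction is there because the
kernel degenerates at time zero. -/
noncomputable def initialPotential (φ : ℝ → ℝ) (t x : ℝ) : ℝ :=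
  if 0 < t then S.evolve 0 t 0 φ x else φ x

lemma initialPotential_of_pos {t : ℝ} (ht : 0 < t) :
    S.initialPotential φ t = S.evolve 0 t 0 φ := by
  ext x
  exact if_pos ht

lemma initialPotential_zero : S.initialPotential φ 0 = φ := by
  ext x
  exact if_neg (lt_irrefl 0)

lemma exists_abs_initialPotential_le (hm : ∀ y, |φ y| ≤ m) :
    ∃ M, ∀ t x, 0 ≤ t → |S.initialPotential φ t x| ≤ M := by
  obtain ⟨C, -, hbd⟩ := S.exists_abs_evolve_le_of_bounded 0
  refine ⟨max (C * m) m, fun t x ht => ?_⟩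
  rcases ht.eq_or_lt with rfl | ht
  · rw [initialPotential_zero]
    exact (hm x).trans (le_max_right _ _)
  · rw [initialPotential_of_pos _ ht]
    refine (hbd t 0 x m φ ht hm).trans ?_
    rw [pow_zero, div_one]
    exact le_max_left _ _

lemma parabolicJetOn_initialPotential (hφ : Continuous φ) (hm : ∀ y, |φ y| ≤ m) :
    ParabolicJetOn (S.initialPotential φ) (fun t => S.evolveTime t 0 φ)
      (fun t => S.evolve 1 t 0 φ) (fun t => S.evolve 2 t 0 φ) (Ioi 0) := by
  have hcont (j : ℕ) (t : ℝ) (ht : t ∈ Ioi 0) (x : ℝ) :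
      ContinuousAt (fun p : ℝ × ℝ => S.evolve j p.1 0 φ p.2) (t, x) :=
    S.continuousAt_evolve j continuousAt_fst continuousAt_const continuousAt_snd ht
      (.of_forall fun _ => hm) (.of_forall fun _ => hφ) fun _ => continuousAt_const
  have hjet : ParabolicJetOn (fun t => S.evolve 0 t 0 φ) (fun t => S.evolveTime t 0 φ)
      (fun t => S.evolve 1 t 0 φ) (fun t => S.evolve 2 t 0 φ) (Ioi 0) :=
    { continuousAt := hcont 0
      continuousAt_time := fun t ht x =>
        S.continuousAt_evolveTime continuousAt_fst continuousAt_const continuousAt_snd ht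
          (.of_forall fun _ => hm) (.of_forall fun _ => hφ) fun _ => continuousAt_const
      continuousAt_space := hcont 1
      continuousAt_space_space := hcont 2
      hasDerivAt_time := fun t ht x => S.hasDerivAt_evolve_time ht hφ hm x
      hasDerivAt_space := fun t ht x => S.hasDerivAt_evolve_space 0 ht hφ hm x
      hasDerivAt_space_space := fun t ht x => S.hasDerivAt_evolve_space 1 ht hφ hm x }
  exact hjet.congr isOpen_Ioi fun t ht => S.initialPotential_of_pos ht

lemma continuousOn_initialPotential (hφ : Continuous φ) (hm : ∀ y, |φ y| ≤ m) :
    ContinuousOn (fun p : ℝ × ℝ => S.initialPotential φ p.1 p.2) (Ici 0 ×ˢ univ) := by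
  rintro ⟨t, x⟩ ⟨ht, -⟩
  rcases (mem_Ici.mp ht).eq_or_lt with rfl | ht
  · rw [← Ioi_union_left, union_prod]
    refine ContinuousWithinAt.union ?_ ?_
    · change Tendsto _ _ (𝓝 (S.initialPotential φ 0 x))
      rw [initialPotential_zero]
      refine (S.tendsto_evolve_zero 0 x hφ hm).congr' ?_
      filter_upwards [self_mem_nhdsWithin] with p hp
      rw [initialPotential_of_pos _ hp.1]
    · refine (hφ.comp continuous_snd).continuousWithinAt.congr ?_ ?_
      · rintro ⟨_, y⟩ ⟨rfl, -⟩
        exact congrFun S.initialPotential_zero y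
      · exact congrFun S.initialPotential_zero x
  · exact ((S.parabolicJetOn_initialPotential hφ hm).continuousAt t ht x).continuousWithinAt

lemma volumePotential_nonpos (j : ℕ) {t : ℝ} (ht : t ≤ 0) (x : ℝ) :
    S.volumePotential j ρ t x = 0 := by
  simp [volumePotential, Ioo_eq_empty_of_le ht]

lemma exists_abs_volumePotential_le (h : HolderDensity T R ρ) :
    ∃ C, 0 ≤ C ∧ ∀ t x, t < T → |S.volumePotential 0 ρ t x| ≤ C * √√t := by
  obtain ⟨C, hC, hbd⟩ := S.exists_abs_evolve_le_of_bounded 0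
  have hR := h.nonneg
  have hweight : 0 ≤ ∫ θ in Ioo (0 : ℝ) 1, timeWeight θ :=
    setIntegral_nonneg measurableSet_Ioo fun θ hθ => timeWeight_nonneg hθ.1.le
  refine ⟨C * R * ∫ θ in Ioo (0 : ℝ) 1, timeWeight θ, by positivity, fun t x htT => ?_⟩
  rcases le_or_gt t 0 with ht | ht
  · rw [volumePotential_nonpos _ _ ht, abs_zero]
    positivity
  have hpoint : ∀ s ∈ Ioo 0 t, ‖S.evolve 0 t s (ρ s) x‖ ≤ C * R * timeWeight s := fun s hs => by
    refine (hbd t s x _ _ hs.2 fun y => h.abs_le y hs.1 (hs.2.trans htT)).trans_eq ?_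
    rw [pow_zero, div_one, mul_assoc]
  calc |S.volumePotential 0 ρ t x| ≤ ∫ s in Ioo 0 t, C * R * timeWeight s :=
        norm_integral_le_of_norm_le (f := fun s => S.evolve 0 t s (ρ s) x)
          ((integrableOn_timeWeight ht.le).const_mul _)
          (ae_restrict_of_forall_mem measurableSet_Ioo hpoint)
    _ = C * R * (∫ θ in Ioo (0 : ℝ) 1, timeWeight θ) * √√t := by
        rw [integral_const_mul, setIntegral_timeWeight ht, mul_timeWeight ht]
        ring

lemma parabolicJetOn_volumePotential (h : HolderDensity T R ρ) :
    ParabolicJetOn (S.volumePotential 0 ρ) (fun t x => ρ t x + S.volumePotentialTime ρ t x)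
      (S.volumePotential 1 ρ) (S.volumePotential 2 ρ) (Ioo 0 T) := by
  have hcont {j : ℕ} (hj : j ≤ 2) (t : ℝ) (ht : t ∈ Ioo 0 T) (x : ℝ) :
      ContinuousAt (fun p : ℝ × ℝ => S.volumePotential j ρ p.1 p.2) (t, x) :=
    let ⟨_, hsing⟩ := S.exists_weaklySingular_evolve hj h
    hsing.continuousAt_setIntegral ht.1 ht.2 x
  obtain ⟨_, hsing⟩ := S.exists_weaklySingular_evolveTime h
  exact
    { continuousAt := hcont zero_le_two
      continuousAt_time := fun t ht x =>
        (h.continuousAt x ht.1 ht.2).add (hsing.continuousAt_setIntegral ht.1 ht.2 x)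
      continuousAt_space := hcont one_le_two
      continuousAt_space_space := hcont le_rfl
      hasDerivAt_time := fun t ht x => S.hasDerivAt_volumePotential_time h ht.1 ht.2 x
      hasDerivAt_space := fun t ht x =>
        S.hasDerivAt_volumePotential_space zero_le_one h ht.1 ht.2 x
      hasDerivAt_space_space := fun t ht x =>
        S.hasDerivAt_volumePotential_space le_rfl h ht.1 ht.2 x }

lemma continuousOn_volumePotential (h : HolderDensity T R ρ) :
    ContinuousOn (fun p : ℝ × ℝ => S.volumePotential 0 ρ p.1 p.2) (Ico 0 T ×ˢ univ) := by
  obtain ⟨C, -, hbd⟩ := S.exists_abs_volumePotential_le h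
  rintro ⟨t, x⟩ ⟨ht, -⟩
  obtain ⟨ht, htT⟩ : 0 ≤ t ∧ t < T := ht
  rcases ht.eq_or_lt with rfl | ht
  · have hlim : Tendsto (fun p : ℝ × ℝ => C * √√p.1) (𝓝[Ico 0 T ×ˢ univ] (0, x)) (𝓝 0) := by
      have hcont := (by fun_prop : Continuous fun p : ℝ × ℝ => C * √√p.1).tendsto (0, x)
      rw [Real.sqrt_zero, Real.sqrt_zero, mul_zero] at hcont
      exact hcont.mono_left nhdsWithin_le_nhds
    change Tendsto _ _ (𝓝 (S.volumePotential 0 ρ 0 x))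
    rw [volumePotential_nonpos _ _ le_rfl]
    refine squeeze_zero_norm' ?_ hlim
    filter_upwards [self_mem_nhdsWithin] with p hp using hbd p.1 p.2 hp.1.2
  · exact ((S.parabolicJetOn_volumePotential h).continuousAt t ⟨ht, htT⟩ x).continuousWithinAt

end DiffusionCoeff

namespace ParabolicOperator
variable (S : ParabolicOperator) {T R m : ℝ} {ρ : ℝ → ℝ → ℝ} {φ : ℝ → ℝ}

/-- A classical solution, with its derivatives, of the Cauchy problem for
`∂ₜ u = (1/2) a ∂²ₓ u + b ∂ₓ u + c u` on `[0, T) × ℝ` with initial datum `φ`. -/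
structure IsClassicalSolution (T : ℝ) (φ : ℝ → ℝ) (u uₜ uₓ uₓₓ : ℝ → ℝ → ℝ) : Prop extends
    ParabolicJetOn u uₜ uₓ uₓₓ (Ioo 0 T) where
  initial : u 0 = φ
  continuousOn : ContinuousOn (fun p : ℝ × ℝ => u p.1 p.2) (Ico 0 T ×ˢ univ)
  time_eq : ∀ t ∈ Ioo 0 T, ∀ x,
    uₜ t x = 1 / 2 * S.a t x * uₓₓ t x + S.b t x * uₓ t x + S.c t x * u t x

lemma parametrixError_eq {t s : ℝ} {ψ : ℝ → ℝ} (hst : s < t) (hc : Continuous ψ)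
    (hm : ∀ y, |ψ y| ≤ m) (x : ℝ) : S.parametrixError t s ψ x =
      1 / 2 * S.a t x * S.evolve 2 t s ψ x + S.b t x * S.evolve 1 t s ψ x +
        S.c t x * S.evolve 0 t s ψ x - S.evolveTime t s ψ x := by
  rw [S.evolveTime_eq hst hc hm x]
  unfold parametrixError
  ring

lemma setIntegral_parametrixError_eq (h : HolderDensity T R ρ) {t : ℝ} (ht : t ∈ Ioo 0 T)
    (x : ℝ) : ∫ s in Ioo 0 t, S.parametrixError t s (ρ s) x =
      1 / 2 * S.a t x * S.volumePotential 2 ρ t x + S.b t x * S.volumePotential 1 ρ t x +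
        S.c t x * S.volumePotential 0 ρ t x - S.volumePotentialTime ρ t x := by
  have hint {j : ℕ} (hj : j ≤ 2) (k : ℝ) :
      IntegrableOn (fun s => k * S.evolve j t s (ρ s) x) (Ioo 0 t) :=
    let ⟨_, hsing⟩ := S.exists_weaklySingular_evolve hj h
    (hsing.integrableOn ht.1 ht.2 x).const_mul k
  obtain ⟨_, hsing⟩ := S.exists_weaklySingular_evolveTime h
  have heq : ∀ s ∈ Ioo 0 t, S.parametrixError t s (ρ s) x =
      1 / 2 * S.a t x * S.evolve 2 t s (ρ s) x + S.b t x * S.evolve 1 t s (ρ s) x +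
        S.c t x * S.evolve 0 t s (ρ s) x - S.evolveTime t s (ρ s) x := fun s hs =>
    have hsT := hs.2.trans ht.2
    S.parametrixError_eq hs.2 (h.continuous_space hs.1 hsT) (fun y => h.abs_le y hs.1 hsT) x
  have h₂₁ : IntegrableOn (fun s => 1 / 2 * S.a t x * S.evolve 2 t s (ρ s) x +
      S.b t x * S.evolve 1 t s (ρ s) x) (Ioo 0 t) := (hint le_rfl _).add (hint one_le_two _)
  have h₂₁₀ : IntegrableOn (fun s => 1 / 2 * S.a t x * S.evolve 2 t s (ρ s) x +
      S.b t x * S.evolve 1 t s (ρ s) x + S.c t x * S.evolve 0 t s (ρ s) x) (Ioo 0 t) :=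
    h₂₁.add (hint zero_le_two _)
  rw [setIntegral_congr_fun measurableSet_Ioo heq,
    integral_sub h₂₁₀ (hsing.integrableOn ht.1 ht.2 x), integral_add h₂₁ (hint zero_le_two _),
    integral_add (hint le_rfl _) (hint one_le_two _)]
  simp only [integral_const_mul]
  rfl

lemma isClassicalSolution_of_eq_volterraMap (hφ : Continuous φ) (hm : ∀ y, |φ y| ≤ m)
    (h : HolderDensity T R ρ) (heq : ∀ t x, 0 < t → t < T → ρ t x = S.volterraMap φ ρ t x) :
    S.IsClassicalSolution T φ (fun t x => S.initialPotential φ t x + S.volumePotential 0 ρ t x)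
      (fun t x => S.evolveTime t 0 φ x + (ρ t x + S.volumePotentialTime ρ t x))
      (fun t x => S.evolve 1 t 0 φ x + S.volumePotential 1 ρ t x)
      (fun t x => S.evolve 2 t 0 φ x + S.volumePotential 2 ρ t x) where
  toParabolicJetOn := ((S.parabolicJetOn_initialPotential hφ hm).mono Ioo_subset_Ioi_self).add
    (S.parabolicJetOn_volumePotential h)
  initial := by
    ext x
    rw [S.initialPotential_zero, S.volumePotential_nonpos 0 le_rfl, add_zero]
  continuousOn := ((S.continuousOn_initialPotential hφ hm).mono
    (prod_mono Ico_subset_Ici_self subset_rfl)).add (S.continuousOn_volumePotential h)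
  time_eq t ht x := by
    rw [heq t x ht.1 ht.2, S.initialPotential_of_pos ht.1]
    unfold volterraMap
    rw [S.setIntegral_parametrixError_eq h ht, S.parametrixError_eq ht.1 hφ hm]
    ring

theorem exists_isClassicalSolution (T : ℝ) (hφ : Continuous φ) (hm : ∀ y, |φ y| ≤ m) :
    ∃ u uₜ uₓ uₓₓ M, S.IsClassicalSolution T φ u uₜ uₓ uₓₓ ∧
      ∀ t ∈ Ico 0 T, ∀ x, |u t x| ≤ M := by
  obtain ⟨_, ρ, hρ, heq⟩ := S.exists_holderDensity_eq_volterraMap T hφ hm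
  obtain ⟨M, hM⟩ := S.exists_abs_initialPotential_le hm
  obtain ⟨C, hC, hbd⟩ := S.exists_abs_volumePotential_le hρ
  refine ⟨_, _, _, _, M + C * √√T, S.isClassicalSolution_of_eq_volterraMap hφ hm hρ heq,
    fun t ht x => (abs_add_le _ _).trans (add_le_add (hM t x ht.1) ?_)⟩
  have htT := ht.2.le
  exact (hbd t x ht.2).trans (by gcongr)

end ParabolicOperator

/-! ### The Cauchy problem with a datum of exponential growth -/

lemma hasDerivAt_tanh (x : ℝ) : HasDerivAt tanh (1 - tanh x ^ 2) x := by
  have hne := (Real.cosh_pos x).ne'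
  rw [funext Real.tanh_eq_sinh_div_cosh]
  refine ((Real.hasDerivAt_sinh x).div (Real.hasDerivAt_cosh x) hne).congr_deriv ?_
  field_simp

lemma lipschitzWith_tanh : LipschitzWith 1 tanh := by
  refine lipschitzWith_of_nnnorm_deriv_le (fun x => (hasDerivAt_tanh x).differentiableAt)
    fun x => ?_
  have hlt := Real.tanh_sq_lt_one x
  rw [(hasDerivAt_tanh x).deriv, ← NNReal.coe_le_coe, coe_nnnorm, Real.norm_eq_abs,
    abs_of_pos (sub_pos.mpr hlt), NNReal.coe_one]
  exact sub_le_self _ (sq_nonneg _)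

/-- The regularity asked of the coefficients of a `ParabolicOperator`: `f t x` is continuous,
bounded, and Lipschitz in `x` uniformly in `t`. -/
structure BoundedLipschitz (f : ℝ → ℝ → ℝ) : Prop where
  continuous : Continuous fun p : ℝ × ℝ => f p.1 p.2
  bounded : ∃ M, ∀ t x, |f t x| ≤ M
  lipschitz : ∃ L : ℝ≥0, ∀ t, LipschitzWith L (f t)

namespace BoundedLipschitz
variable {f g : ℝ → ℝ → ℝ}

lemma add (hf : BoundedLipschitz f) (hg : BoundedLipschitz g) :
    BoundedLipschitz fun t x => f t x + g t x where
  continuous := hf.continuous.add hg.continuous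
  bounded :=
    let ⟨M, hM⟩ := hf.bounded
    let ⟨N, hN⟩ := hg.bounded
    ⟨M + N, fun t x => (abs_add_le _ _).trans (add_le_add (hM t x) (hN t x))⟩
  lipschitz :=
    let ⟨K, hK⟩ := hf.lipschitz
    let ⟨L, hL⟩ := hg.lipschitz
    ⟨K + L, fun t => (hK t).add (hL t)⟩

lemma mul (hf : BoundedLipschitz f) (hg : BoundedLipschitz g) :
    BoundedLipschitz fun t x => f t x * g t x := by
  obtain ⟨M, hM⟩ := hf.bounded
  obtain ⟨N, hN⟩ := hg.bounded
  obtain ⟨K, hK⟩ := hf.lipschitz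
  obtain ⟨L, hL⟩ := hg.lipschitz
  have hM0 : 0 ≤ M := (abs_nonneg _).trans (hM 0 0)
  refine ⟨hf.continuous.mul hg.continuous, ⟨M * N, fun t x => ?_⟩, (K * N + M * L).toNNReal,
    fun t => .of_dist_le' fun x y => ?_⟩
  · rw [abs_mul]
    exact mul_le_mul (hM t x) (hN t x) (abs_nonneg _) hM0
  · calc dist (f t x * g t x) (f t y * g t y)
        = |(f t x - f t y) * g t x + f t y * (g t x - g t y)| := by
          rw [Real.dist_eq]
          ring_nf
      _ ≤ |f t x - f t y| * |g t x| + |f t y| * |g t x - g t y| := by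
          rw [← abs_mul, ← abs_mul]
          exact abs_add_le _ _
      _ ≤ K * dist x y * N + M * (L * dist x y) := by
          gcongr
          exacts [(hK t).dist_le_mul x y, hN t x, hM t y, (hL t).dist_le_mul x y]
      _ = (K * N + M * L) * dist x y := by ring

lemma of_time {g : ℝ → ℝ} (hg : Continuous g) {M : ℝ} (hM : ∀ t, |g t| ≤ M) :
    BoundedLipschitz fun t _ => g t where
  continuous := hg.comp continuous_fst
  bounded := ⟨M, fun t _ => hM t⟩
  lipschitz := ⟨0, fun _ => LipschitzWith.const _⟩

lemma const (r : ℝ) : BoundedLipschitz fun _ _ => r :=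
  of_time continuous_const fun _ => le_rfl

lemma tanh_const_mul (k : ℝ) : BoundedLipschitz fun _ x => tanh (k * x) where
  continuous := lipschitzWith_tanh.continuous.comp (by fun_prop)
  bounded := ⟨1, fun _ x => (Real.abs_tanh_lt_one _).le⟩
  lipschitz := ⟨‖k‖₊, fun _ => .of_dist_le_mul fun x y => by
    refine (lipschitzWith_tanh.dist_le_mul _ _).trans_eq ?_
    rw [NNReal.coe_one, one_mul, Real.dist_eq, Real.dist_eq, ← mul_sub, abs_mul]
    rfl⟩

lemma comp_affine (hf : BoundedLipschitz f) {θ m n : ℝ → ℝ} (hθ : Continuous θ)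
    (hm : Continuous m) (hn : Continuous n) {M : ℝ} (hM : ∀ t, |m t| ≤ M) :
    BoundedLipschitz fun t x => f (θ t) (m t * x + n t) where
  continuous := hf.continuous.comp (g := fun p : ℝ × ℝ => f p.1 p.2)
    (f := fun p : ℝ × ℝ => (θ p.1, m p.1 * p.2 + n p.1)) (by fun_prop)
  bounded := let ⟨N, hN⟩ := hf.bounded; ⟨N, fun t x => hN _ _⟩
  lipschitz := by
    obtain ⟨L, hL⟩ := hf.lipschitz
    refine ⟨(L * M).toNNReal, fun t => .of_dist_le' fun x y => ?_⟩
    refine ((hL (θ t)).dist_le_mul _ _).trans ?_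
    rw [dist_add_right, Real.dist_eq, ← mul_sub, abs_mul, mul_assoc, Real.dist_eq]
    gcongr
    exact hM t

lemma exists_parabolicOperator {a b c : ℝ → ℝ → ℝ} {lam : ℝ} (ha : BoundedLipschitz a)
    (hb : BoundedLipschitz b) (hc : BoundedLipschitz c) (hlam : 0 < lam)
    (hle : ∀ t x, lam ≤ a t x) : ∃ S : ParabolicOperator, S.a = a ∧ S.b = b ∧ S.c = c := by
  obtain ⟨Ma, hMa⟩ := ha.bounded
  obtain ⟨Mb, hMb⟩ := hb.bounded
  obtain ⟨Mc, hMc⟩ := hc.bounded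
  obtain ⟨La, hLa⟩ := ha.lipschitz
  obtain ⟨Lb, hLb⟩ := hb.lipschitz
  obtain ⟨Lc, hLc⟩ := hc.lipschitz
  have hlip {g : ℝ → ℝ → ℝ} {K : ℝ≥0} (hK : ∀ t, LipschitzWith K (g t))
      (hKL : K ≤ max La (max Lb Lc)) (t x y : ℝ) :
      |g t x - g t y| ≤ (max La (max Lb Lc) : ℝ≥0) * |x - y| :=
    ((hK t).weaken hKL).dist_le_mul x y
  exact ⟨{
    a := a
    b := b
    c := c
    lam := lam
    Lam := max Ma (max Mb Mc)
    L := (max La (max Lb Lc) : ℝ≥0)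
    lam_pos := hlam
    continuous_a := ha.continuous
    continuous_b := hb.continuous
    continuous_c := hc.continuous
    lam_le_a := hle
    a_le_Lam := fun t x => ((le_abs_self _).trans (hMa t x)).trans (by simp)
    abs_b_le := fun t x => (hMb t x).trans (by simp)
    abs_c_le := fun t x => (hMc t x).trans (by simp)
    a_lip := hlip hLa (by simp)
    b_lip := hlip hLb (by simp)
    c_lip := hlip hLc (by simp) }, rfl, rfl, rfl⟩

end BoundedLipschitz

lemma parabolicJetOn_cosh_mul (k : ℝ) : ParabolicJetOn (fun _ x => cosh (k * x)) (fun _ _ => 0)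
    (fun _ x => k * sinh (k * x)) (fun _ x => k ^ 2 * cosh (k * x)) univ where
  continuousAt _ _ _ := by fun_prop
  continuousAt_time _ _ _ := by fun_prop
  continuousAt_space _ _ _ := by fun_prop
  continuousAt_space_space _ _ _ := by fun_prop
  hasDerivAt_time _ _ _ := hasDerivAt_const _ _
  hasDerivAt_space _ _ x :=
    ((hasDerivAt_id x).const_mul k).cosh.congr_deriv (by simp only [id, mul_one, mul_comm])
  hasDerivAt_space_space _ _ x :=
    (((hasDerivAt_id x).const_mul k).sinh.const_mul k).congr_deriv (by simp only [id]; ring)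

namespace ParabolicOperator
variable (S : ParabolicOperator) {k C : ℝ} {φ : ℝ → ℝ}

lemma boundedLipschitz_a : BoundedLipschitz S.a where
  continuous := S.continuous_a
  bounded := ⟨S.Lam, S.abs_a_le⟩
  lipschitz := ⟨S.L.toNNReal, fun t => .of_dist_le' (S.a_lip t)⟩

lemma boundedLipschitz_b : BoundedLipschitz S.b where
  continuous := S.continuous_b
  bounded := ⟨S.Lam, S.abs_b_le⟩
  lipschitz := ⟨S.L.toNNReal, fun t => .of_dist_le' (S.b_lip t)⟩

lemma boundedLipschitz_c : BoundedLipschitz S.c where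
  continuous := S.continuous_c
  bounded := ⟨S.Lam, S.abs_c_le⟩
  lipschitz := ⟨S.L.toNNReal, fun t => .of_dist_le' (S.c_lip t)⟩

lemma exists_coshConjugate (k : ℝ) : ∃ S' : ParabolicOperator, S'.a = S.a ∧
    (S'.b = fun t x => S.b t x + k * S.a t x * tanh (k * x)) ∧
    S'.c = fun t x => S.c t x + 1 / 2 * k ^ 2 * S.a t x + k * S.b t x * tanh (k * x) :=
  have htanh := BoundedLipschitz.tanh_const_mul k
  have hk := BoundedLipschitz.const k
  S.boundedLipschitz_a.exists_parabolicOperator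
    (S.boundedLipschitz_b.add ((hk.mul S.boundedLipschitz_a).mul htanh))
    ((S.boundedLipschitz_c.add ((BoundedLipschitz.const _).mul S.boundedLipschitz_a)).add
      ((hk.mul S.boundedLipschitz_b).mul htanh)) S.lam_pos S.lam_le_a

/-- Conjugating by `cosh (k * x)` keeps the coefficients bounded, and reduces a datum of exponential
growth to a bounded one. -/
theorem exists_isClassicalSolution_of_abs_le_cosh (T : ℝ) (hφ : Continuous φ)
    (hC : ∀ x, |φ x| ≤ C * cosh (k * x)) : ∃ u uₜ uₓ uₓₓ M, S.IsClassicalSolution T φ u uₜ uₓ uₓₓ ∧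
      ∀ t ∈ Ico 0 T, ∀ x, |u t x| ≤ M * cosh (k * x) := by
  have hpos (x : ℝ) : 0 < cosh (k * x) := Real.cosh_pos _
  obtain ⟨S', ha, hb, hc⟩ := S.exists_coshConjugate k
  obtain ⟨u, uₜ, uₓ, uₓₓ, M, hu, hM⟩ := S'.exists_isClassicalSolution (m := C)
    (φ := fun x => φ x / cosh (k * x)) T (hφ.div (by fun_prop) fun x => (hpos x).ne') fun x => by
      rw [abs_div, abs_of_pos (hpos x)]
      exact (div_le_iff₀ (hpos x)).mpr (hC x)
  refine ⟨fun t x => cosh (k * x) * u t x, _, _, _, M,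
    { toParabolicJetOn := ((parabolicJetOn_cosh_mul k).mono (subset_univ _)).mul hu.toParabolicJetOn
      initial := ?_
      continuousOn := (by fun_prop : Continuous fun p : ℝ × ℝ => cosh (k * p.2)).continuousOn.mul
        hu.continuousOn
      time_eq := fun t ht x => ?_ }, fun t ht x => ?_⟩
  · ext x
    rw [hu.initial, mul_div_cancel₀ _ (hpos x).ne']
  · have hne := (hpos x).ne'
    simp only [hu.time_eq t ht x, ha, hb, hc, Real.tanh_eq_sinh_div_cosh]
    field_simp
    ring
  · rw [abs_mul, abs_of_pos (hpos x), mul_comm]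
    exact mul_le_mul_of_nonneg_right (hM t ht x) (hpos x).le

end ParabolicOperator

/-! ### Reduction of the pricing equation -/

namespace ParabolicJetOn
variable {u uₜ uₓ uₓₓ : ℝ → ℝ → ℝ} {I : Set ℝ} {e e' d d' p p' : ℝ → ℝ}

lemma comp_timeReversal_affine (h : ParabolicJetOn u uₜ uₓ uₓₓ I) (hI : IsOpen I) (τ : ℝ)
    (he : ∀ t, HasDerivAt e (e' t) t) (he' : Continuous e') (hd : ∀ t, HasDerivAt d (d' t) t)
    (hd' : Continuous d') :
    ParabolicJetOn (fun t x => u (τ - t) (e t * x + d t))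
      (fun t x => uₓ (τ - t) (e t * x + d t) * (e' t * x + d' t) - uₜ (τ - t) (e t * x + d t))
      (fun t x => e t * uₓ (τ - t) (e t * x + d t))
      (fun t x => e t ^ 2 * uₓₓ (τ - t) (e t * x + d t)) {t | τ - t ∈ I} := by
  have hec : Continuous e := continuous_iff_continuousAt.mpr fun t => (he t).continuousAt
  have hdc : Continuous d := continuous_iff_continuousAt.mpr fun t => (hd t).continuousAt
  have hmap : Continuous fun q : ℝ × ℝ => (τ - q.1, e q.1 * q.2 + d q.1) := by fun_prop
  have hcomp {v : ℝ → ℝ → ℝ} {t x : ℝ}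
      (hv : ContinuousAt (fun q : ℝ × ℝ => v q.1 q.2) (τ - t, e t * x + d t)) :
      ContinuousAt (fun q : ℝ × ℝ => v (τ - q.1) (e q.1 * q.2 + d q.1)) (t, x) :=
    ContinuousAt.comp (f := fun q : ℝ × ℝ => (τ - q.1, e q.1 * q.2 + d q.1)) (x := (t, x)) hv
      hmap.continuousAt
  have hcont {g : ℝ × ℝ → ℝ} (hg : Continuous g) (q : ℝ × ℝ) : ContinuousAt g q := hg.continuousAt
  have haffine (t x : ℝ) : HasDerivAt (fun x => e t * x + d t) (e t) x := by
    simpa using ((hasDerivAt_id x).const_mul (e t)).add_const (d t)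
  exact
    { continuousAt := fun t ht x => hcomp (h.continuousAt _ ht _)
      continuousAt_time := fun t ht x =>
        ((hcomp (h.continuousAt_space _ ht _)).mul (hcont (by fun_prop) _)).sub
          (hcomp (h.continuousAt_time _ ht _))
      continuousAt_space := fun t ht x =>
        (hcont (by fun_prop) _).mul (hcomp (h.continuousAt_space _ ht _))
      continuousAt_space_space := fun t ht x =>
        (hcont (by fun_prop) _).mul (hcomp (h.continuousAt_space_space _ ht _))
      hasDerivAt_time := fun t ht x =>
        (h.hasDerivAt_comp hI ((hasDerivAt_id t).const_sub τ) (((he t).mul_const x).add (hd t))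
          ht).congr_deriv (by simp only [id, Pi.add_apply]; ring)
      hasDerivAt_space := fun t ht x =>
        ((h.hasDerivAt_space _ ht _).comp x (haffine t x)).congr_deriv (mul_comm _ _)
      hasDerivAt_space_space := fun t ht x =>
        (((h.hasDerivAt_space_space _ ht _).comp x (haffine t x)).const_mul (e t)).congr_deriv
          (by ring) }

lemma of_exp_mul (hp : ∀ t, HasDerivAt p (p' t) t) (hp' : Continuous p') :
    ParabolicJetOn (fun t x => exp (p t * x)) (fun t x => p' t * x * exp (p t * x))
      (fun t x => p t * exp (p t * x)) (fun t x => p t ^ 2 * exp (p t * x)) univ := by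
  have hpc : Continuous p := continuous_iff_continuousAt.mpr fun t => (hp t).continuousAt
  have hspace (t x : ℝ) : HasDerivAt (fun x => exp (p t * x)) (p t * exp (p t * x)) x := by
    simpa [mul_comm] using ((hasDerivAt_id x).const_mul (p t)).exp
  exact
    { continuousAt := fun t _ x => Continuous.continuousAt (by fun_prop)
      continuousAt_time := fun t _ x => Continuous.continuousAt (by fun_prop)
      continuousAt_space := fun t _ x => Continuous.continuousAt (by fun_prop)
      continuousAt_space_space := fun t _ x => Continuous.continuousAt (by fun_prop)
      hasDerivAt_time := fun t _ x => ((hp t).mul_const x).exp.congr_deriv (mul_comm _ _)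
      hasDerivAt_space := fun t _ x => hspace t x
      hasDerivAt_space_space := fun t _ x =>
        ((hspace t x).const_mul (p t)).congr_deriv (by ring) }

end ParabolicJetOn

/-- The calendar time at which the time to maturity is `r`, clamped to `[τ₀, τ]`. -/
noncomputable def calendarTime {τ₀ τ : ℝ} (hτ : τ₀ ≤ τ) (r : ℝ) : ℝ := projIcc τ₀ τ hτ (τ - r)

section calendarTime
variable {τ₀ τ : ℝ} (hτ : τ₀ ≤ τ)

lemma continuous_calendarTime : Continuous (calendarTime hτ) :=
  continuous_subtype_val.comp (continuous_projIcc.comp (continuous_const.sub continuous_id))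

lemma calendarTime_mem_Icc (r : ℝ) : calendarTime hτ r ∈ Icc τ₀ τ :=
  (projIcc τ₀ τ hτ (τ - r)).2

lemma calendarTime_sub {t : ℝ} (ht : t ∈ Icc τ₀ τ) : calendarTime hτ (τ - t) = t := by
  rw [calendarTime, sub_sub_cancel, projIcc_of_mem hτ ht]

lemma BoundedLipschitz.comp_calendarTime {g : ℝ → ℝ} (hg : Continuous g) :
    BoundedLipschitz fun r _ => g (calendarTime hτ r) :=
  let ⟨_, hM⟩ := isCompact_Icc.exists_bound_of_continuousOn (s := Icc τ₀ τ) hg.continuousOn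
  .of_time (hg.comp (continuous_calendarTime hτ)) fun r => hM _ (calendarTime_mem_Icc hτ r)

end calendarTime

/-- The coefficients of the substitution `f t x = exp (p t * x) * u (τ - t) (e t * x + d t)`, which
removes the drift `A t + B t * x` and the potential `x` from the pricing equation. -/
structure IntegratingFactors (A B : ℝ → ℝ) (τ : ℝ) (e d p : ℝ → ℝ) : Prop where
  continuous_drift : Continuous A
  continuous_slope : Continuous B
  scale_terminal : e τ = 1
  shift_terminal : d τ = 0
  tilt_terminal : p τ = 0
  scale_pos : ∀ t, 0 < e t
  hasDerivAt_scale : ∀ t, HasDerivAt e (-(B t * e t)) t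
  hasDerivAt_shift : ∀ t, HasDerivAt d (-(A t * e t)) t
  hasDerivAt_tilt : ∀ t, HasDerivAt p (1 - B t * p t) t

lemma exists_integratingFactors {A B : ℝ → ℝ} (hA : Continuous A) (hB : Continuous B) (τ : ℝ) :
    ∃ e d p, IntegratingFactors A B τ e d p := by
  have hprim {g : ℝ → ℝ} (hg : Continuous g) (t : ℝ) :
      HasDerivAt (fun t => ∫ s in τ..t, g s) (g t) t :=
    (hg.integral_hasStrictDerivAt τ t).hasDerivAt
  let e : ℝ → ℝ := fun t => exp (-∫ s in τ..t, B s)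
  have hpos (t : ℝ) : 0 < e t := Real.exp_pos _
  have he (t : ℝ) : HasDerivAt e (-(B t * e t)) t :=
    (hprim hB t).fun_neg.exp.congr_deriv (by ring)
  have hec : Continuous e := continuous_iff_continuousAt.mpr fun t => (he t).continuousAt
  exact ⟨e, fun t => -∫ s in τ..t, A s * e s, fun t => e t * ∫ s in τ..t, (e s)⁻¹,
    { continuous_drift := hA
      continuous_slope := hB
      scale_terminal := by simp [e]
      shift_terminal := by simp
      tilt_terminal := by simp
      scale_pos := hpos
      hasDerivAt_scale := he
      hasDerivAt_shift := fun t => (hprim (hA.mul hec) t).neg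
      hasDerivAt_tilt := fun t => by
        have hinv : Continuous fun t => (e t)⁻¹ := hec.inv₀ fun t => (hpos t).ne'
        refine ((he t).mul (hprim hinv t)).congr_deriv ?_
        rw [mul_inv_cancel₀ (hpos t).ne']
        ring }⟩

lemma cosh_le_exp_abs (x : ℝ) : cosh x ≤ exp |x| := by
  rw [← Real.cosh_abs, Real.cosh_eq]
  linarith [Real.exp_le_exp.mpr (neg_le_self (abs_nonneg x))]

lemma exp_abs_le_two_mul_cosh (x : ℝ) : exp |x| ≤ 2 * cosh x := by
  rw [Real.cosh_eq]
  linarith [Real.exp_abs_le x]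

/-- The coefficients of `S` are those of the equation that `u` satisfies when
`f t x = exp (p t * x) * u (τ - t) (e t * x + d t)` satisfies the pricing equation with squared
volatility `v` and `e`, `d`, `p` are integrating factors. -/
structure IsTransformedOperator (A : ℝ → ℝ) (v : ℝ → ℝ → ℝ) (τ₀ τ : ℝ) (e d p : ℝ → ℝ)
    (S : ParabolicOperator) : Prop where
  a_eq : ∀ t ∈ Icc τ₀ τ, ∀ x, S.a (τ - t) (e t * x + d t) = v t x * e t ^ 2
  b_eq : ∀ t ∈ Icc τ₀ τ, ∀ x, S.b (τ - t) (e t * x + d t) = v t x * (p t * e t)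
  c_eq : ∀ t ∈ Icc τ₀ τ, ∀ x,
    S.c (τ - t) (e t * x + d t) = A t * p t + v t x * (1 / 2 * p t ^ 2)

namespace IntegratingFactors
variable {A B e d p : ℝ → ℝ} {τ₀ τ T lam k M : ℝ} {v u uₜ uₓ uₓₓ : ℝ → ℝ → ℝ} {φ : ℝ → ℝ}
  {S : ParabolicOperator}

lemma continuous_scale (h : IntegratingFactors A B τ e d p) : Continuous e :=
  continuous_iff_continuousAt.mpr fun t => (h.hasDerivAt_scale t).continuousAt

lemma continuous_shift (h : IntegratingFactors A B τ e d p) : Continuous d :=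
  continuous_iff_continuousAt.mpr fun t => (h.hasDerivAt_shift t).continuousAt

lemma continuous_tilt (h : IntegratingFactors A B τ e d p) : Continuous p :=
  continuous_iff_continuousAt.mpr fun t => (h.hasDerivAt_tilt t).continuousAt

lemma exists_isTransformedOperator (h : IntegratingFactors A B τ e d p) (hτ : τ₀ ≤ τ)
    (hv : BoundedLipschitz v) (hlam : 0 < lam) (hle : ∀ t x, lam ≤ v t x) :
    ∃ S, IsTransformedOperator A v τ₀ τ e d p S := by
  have hA := h.continuous_drift
  have he := h.continuous_scale
  have hp := h.continuous_tilt
  have hinv : Continuous fun t => (e t)⁻¹ := he.inv₀ fun t => (h.scale_pos t).ne'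
  have hθ := continuous_calendarTime hτ
  let θ := calendarTime hτ
  obtain ⟨ε, hε, hεe⟩ := isCompact_Icc.exists_forall_le' (s := Icc τ₀ τ) he.continuousOn
    fun t _ => h.scale_pos t
  obtain ⟨E, hE⟩ := (BoundedLipschitz.comp_calendarTime hτ hinv).bounded
  have hw : BoundedLipschitz fun r y => v (θ r) ((e (θ r))⁻¹ * y + -d (θ r) * (e (θ r))⁻¹) :=
    hv.comp_affine hθ (hinv.comp hθ) ((h.continuous_shift.comp hθ).neg.mul (hinv.comp hθ))
      fun r => hE r 0
  have htime {g : ℝ → ℝ} (hg : Continuous g) : BoundedLipschitz fun r _ => g (θ r) :=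
    .comp_calendarTime hτ hg
  obtain ⟨S, ha, hb, hc⟩ := BoundedLipschitz.exists_parabolicOperator (lam := lam * ε ^ 2)
    (hw.mul (htime (g := fun t => e t ^ 2) (by fun_prop)))
    (hw.mul (htime (g := fun t => p t * e t) (by fun_prop)))
    ((htime (g := fun t => A t * p t) (by fun_prop)).add
      (hw.mul (htime (g := fun t => 1 / 2 * p t ^ 2) (by fun_prop)))) (by positivity)
    fun r y => mul_le_mul (hle _ _) (pow_le_pow_left₀ hε.le (hεe _ (calendarTime_mem_Icc hτ r)) 2)
      (by positivity) (hlam.le.trans (hle _ _))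
  have hx (t x : ℝ) : (e t)⁻¹ * (e t * x + d t) + -d t * (e t)⁻¹ = x := by
    have hne := (h.scale_pos t).ne'
    field_simp
    ring
  exact ⟨S,
    { a_eq := fun t ht x => by simp only [ha, θ, calendarTime_sub hτ ht, hx]
      b_eq := fun t ht x => by simp only [hb, θ, calendarTime_sub hτ ht, hx]
      c_eq := fun t ht x => by simp only [hc, θ, calendarTime_sub hτ ht, hx] }⟩

lemma exists_parabolicJetOn (h : IntegratingFactors A B τ e d p) (hT : τ - τ₀ < T)
    (hS : IsTransformedOperator A v τ₀ τ e d p S) (hu : S.IsClassicalSolution T φ u uₜ uₓ uₓₓ) :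
    ∃ fₜ fₓ fₓₓ, ParabolicJetOn (fun t x => exp (p t * x) * u (τ - t) (e t * x + d t)) fₜ fₓ fₓₓ
        (Ico τ₀ τ) ∧
      ∀ t ∈ Ico τ₀ τ, ∀ x, fₜ t x + (A t + B t * x) * fₓ t x + 1 / 2 * v t x * fₓₓ t x -
        x * (exp (p t * x) * u (τ - t) (e t * x + d t)) = 0 := by
  have hA := h.continuous_drift
  have hB := h.continuous_slope
  have he := h.continuous_scale
  have hp := h.continuous_tilt
  have hmem : ∀ t ∈ Ico τ₀ τ, τ - t ∈ Ioo 0 T := fun t ht =>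
    ⟨sub_pos.mpr ht.2, (sub_le_sub_left ht.1 τ).trans_lt hT⟩
  have hjet := ((ParabolicJetOn.of_exp_mul h.hasDerivAt_tilt (by fun_prop)).mono
    (subset_univ _)).mul (hu.comp_timeReversal_affine isOpen_Ioo τ h.hasDerivAt_scale
      (by fun_prop) h.hasDerivAt_shift (by fun_prop))
  refine ⟨_, _, _, hjet.mono hmem, fun t ht x => ?_⟩
  have ht' := Ico_subset_Icc_self ht
  rw [hu.time_eq _ (hmem t ht), hS.a_eq t ht', hS.b_eq t ht', hS.c_eq t ht']
  ring

lemma continuousOn_comp (h : IntegratingFactors A B τ e d p) (hT : τ - τ₀ < T)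
    (hu : ContinuousOn (fun q : ℝ × ℝ => u q.1 q.2) (Ico 0 T ×ˢ univ)) :
    ContinuousOn (fun q : ℝ × ℝ => exp (p q.1 * q.2) * u (τ - q.1) (e q.1 * q.2 + d q.1))
      (Icc τ₀ τ ×ˢ univ) := by
  have he := h.continuous_scale
  have hd := h.continuous_shift
  have hp := h.continuous_tilt
  have hexp : Continuous fun q : ℝ × ℝ => exp (p q.1 * q.2) := by fun_prop
  have hmap : Continuous fun q : ℝ × ℝ => (τ - q.1, e q.1 * q.2 + d q.1) := by fun_prop
  exact hexp.continuousOn.mul (hu.comp hmap.continuousOn fun q hq =>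
    ⟨⟨sub_nonneg.mpr hq.1.2, (sub_le_sub_left hq.1.1 τ).trans_lt hT⟩, mem_univ _⟩)

lemma exists_abs_le_exp (h : IntegratingFactors A B τ e d p)
    (hM : ∀ t ∈ Icc τ₀ τ, ∀ x, |u (τ - t) x| ≤ M * cosh (k * x)) :
    ∃ K k', 0 < K ∧ 0 < k' ∧ ∀ t ∈ Icc τ₀ τ, ∀ x,
      |exp (p t * x) * u (τ - t) (e t * x + d t)| ≤ K * exp (k' * |x|) := by
  have hbound {g : ℝ → ℝ} (hg : Continuous g) : ∃ N, ∀ t ∈ Icc τ₀ τ, |g t| ≤ N :=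
    isCompact_Icc.exists_bound_of_continuousOn hg.continuousOn
  obtain ⟨E, hE⟩ := hbound h.continuous_scale
  obtain ⟨D, hD⟩ := hbound h.continuous_shift
  obtain ⟨P, hP⟩ := hbound h.continuous_tilt
  refine ⟨(|M| + 1) * exp (|k| * D), |P + |k| * E| + 1, by positivity, by positivity,
    fun t ht x => ?_⟩
  have htilt : p t * x ≤ P * |x| := by
    refine (le_abs_self _).trans ?_
    rw [abs_mul]
    gcongr
    exact hP t ht
  have haffine : |k * (e t * x + d t)| ≤ |k| * (E * |x| + D) := by
    rw [abs_mul]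
    gcongr
    refine (abs_add_le _ _).trans ?_
    rw [abs_mul]
    gcongr
    exacts [hE t ht, hD t ht]
  calc |exp (p t * x) * u (τ - t) (e t * x + d t)|
      ≤ exp (p t * x) * (M * cosh (k * (e t * x + d t))) := by
        rw [abs_mul, Real.abs_exp]
        gcongr
        exact hM t ht _
    _ ≤ exp (p t * x) * ((|M| + 1) * exp |k * (e t * x + d t)|) := by
        gcongr
        · exact (le_abs_self M).trans (lt_add_one _).le
        · exact cosh_le_exp_abs _
    _ ≤ exp (P * |x|) * ((|M| + 1) * exp (|k| * (E * |x| + D))) := by gcongr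
    _ = (|M| + 1) * exp (|k| * D) * exp ((P + |k| * E) * |x|) := by
        rw [mul_left_comm, ← Real.exp_add, mul_assoc, ← Real.exp_add]
        ring_nf
    _ ≤ (|M| + 1) * exp (|k| * D) * exp ((|P + |k| * E| + 1) * |x|) := by
        gcongr _ * exp (?_ * _)
        exact (le_abs_self _).trans (lt_add_one _).le

end IntegratingFactors

lemma abs_le_mul_cosh_of_abs_le_mul_exp {r x C c : ℝ} (h : |r| ≤ C * exp (c * |x|)) :
    |r| ≤ 2 * |C| * cosh (c * x) :=
  calc |r| ≤ C * exp (c * |x|) := h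
    _ ≤ |C| * exp |c * x| := by
      rw [abs_mul]
      gcongr
      exacts [le_abs_self C, le_abs_self c]
    _ ≤ |C| * (2 * cosh (c * x)) := by
      gcongr
      exact exp_abs_le_two_mul_cosh _
    _ = 2 * |C| * cosh (c * x) := by ring

theorem exists_parabolicJetOn_pricing {τ₀ τ lam C k : ℝ} (hτ : τ₀ ≤ τ) {A B φ : ℝ → ℝ}
    {v : ℝ → ℝ → ℝ} (hA : Continuous A) (hB : Continuous B) (hv : BoundedLipschitz v)
    (hlam : 0 < lam) (hle : ∀ t x, lam ≤ v t x) (hφ : Continuous φ)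
    (hC : ∀ x, |φ x| ≤ C * cosh (k * x)) :
    ∃ f fₜ fₓ fₓₓ, ContinuousOn (fun q : ℝ × ℝ => f q.1 q.2) (Icc τ₀ τ ×ˢ univ) ∧
      ParabolicJetOn f fₜ fₓ fₓₓ (Ico τ₀ τ) ∧
      (∀ t ∈ Ico τ₀ τ, ∀ x,
        fₜ t x + (A t + B t * x) * fₓ t x + 1 / 2 * v t x * fₓₓ t x - x * f t x = 0) ∧
      (∀ x, f τ x = φ x) ∧
      ∃ K k', 0 < K ∧ 0 < k' ∧ ∀ t ∈ Icc τ₀ τ, ∀ x, |f t x| ≤ K * exp (k' * |x|) := by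
  have hT : τ - τ₀ < τ - τ₀ + 1 := lt_add_one _
  obtain ⟨e, d, p, h⟩ := exists_integratingFactors hA hB τ
  obtain ⟨S, hS⟩ := h.exists_isTransformedOperator hτ hv hlam hle
  obtain ⟨u, uₜ, uₓ, uₓₓ, M, hu, hM⟩ :=
    S.exists_isClassicalSolution_of_abs_le_cosh (τ - τ₀ + 1) hφ hC
  obtain ⟨fₜ, fₓ, fₓₓ, hjet, heq⟩ := h.exists_parabolicJetOn hT hS hu
  refine ⟨_, fₜ, fₓ, fₓₓ, h.continuousOn_comp hT hu.continuousOn, hjet, heq, fun x => ?_,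
    h.exists_abs_le_exp fun t ht x =>
      hM _ ⟨sub_nonneg.mpr ht.2, (sub_le_sub_left ht.1 τ).trans_lt hT⟩ x⟩
  simp [h.scale_terminal, h.shift_terminal, h.tilt_terminal, hu.initial]

lemma BoundedLipschitz.comp_projIcc {τ₀ τ : ℝ} (hτ : τ₀ ≤ τ) {σ : ℝ → ℝ → ℝ}
    (hσ : ContinuousOn (fun q : ℝ × ℝ => σ q.1 q.2) (Icc τ₀ τ ×ˢ univ))
    (hbdd : ∃ M, ∀ t ∈ Icc τ₀ τ, ∀ x, |σ t x| ≤ M)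
    (hlip : ∃ K : ℝ≥0, ∀ t ∈ Icc τ₀ τ, LipschitzWith K (σ t)) :
    BoundedLipschitz fun t => σ (projIcc τ₀ τ hτ t) where
  continuous := hσ.comp_continuous (f := fun q : ℝ × ℝ => ((projIcc τ₀ τ hτ q.1 : ℝ), q.2))
    (by fun_prop) fun q => ⟨(projIcc τ₀ τ hτ q.1).2, mem_univ _⟩
  bounded := hbdd.imp fun _ hM t => hM _ (projIcc τ₀ τ hτ t).2
  lipschitz := hlip.imp fun _ hK t => hK _ (projIcc τ₀ τ hτ t).2

theorem existence_pricing_pde_exponential_growth_general {τ₀ τ : ℝ} (hτ : τ₀ ≤ τ) {α β : ℝ → ℝ}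
    (hα : ContinuousOn α (Icc τ₀ τ)) (hβ : ContinuousOn β (Icc τ₀ τ)) {σ : ℝ → ℝ → ℝ}
    (hσ : ContinuousOn (fun q : ℝ × ℝ => σ q.1 q.2) (Icc τ₀ τ ×ˢ univ))
    (hσbdd : ∃ M, ∀ t ∈ Icc τ₀ τ, ∀ x, |σ t x| ≤ M)
    (hσlip : ∃ K : ℝ≥0, ∀ t ∈ Icc τ₀ τ, LipschitzWith K (σ t))
    {lam₀ : ℝ} (hlam₀ : 0 < lam₀) (hσlb : ∀ t ∈ Icc τ₀ τ, ∀ x, lam₀ ≤ σ t x ^ 2)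
    {φ : ℝ → ℝ} (hφ : Continuous φ) {C c : ℝ} (hφg : ∀ x, |φ x| ≤ C * exp (c * |x|)) :
    ∃ f : ℝ → ℝ → ℝ,
      ContinuousOn (fun q : ℝ × ℝ => f q.1 q.2) (Icc τ₀ τ ×ˢ univ) ∧
      C12On f (Ico τ₀ τ) ∧
      (∀ t ∈ Ico τ₀ τ, ∀ x,
        deriv (fun s => f s x) t + (α t + β t * x) * deriv (fun y => f t y) x
          + 1 / 2 * σ t x ^ 2 * deriv (deriv fun y => f t y) x - x * f t x = 0) ∧
      (∀ x, f τ x = φ x) ∧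
      ∃ K k, 0 < K ∧ 0 < k ∧ ∀ t ∈ Icc τ₀ τ, ∀ x, |f t x| ≤ K * exp (k * |x|) := by
  have hσ' := BoundedLipschitz.comp_projIcc hτ hσ hσbdd hσlip
  obtain ⟨f, fₜ, fₓ, fₓₓ, hf, hjet, heq, hterminal, hgrowth⟩ := exists_parabolicJetOn_pricing hτ
    hα.domRestrict.Icc_extend' hβ.domRestrict.Icc_extend' (hσ'.mul hσ') hlam₀
    (fun t x => (hσlb _ (projIcc τ₀ τ hτ t).2 x).trans_eq (sq _)) hφ
    fun x => abs_le_mul_cosh_of_abs_le_mul_exp (hφg x)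
  refine ⟨f, hf, hjet.c12On, fun t ht x => ?_, hterminal, hgrowth⟩
  have ht' := Ico_subset_Icc_self ht
  have hpde := heq t ht x
  rw [IccExtend_of_mem hτ _ ht', IccExtend_of_mem hτ _ ht', projIcc_of_mem hτ ht', ← sq] at hpde
  rw [hjet.deriv_time ht, hjet.deriv_space_space ht, hjet.deriv_space ht]
  exact hpde

lemma lipschitzWith_right_of_lipschitzOnWith {σ : ℝ → ℝ → ℝ} {K : ℝ≥0} {I : Set ℝ}
    (hσ : LipschitzOnWith K (fun q : ℝ × ℝ => σ q.1 q.2) (I ×ˢ univ)) {t : ℝ} (ht : t ∈ I) :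
    LipschitzWith K (σ t) := .of_dist_le_mul fun x y => by
  simpa [Prod.dist_eq] using hσ.dist_le_mul (t, x) ⟨ht, mem_univ _⟩ (t, y) ⟨ht, mem_univ _⟩

end

/-- Existence of a solution, with exponential growth, to the backward pricing PDE
`∂ₜf + (α(t)+β(t)x)∂ₓf + ½σ(t,x)²∂²ₓₓf − x·f = 0` with terminal datum `φ` of
exponential growth. -/
theorem existence_pricing_pde_exponential_growth
    (τ₀ τ : ℝ) (hττ : τ₀ < τ)
    (α β : ℝ → ℝ)
    (hα : ∃ K : NNReal, LipschitzOnWith K α (Set.Icc τ₀ τ))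
    (hβ : ∃ K : NNReal, LipschitzOnWith K β (Set.Icc τ₀ τ))
    (σ : ℝ → ℝ → ℝ)
    (hσbdd : ∃ Cσ : ℝ, ∀ t ∈ Set.Icc τ₀ τ, ∀ x : ℝ, |σ t x| ≤ Cσ)
    (hσlip : ∃ K : NNReal,
      LipschitzOnWith K (fun p : ℝ × ℝ => σ p.1 p.2) (Set.Icc τ₀ τ ×ˢ (Set.univ : Set ℝ)))
    (lam₀ : ℝ) (hlam₀ : 0 < lam₀)
    (hσlb : ∀ t ∈ Set.Icc τ₀ τ, ∀ x : ℝ, lam₀ ≤ (σ t x) ^ 2)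
    (φ : ℝ → ℝ) (hφ : Continuous φ)
    (Cbar cbar : ℝ) (hCbar : 0 < Cbar) (hcbar : 0 < cbar)
    (hφg : ∀ x : ℝ, |φ x| ≤ Cbar * Real.exp (cbar * |x|)) :
    ∃ f : ℝ → ℝ → ℝ,
      ContinuousOn (fun p : ℝ × ℝ => f p.1 p.2) (Set.Icc τ₀ τ ×ˢ (Set.univ : Set ℝ)) ∧
      C12On f (Set.Ico τ₀ τ) ∧
      (∀ t ∈ Set.Ico τ₀ τ, ∀ x : ℝ,
        deriv (fun s => f s x) t + (α t + β t * x) * deriv (fun y => f t y) x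
          + (1 / 2) * (σ t x) ^ 2 * deriv (deriv (fun y => f t y)) x - x * f t x = 0) ∧
      (∀ x : ℝ, f τ x = φ x) ∧
      ∃ Kbar k : ℝ, 0 < Kbar ∧ 0 < k ∧
        ∀ t ∈ Set.Icc τ₀ τ, ∀ x : ℝ, |f t x| ≤ Kbar * Real.exp (k * |x|) := by
  obtain ⟨_, hα⟩ := hα
  obtain ⟨_, hβ⟩ := hβ
  obtain ⟨K, hσ⟩ := hσlip
  exact existence_pricing_pde_exponential_growth_general hττ.le hα.continuousOn hβ.continuousOn
    hσ.continuousOn hσbdd ⟨K, fun _ ht => lipschitzWith_right_of_lipschitzOnWith hσ ht⟩ hlam₀ hσlb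
    hφ hφg
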